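/- arXiv:1112.4346 — 2 statements merged into one kernel-verified Lean document; each statement's English description precedes it below -/
import Mathlib

section
/- Let p ∈ (1, ∞) and let ψ : ℝ → ℂ be a Schwartz function with ψ̂(0) = 0, where ψ̂(ξ) := ∫_ℝ ψ(t) e^{−itξ} dt. For k ∈ ℕ (k ≥ 1) set ψ_k := 2^k ψ(2^k ·). Then there exists a constant C = C(p, ψ) > 0 such that for every measurable function f : ℝ → ℂ with ‖f‖_{S^p} < ∞, ‖(Σ_{k=1}^∞ |f ∗ ψ_k|²)^{1/2}‖_{S^p} ≤ C ‖f‖_{S^p}, where (f ∗ ψ_k)(x) := ∫_ℝ f(x − y) ψ_k(y) dy. -/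
open MeasureTheory

/-- The Stepanov `S^p` "norm" of `f : ℝ → ℂ`, valued in `ℝ≥0∞`:
`‖f‖_{S^p} = (sup_{x ∈ ℝ} ∫_x^{x+1} |f(s)|^p ds)^{1/p}`. -/
noncomputable def stepanov (p : ℝ) (f : ℝ → ℂ) : ENNReal :=
  (⨆ x : ℝ, ∫⁻ s in Set.Ioc x (x + 1), (‖f s‖₊ : ENNReal) ^ p) ^ (1 / p)

/-!
The square function is first bounded on `Lᵖ(ℝ)`. Any signed sum `∑ ± ψ_k` has a multiplier bounded
by `∑ min (2⁻ᵏ|ξ|, 2ᵏ/|ξ|)`, up to constants depending on `ψ`, where `ψ̂(0) = 0` enters only through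
the first term; the same geometric series, now with `|y|` in place of `1/|ξ|`, bounds its Hörmander
integrals. The signed sums are therefore bounded on `L²` uniformly in the signs, of weak type
`(1, 1)` by the Calderón–Zygmund decomposition, on `Lᵖ` for `1 < p < 2` by interpolation, and on
`Lᵖ` for `p > 2` by duality. Averaging over the signs, Khintchine's inequality turns these bounds
into the bound for the square function.

To pass to Stepanov norms, fix a unit interval `I` and split `f` at its neighbourhood `J` of length
`3`. The `Lᵖ` bound applies to `f 1_J`, while on `I` the rapid decay of `ψ` gives
`|(f 1_{Jᶜ}) ∗ ψ_k| ≤ C 2⁻ᵏ ‖f‖_{S¹}`, which is square summable in `k`.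
-/

open Set Filter
open scoped ENNReal NNReal Topology FourierTransform SchwartzMap

section Dyadic

variable {L : ℝ}

/-- The `j`-th interval of generation `n` in the dyadic grid obtained by repeatedly halving the
intervals `[jL, (j + 1)L)`. -/
def dyadicIco (L : ℝ) (n : ℕ) (j : ℤ) : Set ℝ :=
  Ico (j * (L / 2 ^ n)) (j * (L / 2 ^ n) + L / 2 ^ n)

lemma mem_dyadicIco_iff_floor_eq (hL : 0 < L) {n : ℕ} {j : ℤ} {x : ℝ} :
    x ∈ dyadicIco L n j ↔ ⌊x / (L / 2 ^ n)⌋ = j := by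
  have hn : 0 < L / 2 ^ n := by positivity
  rw [Int.floor_eq_iff, le_div_iff₀ hn, div_lt_iff₀ hn, dyadicIco, mem_Ico, add_one_mul]

lemma floor_div_dyadic_ancestor (x : ℝ) {m n : ℕ} (hmn : m ≤ n) :
    ⌊x / (L / 2 ^ m)⌋ = ⌊x / (L / 2 ^ n)⌋ / 2 ^ (n - m) := by
  obtain ⟨k, rfl⟩ := Nat.exists_eq_add_of_le hmn
  have hdiv : x / (L / 2 ^ m) = x / (L / 2 ^ (m + k)) / ((2 ^ k : ℕ) : ℝ) := by
    push_cast
    rw [pow_add]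
    field_simp
  rw [hdiv, Int.floor_div_natCast, Nat.add_sub_cancel_left]
  push_cast
  rfl

lemma dyadicIco_subset_ancestor (hL : 0 < L) {m n : ℕ} (hmn : m ≤ n) (j : ℤ) :
    dyadicIco L n j ⊆ dyadicIco L m (j / 2 ^ (n - m)) := by
  intro x hx
  rw [mem_dyadicIco_iff_floor_eq hL] at hx ⊢
  rw [floor_div_dyadic_ancestor x hmn, hx]

/-- The indices of the largest dyadic intervals satisfying `P`: those none of whose proper dyadic
ancestors satisfies `P`. -/
def maximalDyadic (P : ℕ → ℤ → Prop) : Set (ℕ × ℤ) :=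
  {q | P q.1 q.2 ∧ ∀ m < q.1, ¬P m (q.2 / 2 ^ (q.1 - m))}

lemma pairwiseDisjoint_dyadicIco_maximalDyadic (hL : 0 < L) (P : ℕ → ℤ → Prop) :
    (maximalDyadic P).PairwiseDisjoint fun q ↦ dyadicIco L q.1 q.2 := by
  have not_lt_of_mem : ∀ {q r : ℕ × ℤ}, q ∈ maximalDyadic P → r ∈ maximalDyadic P → ∀ {x},
      x ∈ dyadicIco L q.1 q.2 → x ∈ dyadicIco L r.1 r.2 → ¬q.1 < r.1 := by
    intro q r hq hr x hxq hxr hlt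
    rw [mem_dyadicIco_iff_floor_eq hL] at hxq hxr
    apply hr.2 q.1 hlt
    rw [← hxr, ← floor_div_dyadic_ancestor x hlt.le, hxq]
    exact hq.1
  rintro ⟨m, i⟩ hq ⟨n, j⟩ hr hne
  refine disjoint_left.2 fun x hxq hxr ↦ hne ?_
  obtain rfl : m = n :=
    le_antisymm (not_lt.1 (not_lt_of_mem hr hq hxr hxq)) (not_lt.1 (not_lt_of_mem hq hr hxq hxr))
  simp only [mem_dyadicIco_iff_floor_eq hL] at hxq hxr
  rw [← hxq, ← hxr]

lemma exists_mem_maximalDyadic (hL : 0 < L) {P : ℕ → ℤ → Prop} {x : ℝ} {n : ℕ}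
    (hn : P n ⌊x / (L / 2 ^ n)⌋) : ∃ q ∈ maximalDyadic P, x ∈ dyadicIco L q.1 q.2 := by
  classical
  have hex : ∃ m, P m ⌊x / (L / 2 ^ m)⌋ := ⟨n, hn⟩
  refine ⟨(Nat.find hex, ⌊x / (L / 2 ^ Nat.find hex)⌋), ⟨Nat.find_spec hex, fun m hm ↦ ?_⟩,
    (mem_dyadicIco_iff_floor_eq hL).2 rfl⟩
  rw [← floor_div_dyadic_ancestor x hm.le]
  exact Nat.find_min hex hm

lemma ae_le_of_lintegral_dyadicIco_le (hL : 0 < L) {g : ℝ → ℝ≥0∞} (hg : AEMeasurable g)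
    (hfin : ∫⁻ x, g x ≠ ∞) (lam : ℝ≥0∞) :
    ∀ᵐ x, (∀ n, ∫⁻ y in dyadicIco L n ⌊x / (L / 2 ^ n)⌋, g y ≤
      lam * ENNReal.ofReal (L / 2 ^ n)) → g x ≤ lam := by
  have hdiff := VitaliFamily.ae_tendsto_lintegral_div
    (IsUnifLocDoublingMeasure.vitaliFamily (volume : Measure ℝ) 1) hg hfin
  filter_upwards [hdiff] with x hx havg
  have hpos : ∀ n : ℕ, 0 < L / 2 ^ n := fun n ↦ by positivity
  have hradius : Tendsto (fun n : ℕ ↦ L / 2 ^ n / 2) atTop (𝓝[>] 0) := by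
    refine tendsto_nhdsWithin_iff.2 ⟨?_, Eventually.of_forall fun n ↦ half_pos (hpos n)⟩
    have hgeom := tendsto_pow_atTop_nhds_zero_of_lt_one (r := (1 / 2 : ℝ)) (by norm_num)
      (by norm_num)
    refine (mul_zero (L / 2) ▸ hgeom.const_mul (L / 2)).congr fun n ↦ ?_
    rw [one_div, inv_pow]
    ring
  have hmem : ∀ n : ℕ, x ∈ dyadicIco L n ⌊x / (L / 2 ^ n)⌋ := fun n ↦
    (mem_dyadicIco_iff_floor_eq hL).2 rfl
  have hballs := IsUnifLocDoublingMeasure.tendsto_closedBall_filterAt volume (K := 1)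
    (fun n : ℕ ↦ ⌊x / (L / 2 ^ n)⌋ * (L / 2 ^ n) + L / 2 ^ n / 2) _ hradius
    (Eventually.of_forall fun n ↦ by
      rw [one_mul, Real.closedBall_eq_Icc, add_sub_cancel_right, add_assoc, add_halves]
      exact Ico_subset_Icc_self (hmem n))
  refine le_of_tendsto (hx.comp hballs) (Eventually.of_forall fun n ↦ ?_)
  rw [Function.comp_apply, Real.closedBall_eq_Icc, add_sub_cancel_right, add_assoc, add_halves,
    Real.volume_Icc, add_sub_cancel_left, setLIntegral_congr Ico_ae_eq_Icc.symm]
  exact ENNReal.div_le_of_le_mul (havg n)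

end Dyadic

section CalderonZygmundCover

/-- A Calderón–Zygmund stopping family for `g` at height `lam`: pairwise disjoint intervals
`[left i, left i + length i)` on which the average of `g` lies in `(lam, 2 * lam]`, and outside of
which `g ≤ lam` almost everywhere. -/
structure CalderonZygmundCover (g : ℝ → ℝ≥0∞) (lam : ℝ≥0∞) (ι : Type*) where
  /-- The left end points of the intervals. -/
  left : ι → ℝ
  /-- The lengths of the intervals. -/
  length : ι → ℝ
  length_pos : ∀ i, 0 < length i
  pairwise_disjoint :
    Pairwise (Function.onFun Disjoint fun i ↦ Ico (left i) (left i + length i))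
  lt_lintegral : ∀ i,
    lam * ENNReal.ofReal (length i) < ∫⁻ x in Ico (left i) (left i + length i), g x
  lintegral_le : ∀ i,
    ∫⁻ x in Ico (left i) (left i + length i), g x ≤ 2 * lam * ENNReal.ofReal (length i)
  ae_le : ∀ᵐ x, x ∉ ⋃ i, Ico (left i) (left i + length i) → g x ≤ lam

lemma CalderonZygmundCover.exists {g : ℝ → ℝ≥0∞} (hg : AEMeasurable g) (hfin : ∫⁻ x, g x ≠ ∞)
    {lam : ℝ≥0∞} (hlam : lam ≠ 0) (hlam' : lam ≠ ∞) :
    ∃ (ι : Type) (_ : Countable ι), Nonempty (CalderonZygmundCover g lam ι) := by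
  obtain ⟨L, hL, hsmall⟩ : ∃ L : ℝ, 0 < L ∧ ∫⁻ x, g x ≤ lam * ENNReal.ofReal L := by
    refine ⟨((∫⁻ x, g x) / lam).toReal + 1, by positivity, ?_⟩
    rw [← ENNReal.div_le_iff' hlam hlam']
    exact (ENNReal.le_ofReal_iff_toReal_le (ENNReal.div_ne_top hfin hlam) (by positivity)).2
      (le_add_of_nonneg_right zero_le_one)
  let heavy (n : ℕ) (j : ℤ) : Prop :=
    lam * ENNReal.ofReal (L / 2 ^ n) < ∫⁻ x in dyadicIco L n j, g x
  refine ⟨maximalDyadic heavy, inferInstance, ⟨{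
    left := fun q ↦ q.1.2 * (L / 2 ^ q.1.1)
    length := fun q ↦ L / 2 ^ q.1.1
    length_pos := fun q ↦ by positivity
    pairwise_disjoint := (pairwiseDisjoint_dyadicIco_maximalDyadic hL heavy).subtype _ _
    lt_lintegral := fun q ↦ q.2.1
    lintegral_le := ?_
    ae_le := ?_ }⟩⟩
  · rintro ⟨⟨n, j⟩, hheavy, hmax⟩
    rcases n with _ | n
    · refine absurd hheavy (not_lt.2 ?_)
      simpa only [pow_zero, div_one] using (setLIntegral_le_lintegral _ _).trans hsmall
    have hparent := not_lt.1 (hmax n n.lt_succ_self)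
    calc ∫⁻ x in dyadicIco L (n + 1) j, g x
        ≤ ∫⁻ x in dyadicIco L n (j / 2 ^ (n + 1 - n)), g x :=
          lintegral_mono_set (dyadicIco_subset_ancestor hL n.le_succ j)
      _ ≤ lam * ENNReal.ofReal (2 * (L / 2 ^ (n + 1))) := by
          rwa [show 2 * (L / 2 ^ (n + 1)) = L / 2 ^ n by rw [pow_succ]; field_simp]
      _ = 2 * lam * ENNReal.ofReal (L / 2 ^ (n + 1)) := by
          rw [ENNReal.ofReal_mul zero_le_two, ENNReal.ofReal_ofNat, mul_left_comm, mul_assoc]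
  · filter_upwards [ae_le_of_lintegral_dyadicIco_le hL hg hfin lam] with x hx hxnot
    refine hx fun n ↦ not_lt.1 fun hheavy ↦ hxnot ?_
    obtain ⟨q, hq, hxq⟩ := exists_mem_maximalDyadic (P := heavy) hL hheavy
    exact mem_iUnion_of_mem ⟨q, hq⟩ hxq

end CalderonZygmundCover

namespace CalderonZygmundCover

variable {ι : Type*} {lam : ℝ≥0∞}

section Union

variable {g : ℝ → ℝ≥0∞} (Q : CalderonZygmundCover g lam ι)

/-- The `i`-th interval of the family. -/
def interval (i : ι) : Set ℝ := Ico (Q.left i) (Q.left i + Q.length i)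

/-- The set on which `g` is large, covered by the intervals of the family. -/
def union : Set ℝ := ⋃ i, Q.interval i

/-- The union of the intervals enlarged about their left end points, outside of which the
Hörmander condition controls the bad part. -/
def dilatedUnion : Set ℝ := ⋃ i, Metric.closedBall (Q.left i) (2 * Q.length i)

lemma measurableSet_interval (i : ι) : MeasurableSet (Q.interval i) := measurableSet_Ico

lemma volume_interval (i : ι) : volume (Q.interval i) = ENNReal.ofReal (Q.length i) := by
  rw [interval, Real.volume_Ico, add_sub_cancel_left]

lemma interval_subset_union (i : ι) : Q.interval i ⊆ Q.union := subset_iUnion _ i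

lemma interval_subset_closedBall (i : ι) :
    Q.interval i ⊆ Metric.closedBall (Q.left i) (Q.length i) := by
  intro x hx
  rw [Real.closedBall_eq_Icc]
  exact ⟨(sub_le_self _ (Q.length_pos i).le).trans hx.1, hx.2.le⟩

variable [Countable ι]

lemma measurableSet_union : MeasurableSet Q.union := .iUnion Q.measurableSet_interval

lemma tsum_lintegral_interval (u : ℝ → ℝ≥0∞) :
    ∑' i, ∫⁻ x in Q.interval i, u x = ∫⁻ x in Q.union, u x :=
  (lintegral_iUnion Q.measurableSet_interval Q.pairwise_disjoint u).symm

lemma volume_union : volume Q.union = ∑' i, ENNReal.ofReal (Q.length i) := by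
  simp only [← volume_interval]
  exact measure_iUnion Q.pairwise_disjoint Q.measurableSet_interval

lemma volume_dilatedUnion_le : volume Q.dilatedUnion ≤ 4 * volume Q.union := by
  refine (measure_iUnion_le _).trans ?_
  rw [volume_union, ← ENNReal.tsum_mul_left]
  refine ENNReal.tsum_le_tsum fun i ↦ ?_
  rw [Real.volume_closedBall, ← mul_assoc, ENNReal.ofReal_mul (by norm_num)]
  norm_num

lemma lintegral_union_le : ∫⁻ x in Q.union, g x ≤ 2 * lam * volume Q.union := by
  rw [← tsum_lintegral_interval, volume_union, ← ENNReal.tsum_mul_left]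
  exact ENNReal.tsum_le_tsum Q.lintegral_le

lemma mul_volume_union_le : lam * volume Q.union ≤ ∫⁻ x in Q.union, g x := by
  rw [← tsum_lintegral_interval, volume_union, ← ENNReal.tsum_mul_left]
  exact ENNReal.tsum_le_tsum fun i ↦ (Q.lt_lintegral i).le

lemma volume_union_ne_top (hlam : lam ≠ 0) (hfin : ∫⁻ x, g x ≠ ∞) : volume Q.union ≠ ∞ :=
  fun htop ↦ hfin <| top_unique <| calc
    ∞ = lam * volume Q.union := by rw [htop, ENNReal.mul_top hlam]
    _ ≤ ∫⁻ x, g x := Q.mul_volume_union_le.trans (setLIntegral_le_lintegral _ _)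

-- Where `2 * g ≤ lam`, the integral of `g` makes up at most half of the lower bound `lam * |Q|`.
lemma volume_union_le (hg : Measurable g) (hfin : ∫⁻ x, g x ≠ ∞) (hlam : lam ≠ 0)
    (hlam' : lam ≠ ∞) :
    volume Q.union ≤ 2 * (lam⁻¹ * ∫⁻ x in {x | lam < 2 * g x}, g x) := by
  set E : Set ℝ := {x | lam < 2 * g x}
  have hE : MeasurableSet E := measurableSet_lt measurable_const (hg.const_mul 2)
  have hhalf : lam / 2 * volume Q.union ≠ ∞ :=
    ENNReal.mul_ne_top (ENNReal.div_ne_top hlam' two_ne_zero) (Q.volume_union_ne_top hlam hfin)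
  have hsplit : ∀ x, g x ≤ E.indicator g x + lam / 2 := fun x ↦ by
    by_cases hx : x ∈ E
    · rw [indicator_of_mem hx]
      exact le_self_add
    · refine le_add_left ?_
      rw [ENNReal.le_div_iff_mul_le (Or.inl two_ne_zero) (Or.inl ENNReal.ofNat_ne_top), mul_comm]
      exact not_lt.1 hx
  have hle : lam / 2 * volume Q.union ≤ ∫⁻ x in E, g x := by
    refine (ENNReal.add_le_add_iff_right hhalf).1 ?_
    calc lam / 2 * volume Q.union + lam / 2 * volume Q.union = lam * volume Q.union := by
          rw [← add_mul, ENNReal.add_halves]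
      _ ≤ ∫⁻ x in Q.union, (E.indicator g x + lam / 2) :=
          Q.mul_volume_union_le.trans (lintegral_mono hsplit)
      _ ≤ (∫⁻ x in E, g x) + lam / 2 * volume Q.union := by
          rw [lintegral_add_right _ measurable_const, setLIntegral_const, ← lintegral_indicator hE]
          exact add_le_add_left (setLIntegral_le_lintegral _ _) _
  calc volume Q.union ≤ (∫⁻ x in E, g x) / (lam / 2) :=
        (ENNReal.le_div_iff_mul_le (by simp [hlam]) (by simp [ENNReal.div_eq_top, hlam'])).2
          ((mul_comm _ _).trans_le hle)
    _ = 2 * (lam⁻¹ * ∫⁻ x in E, g x) := by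
        rw [div_eq_mul_inv, ENNReal.inv_div (by simp) (by simp), div_eq_mul_inv]
        ring

end Union

section GoodPart

variable {f h : ℝ → ℂ} (Q : CalderonZygmundCover (fun x ↦ ‖f x‖ₑ) lam ι)

/-- `h` is the good part of `f`: its average on each interval of the family, and `f` elsewhere. -/
structure IsGoodPart (h : ℝ → ℂ) : Prop where
  measurable : Measurable h
  eq_average : ∀ i, ∀ x ∈ Q.interval i, h x = ⨍ y in Q.interval i, f y
  eq_of_notMem : ∀ x ∉ Q.union, h x = f x

variable {Q}

lemma enorm_average_interval_le (i : ι) : ‖⨍ y in Q.interval i, f y‖ₑ ≤ 2 * lam := by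
  have hlen := Q.length_pos i
  rw [setAverage_eq, enorm_smul, measureReal_def, volume_interval, ENNReal.toReal_ofReal hlen.le,
    Real.enorm_of_nonneg (inv_nonneg.2 hlen.le), ENNReal.ofReal_inv_of_pos hlen, mul_comm,
    ← div_eq_mul_inv]
  refine ENNReal.div_le_of_le_mul ((enorm_integral_le_lintegral_enorm _).trans ?_)
  exact Q.lintegral_le i

namespace IsGoodPart

lemma enorm_le (hh : Q.IsGoodPart h) {x : ℝ} (hx : x ∈ Q.union) : ‖h x‖ₑ ≤ 2 * lam := by
  obtain ⟨i, hi⟩ := mem_iUnion.1 hx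
  rw [hh.eq_average i x hi]
  exact enorm_average_interval_le i

lemma ae_enorm_le (hh : Q.IsGoodPart h) : ∀ᵐ x, ‖h x‖ₑ ≤ 2 * lam := by
  filter_upwards [Q.ae_le] with x hx
  by_cases hmem : x ∈ Q.union
  · exact hh.enorm_le hmem
  · rw [hh.eq_of_notMem x hmem, two_mul]
    exact le_add_right (hx hmem)

lemma lintegral_enorm_sq_ne_top (hh : Q.IsGoodPart h) (hint : Integrable h) (hlam' : lam ≠ ∞) :
    ∫⁻ x, ‖h x‖ₑ ^ 2 ≠ ∞ := by
  refine ne_top_of_le_ne_top (b := 2 * lam * ∫⁻ x, ‖h x‖ₑ) ?_ ?_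
  · exact ENNReal.mul_ne_top (by finiteness) hint.2.ne
  · rw [← lintegral_const_mul' _ _ (by finiteness)]
    refine lintegral_mono_ae (hh.ae_enorm_le.mono fun x hx ↦ ?_)
    rw [sq]
    exact mul_le_mul_left hx _

lemma setIntegral_sub_eq_zero (hh : Q.IsGoodPart h) (hf : Integrable f) (i : ι) :
    ∫ x in Q.interval i, (f x - h x) = 0 := by
  rw [setIntegral_congr_fun (Q.measurableSet_interval i) fun x hx ↦ by
    rw [hh.eq_average i x hx], ← neg_eq_zero, ← integral_neg]
  simp only [neg_sub]
  exact setIntegral_setAverage_sub (Q.volume_interval i ▸ ENNReal.ofReal_ne_top) hf.integrableOn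

variable [Countable ι]

lemma setLIntegral_compl_union (hh : Q.IsGoodPart h) (F : ℂ → ℝ≥0∞) :
    ∫⁻ x in Q.unionᶜ, F (h x) = ∫⁻ x in Q.unionᶜ, F (f x) :=
  setLIntegral_congr_fun Q.measurableSet_union.compl fun x hx ↦ by rw [hh.eq_of_notMem x hx]

lemma integrable (hh : Q.IsGoodPart h) (hf : Integrable f) (hlam : lam ≠ 0) (hlam' : lam ≠ ∞) :
    Integrable h := by
  have hvol := Q.volume_union_ne_top hlam hf.2.ne
  refine ⟨hh.measurable.aestronglyMeasurable, ?_⟩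
  rw [HasFiniteIntegral, ← lintegral_add_compl _ Q.measurableSet_union,
    hh.setLIntegral_compl_union]
  refine ENNReal.add_lt_top.2 ⟨?_, (setLIntegral_le_lintegral _ _).trans_lt hf.2⟩
  calc ∫⁻ x in Q.union, ‖h x‖ₑ ≤ ∫⁻ _ in Q.union, 2 * lam :=
        setLIntegral_mono measurable_const fun x ↦ hh.enorm_le
    _ = 2 * lam * volume Q.union := setLIntegral_const _ _
    _ < ∞ := by finiteness

lemma lintegral_enorm_sq_le (hh : Q.IsGoodPart h) :
    ∫⁻ x, ‖h x‖ₑ ^ 2 ≤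
      (∫⁻ x in {x | ‖f x‖ₑ ≤ lam}, ‖f x‖ₑ ^ 2) + 4 * lam ^ 2 * volume Q.union := by
  rw [← lintegral_add_compl _ Q.measurableSet_union, add_comm,
    hh.setLIntegral_compl_union (‖·‖ₑ ^ 2)]
  gcongr ?_ + ?_
  · refine lintegral_mono_set' ?_
    filter_upwards [Q.ae_le] with x hx hxnot using hx hxnot
  · calc ∫⁻ x in Q.union, ‖h x‖ₑ ^ 2 ≤ ∫⁻ _ in Q.union, (2 * lam) ^ 2 :=
          setLIntegral_mono measurable_const fun x hx ↦ pow_le_pow_left' (hh.enorm_le hx) 2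
      _ = 4 * lam ^ 2 * volume Q.union := by rw [setLIntegral_const]; ring

lemma lintegral_union_enorm_sub_le (hh : Q.IsGoodPart h) :
    ∫⁻ x in Q.union, ‖f x - h x‖ₑ ≤ 4 * lam * volume Q.union :=
  calc ∫⁻ x in Q.union, ‖f x - h x‖ₑ ≤ ∫⁻ x in Q.union, (‖f x‖ₑ + 2 * lam) :=
        setLIntegral_mono' Q.measurableSet_union fun x hx ↦
          enorm_sub_le.trans (add_le_add_right (hh.enorm_le hx) _)
    _ = (∫⁻ x in Q.union, ‖f x‖ₑ) + 2 * lam * volume Q.union := by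
        rw [lintegral_add_right _ measurable_const, setLIntegral_const]
    _ ≤ 2 * lam * volume Q.union + 2 * lam * volume Q.union :=
        add_le_add_left Q.lintegral_union_le _
    _ = 4 * lam * volume Q.union := by ring

end IsGoodPart

lemma exists_isGoodPart [Countable ι] (Q : CalderonZygmundCover (fun x ↦ ‖f x‖ₑ) lam ι)
    (hf : Measurable f) : ∃ h, Q.IsGoodPart h := by
  obtain ⟨h, hmeas, hh⟩ := exists_measurable_piecewise (ι := Option ι)
    (fun o ↦ o.elim Q.unionᶜ Q.interval)
    (by rintro (_ | i); exacts [Q.measurableSet_union.compl, Q.measurableSet_interval i])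
    (fun o ↦ o.elim f fun i _ ↦ ⨍ y in Q.interval i, f y)
    (by rintro (_ | i); exacts [hf, measurable_const])
    (by
      rintro (_ | i) (_ | j) hij x hx
      · rfl
      · exact absurd (Q.interval_subset_union j hx.2) hx.1
      · exact absurd (Q.interval_subset_union i hx.1) hx.2
      · have hdisj := Q.pairwise_disjoint fun h ↦ hij (congrArg some h)
        exact absurd hx.2 (disjoint_left.1 hdisj hx.1))
  exact ⟨h, hmeas, fun i ↦ hh (some i), hh none⟩

end GoodPart

end CalderonZygmundCover

local notation:67 f:67 "⋆ₘ" g:68 => convolution f g (ContinuousLinearMap.mul ℂ ℂ) volume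

section WeakType

variable {K : ℝ → ℂ} {M : ℝ}

lemma integrable_mul_translate_kernel (hK : Measurable K) (hbdd : ∀ x, ‖K x‖ ≤ M) {f : ℝ → ℂ}
    (hf : Integrable f) (x : ℝ) : Integrable fun y ↦ f y * K (x - y) :=
  hf.mul_bdd (hK.comp (measurable_const.sub measurable_id)).aestronglyMeasurable
    (Eventually.of_forall fun y ↦ hbdd (x - y))

lemma measurable_convolution_mul (hK : Measurable K) {f : ℝ → ℂ} (hf : Measurable f) :
    Measurable (f ⋆ₘ K) :=
  StronglyMeasurable.measurable <| StronglyMeasurable.integral_prod_right' (f :=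
    fun z : ℝ × ℝ ↦ f z.2 * K (z.1 - z.2)) <| Measurable.stronglyMeasurable <| by fun_prop

lemma convolution_mul_add (hK : Measurable K) (hbdd : ∀ x, ‖K x‖ ≤ M) {f g : ℝ → ℂ}
    (hf : Integrable f) (hg : Integrable g) (x : ℝ) :
    ((f + g) ⋆ₘ K) x = (f ⋆ₘ K) x + (g ⋆ₘ K) x := by
  simp only [convolution_mul, Pi.add_apply, add_mul]
  exact integral_add (integrable_mul_translate_kernel hK hbdd hf x)
    (integrable_mul_translate_kernel hK hbdd hg x)

/-- Convolution with `K` is of strong type `(p, p)`, with constant `C` for the `p`-th powers of the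
norms. It is enough to test on integrable functions, on which the convolution with a bounded kernel
is given by a convergent integral. -/
def HasConvStrongType (K : ℝ → ℂ) (p : ℝ) (C : ℝ≥0∞) : Prop :=
  ∀ f : ℝ → ℂ, Measurable f → Integrable f → ∫⁻ x, ‖f x‖ₑ ^ p ≠ ∞ →
    ∫⁻ x, ‖(f ⋆ₘ K) x‖ₑ ^ p ≤ C * ∫⁻ x, ‖f x‖ₑ ^ p

/-- Hörmander's integral smoothness condition on the kernel of a singular integral, with
constant `B`. -/
def HormanderCondition (K : ℝ → ℂ) (B : ℝ≥0∞) : Prop :=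
  ∀ y : ℝ, ∫⁻ x in {x | 2 * |y| < |x|}, ‖K (x - y) - K x‖ₑ ≤ B

namespace HormanderCondition

variable {B : ℝ≥0∞}

lemma lintegral_compl_closedBall_le (hH : HormanderCondition K B) {a y r : ℝ} (hr : |y - a| ≤ r) :
    ∫⁻ x in (Metric.closedBall a (2 * r))ᶜ, ‖K (x - y) - K (x - a)‖ₑ ≤ B := by
  have hshift := (measurePreserving_sub_right volume a).setLIntegral_comp_preimage_emb
    (MeasurableEquiv.subRight a).measurableEmbedding (fun x ↦ ‖K (x - (y - a)) - K x‖ₑ)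
    {x | 2 * |y - a| < |x|}
  simp only [sub_sub_sub_cancel_right] at hshift
  refine le_trans (lintegral_mono_set fun x hx ↦ ?_) (hshift.trans_le (hH (y - a)))
  rw [mem_compl_iff, Metric.mem_closedBall, not_le, Real.dist_eq] at hx
  exact lt_of_le_of_lt (by gcongr) hx

lemma lintegral_lintegral_compl_closedBall_le (hH : HormanderCondition K B) (hK : Measurable K)
    {b : ℝ → ℂ} (hb : Measurable b) {I : Set ℝ} {a r : ℝ} (hI : I ⊆ Metric.closedBall a r) :
    ∫⁻ x in (Metric.closedBall a (2 * r))ᶜ, ∫⁻ y in I, ‖K (x - y) - K (x - a)‖ₑ * ‖b y‖ₑ ≤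
      B * ∫⁻ y in I, ‖b y‖ₑ := by
  rw [lintegral_lintegral_swap (by fun_prop), ← lintegral_const_mul _ hb.enorm]
  refine setLIntegral_mono (by fun_prop) fun y hy ↦ ?_
  rw [lintegral_mul_const' _ _ enorm_ne_top]
  gcongr
  exact hH.lintegral_compl_closedBall_le (hI hy)

end HormanderCondition

-- Cancellation allows the constant `K (x - a)` to be subtracted from the kernel.
lemma enorm_setIntegral_mul_kernel_le (hK : Measurable K) (hbdd : ∀ x, ‖K x‖ ≤ M) {b : ℝ → ℂ}
    (hb : Integrable b) {I : Set ℝ} (hmean : ∫ y in I, b y = 0) (x a : ℝ) :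
    ‖∫ y in I, b y * K (x - y)‖ₑ ≤ ∫⁻ y in I, ‖K (x - y) - K (x - a)‖ₑ * ‖b y‖ₑ := by
  have hcancel : ∫ y in I, b y * K (x - y) = ∫ y in I, (K (x - y) - K (x - a)) * b y := by
    simp_rw [sub_mul, mul_comm (K _) (b _)]
    rw [integral_sub (integrable_mul_translate_kernel hK hbdd hb x).integrableOn
      (hb.mul_const _).integrableOn, integral_mul_const, hmean, zero_mul, sub_zero]
  rw [hcancel]
  simp_rw [← enorm_mul]
  exact enorm_integral_le_lintegral_enorm _

namespace CalderonZygmundCover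

variable {ι : Type*} [Countable ι] {lam A B : ℝ≥0∞}

lemma enorm_convolution_mul_le_tsum {g : ℝ → ℝ≥0∞} (Q : CalderonZygmundCover g lam ι)
    (hK : Measurable K) (hbdd : ∀ x, ‖K x‖ ≤ M) {b : ℝ → ℂ} (hb : Integrable b)
    (hsupp : ∀ x ∉ Q.union, b x = 0) (hmean : ∀ i, ∫ y in Q.interval i, b y = 0) (x : ℝ) :
    ‖(b ⋆ₘ K) x‖ₑ ≤
      ∑' i, ∫⁻ y in Q.interval i, ‖K (x - y) - K (x - Q.left i)‖ₑ * ‖b y‖ₑ := by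
  have hrestrict : ∫ y in ⋃ i, Q.interval i, b y * K (x - y) = ∫ y, b y * K (x - y) :=
    setIntegral_eq_integral_of_forall_compl_eq_zero fun y hy ↦ by rw [hsupp y hy, zero_mul]
  rw [convolution_mul, ← hrestrict, integral_iUnion Q.measurableSet_interval Q.pairwise_disjoint
    (integrable_mul_translate_kernel hK hbdd hb x).integrableOn]
  exact enorm_tsum_le_tsum_enorm.trans <| ENNReal.tsum_le_tsum fun i ↦
    enorm_setIntegral_mul_kernel_le hK hbdd hb (hmean i) x _

lemma lintegral_compl_dilatedUnion_convolution_le {g : ℝ → ℝ≥0∞}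
    (Q : CalderonZygmundCover g lam ι) (hK : Measurable K) (hbdd : ∀ x, ‖K x‖ ≤ M)
    (hH : HormanderCondition K B) {b : ℝ → ℂ} (hbm : Measurable b) (hb : Integrable b)
    (hsupp : ∀ x ∉ Q.union, b x = 0) (hmean : ∀ i, ∫ y in Q.interval i, b y = 0) :
    ∫⁻ x in Q.dilatedUnionᶜ, ‖(b ⋆ₘ K) x‖ₑ ≤ B * ∫⁻ y in Q.union, ‖b y‖ₑ :=
  calc ∫⁻ x in Q.dilatedUnionᶜ, ‖(b ⋆ₘ K) x‖ₑ
      ≤ ∫⁻ x in Q.dilatedUnionᶜ,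
          ∑' i, ∫⁻ y in Q.interval i, ‖K (x - y) - K (x - Q.left i)‖ₑ * ‖b y‖ₑ :=
        lintegral_mono (Q.enorm_convolution_mul_le_tsum hK hbdd hb hsupp hmean)
    _ = ∑' i, ∫⁻ x in Q.dilatedUnionᶜ,
          ∫⁻ y in Q.interval i, ‖K (x - y) - K (x - Q.left i)‖ₑ * ‖b y‖ₑ :=
        lintegral_tsum fun i ↦ (Measurable.lintegral_prod_right' (f := fun z : ℝ × ℝ ↦
          ‖K (z.1 - z.2) - K (z.1 - Q.left i)‖ₑ * ‖b z.2‖ₑ) (by fun_prop)).aemeasurable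
    _ ≤ ∑' i, B * ∫⁻ y in Q.interval i, ‖b y‖ₑ :=
        ENNReal.tsum_le_tsum fun i ↦
          (lintegral_mono_set (compl_subset_compl.2 (subset_iUnion _ i))).trans
            (hH.lintegral_lintegral_compl_closedBall_le hK hbm (Q.interval_subset_closedBall i))
    _ = B * ∫⁻ y in Q.union, ‖b y‖ₑ := by
        rw [ENNReal.tsum_mul_left, tsum_lintegral_interval]

variable {f h : ℝ → ℂ} {Q : CalderonZygmundCover (fun x ↦ ‖f x‖ₑ) lam ι}

lemma IsGoodPart.meas_le_convolution_le (hh : Q.IsGoodPart h) (hK : Measurable K)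
    (hA : HasConvStrongType K 2 A) (hf : Integrable f) (hlam : lam ≠ 0) (hlam' : lam ≠ ∞) :
    volume {x | lam ≤ ‖(h ⋆ₘ K) x‖ₑ} ≤
      A * ((lam ^ 2)⁻¹ * ∫⁻ x in {x | ‖f x‖ₑ ≤ lam}, ‖f x‖ₑ ^ 2) + 4 * A * volume Q.union := by
  have hint := hh.integrable hf hlam hlam'
  have hL2 := hA h hh.measurable hint
  simp only [ENNReal.rpow_two] at hL2
  have hlam2 : lam ^ 2 ≠ 0 := pow_ne_zero 2 hlam
  have hlam2' : lam ^ 2 ≠ ∞ := ENNReal.pow_ne_top hlam'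
  calc volume {x | lam ≤ ‖(h ⋆ₘ K) x‖ₑ}
      ≤ volume {x | lam ^ 2 ≤ ‖(h ⋆ₘ K) x‖ₑ ^ 2} :=
        measure_mono fun x hx ↦ mem_ofPred.2 (pow_le_pow_left' hx 2)
    _ ≤ (∫⁻ x, ‖(h ⋆ₘ K) x‖ₑ ^ 2) / lam ^ 2 := meas_ge_le_lintegral_div
        ((measurable_convolution_mul hK hh.measurable).enorm.pow_const 2).aemeasurable hlam2 hlam2'
    _ ≤ (A * ((∫⁻ x in {x | ‖f x‖ₑ ≤ lam}, ‖f x‖ₑ ^ 2) + 4 * lam ^ 2 * volume Q.union)) /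
          lam ^ 2 := by
        gcongr
        exact (hL2 (hh.lintegral_enorm_sq_ne_top hint hlam')).trans (by
          gcongr
          exact hh.lintegral_enorm_sq_le)
    _ = A * ((lam ^ 2)⁻¹ * ∫⁻ x in {x | ‖f x‖ₑ ≤ lam}, ‖f x‖ₑ ^ 2) +
          4 * A * ((lam ^ 2)⁻¹ * lam ^ 2) * volume Q.union := by rw [ENNReal.div_eq_inv_mul]; ring
    _ = _ := by rw [ENNReal.inv_mul_cancel hlam2 hlam2', mul_one]

lemma IsGoodPart.meas_inter_compl_dilatedUnion_le (hh : Q.IsGoodPart h) (hK : Measurable K)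
    (hbdd : ∀ x, ‖K x‖ ≤ M) (hH : HormanderCondition K B) (hfm : Measurable f)
    (hf : Integrable f) (hlam : lam ≠ 0) (hlam' : lam ≠ ∞) :
    volume ({x | lam ≤ ‖((f - h) ⋆ₘ K) x‖ₑ} ∩ Q.dilatedUnionᶜ) ≤ 4 * B * volume Q.union := by
  have hbm : Measurable (f - h) := hfm.sub hh.measurable
  have hbad := Q.lintegral_compl_dilatedUnion_convolution_le hK hbdd hH hbm
    (hf.sub (hh.integrable hf hlam hlam'))
    (fun x hx ↦ by rw [Pi.sub_apply, hh.eq_of_notMem x hx, sub_self])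
    (hh.setIntegral_sub_eq_zero hf)
  have hconv := measurable_convolution_mul hK hbm
  calc volume ({x | lam ≤ ‖((f - h) ⋆ₘ K) x‖ₑ} ∩ Q.dilatedUnionᶜ)
      = volume.restrict Q.dilatedUnionᶜ {x | lam ≤ ‖((f - h) ⋆ₘ K) x‖ₑ} :=
        (Measure.restrict_apply (measurableSet_le measurable_const hconv.enorm)).symm
    _ ≤ (∫⁻ x in Q.dilatedUnionᶜ, ‖((f - h) ⋆ₘ K) x‖ₑ) / lam :=
        meas_ge_le_lintegral_div hconv.enorm.aemeasurable hlam hlam'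
    _ ≤ (B * (4 * lam * volume Q.union)) / lam := by
        gcongr
        exact hbad.trans (by
          gcongr
          exact hh.lintegral_union_enorm_sub_le)
    _ = 4 * B * (lam⁻¹ * lam) * volume Q.union := by rw [ENNReal.div_eq_inv_mul]; ring
    _ = 4 * B * volume Q.union := by rw [ENNReal.inv_mul_cancel hlam hlam', mul_one]

end CalderonZygmundCover

lemma HasConvStrongType.meas_two_mul_lt_convolution_le {A B : ℝ≥0∞} (hA : HasConvStrongType K 2 A)
    (hK : Measurable K) (hbdd : ∀ x, ‖K x‖ ≤ M) (hH : HormanderCondition K B) {f : ℝ → ℂ}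
    (hfm : Measurable f) (hf : Integrable f) {lam : ℝ≥0∞} (hlam : lam ≠ 0) (hlam' : lam ≠ ∞) :
    volume {x | 2 * lam < ‖(f ⋆ₘ K) x‖ₑ} ≤
      A * ((lam ^ 2)⁻¹ * ∫⁻ x in {x | ‖f x‖ₑ ≤ lam}, ‖f x‖ₑ ^ 2) +
        8 * (A + 1 + B) * (lam⁻¹ * ∫⁻ x in {x | lam < 2 * ‖f x‖ₑ}, ‖f x‖ₑ) := by
  obtain ⟨ι, _, ⟨Q⟩⟩ := CalderonZygmundCover.exists hfm.enorm.aemeasurable hf.2.ne hlam hlam'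
  obtain ⟨h, hh⟩ := Q.exists_isGoodPart hfm
  have hint := hh.integrable hf hlam hlam'
  have hcover : {x | 2 * lam < ‖(f ⋆ₘ K) x‖ₑ} ⊆ {x | lam ≤ ‖(h ⋆ₘ K) x‖ₑ} ∪
      (Q.dilatedUnion ∪ {x | lam ≤ ‖((f - h) ⋆ₘ K) x‖ₑ} ∩ Q.dilatedUnionᶜ) := by
    intro x hx
    by_contra hnot
    simp only [mem_union, mem_inter_iff, mem_compl_iff, mem_ofPred_eq, not_or, not_and_or,
      not_not, not_le] at hnot
    obtain ⟨hgood, hfar, hbad⟩ := hnot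
    have hsplit := convolution_mul_add hK hbdd hint (hf.sub hint) x
    rw [add_sub_cancel] at hsplit
    refine lt_irrefl (2 * lam) (hx.trans_le ?_)
    rw [hsplit, two_mul]
    exact (enorm_add_le _ _).trans (add_le_add hgood.le (hbad.resolve_right hfar).le)
  calc volume {x | 2 * lam < ‖(f ⋆ₘ K) x‖ₑ}
      ≤ volume {x | lam ≤ ‖(h ⋆ₘ K) x‖ₑ} + (volume Q.dilatedUnion +
          volume ({x | lam ≤ ‖((f - h) ⋆ₘ K) x‖ₑ} ∩ Q.dilatedUnionᶜ)) :=
        (measure_mono hcover).trans <| (measure_union_le _ _).trans <| by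
          gcongr
          exact measure_union_le _ _
    _ ≤ (A * ((lam ^ 2)⁻¹ * ∫⁻ x in {x | ‖f x‖ₑ ≤ lam}, ‖f x‖ₑ ^ 2) + 4 * A * volume Q.union) +
          (4 * volume Q.union + 4 * B * volume Q.union) := by
        gcongr
        · exact hh.meas_le_convolution_le hK hA hf hlam hlam'
        · exact Q.volume_dilatedUnion_le
        · exact hh.meas_inter_compl_dilatedUnion_le hK hbdd hH hfm hf hlam hlam'
    _ = A * ((lam ^ 2)⁻¹ * ∫⁻ x in {x | ‖f x‖ₑ ≤ lam}, ‖f x‖ₑ ^ 2) +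
          4 * (A + 1 + B) * volume Q.union := by ring
    _ ≤ A * ((lam ^ 2)⁻¹ * ∫⁻ x in {x | ‖f x‖ₑ ≤ lam}, ‖f x‖ₑ ^ 2) + 4 * (A + 1 + B) *
          (2 * (lam⁻¹ * ∫⁻ x in {x | lam < 2 * ‖f x‖ₑ}, ‖f x‖ₑ)) := by
        gcongr
        exact Q.volume_union_le hfm.enorm hf.2.ne hlam hlam'
    _ = _ := by ring

end WeakType

section Marcinkiewicz

variable {p : ℝ}

lemma setLIntegral_Ici_rpow {a c : ℝ} (ha : a < -1) (hc : 0 < c) :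
    ∫⁻ t in Ici c, ENNReal.ofReal (t ^ a) = ENNReal.ofReal (-c ^ (a + 1) / (a + 1)) := by
  rw [← restrict_Ioi_eq_restrict_Ici, ← ofReal_integral_eq_lintegral_ofReal
    (integrableOn_Ioi_rpow_of_lt ha hc), integral_Ioi_rpow_of_lt ha hc]
  exact (ae_restrict_mem measurableSet_Ioi).mono fun t ht ↦ Real.rpow_nonneg (hc.trans ht).le _

lemma setLIntegral_Ioo_rpow {a c : ℝ} (ha : -1 < a) (hc : 0 ≤ c) :
    ∫⁻ t in Ioo 0 c, ENNReal.ofReal (t ^ a) = ENNReal.ofReal (c ^ (a + 1) / (a + 1)) := by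
  have hint : IntegrableOn (fun t : ℝ ↦ t ^ a) (Ioc 0 c) :=
    (intervalIntegrable_iff_integrableOn_Ioc_of_le hc).1
      (intervalIntegral.intervalIntegrable_rpow' ha)
  rw [restrict_Ioo_eq_restrict_Ioc, ← ofReal_integral_eq_lintegral_ofReal hint,
    ← intervalIntegral.integral_of_le hc, integral_rpow (Or.inl ha),
    Real.zero_rpow (by linarith), sub_zero]
  exact (ae_restrict_mem measurableSet_Ioc).mono fun t ht ↦ Real.rpow_nonneg ht.1.le _

lemma sq_mul_setLIntegral_rpow_le (hp : p < 2) (c : ℝ≥0) :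
    (c : ℝ≥0∞) ^ 2 * ∫⁻ t in {t | c ≤ t.toNNReal}, ENNReal.ofReal (t ^ (p - 3))
      ∂volume.restrict (Ioi 0) ≤ ENNReal.ofReal (1 / (2 - p)) * (c : ℝ≥0∞) ^ p := by
  rcases eq_or_ne c 0 with rfl | hc
  · simp
  have hc0 : 0 < (c : ℝ) := NNReal.coe_pos.2 (pos_iff_ne_zero.2 hc)
  have hset : {t : ℝ | c ≤ t.toNNReal} ∩ Ioi 0 = Ici (c : ℝ) := by
    ext t
    rw [mem_inter_iff, mem_ofPred, Real.le_toNNReal_iff_coe_le' (pos_iff_ne_zero.2 hc)]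
    exact ⟨fun ht ↦ ht.1, fun ht ↦ ⟨ht, hc0.trans_le ht⟩⟩
  rw [Measure.restrict_restrict (measurableSet_le measurable_const (by fun_prop)), hset,
    setLIntegral_Ici_rpow (by linarith) hc0, ← ENNReal.ofReal_coe_nnreal,
    ENNReal.ofReal_rpow_of_pos hc0, ← ENNReal.ofReal_pow hc0.le,
    ← ENNReal.ofReal_mul (by positivity), ← ENNReal.ofReal_mul (by simpa using hp.le)]
  refine ENNReal.ofReal_le_ofReal (le_of_eq ?_)
  have hpow : (c : ℝ) ^ p = c ^ 2 * (c : ℝ) ^ (p - 3 + 1) := by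
    rw [← Real.rpow_two, ← Real.rpow_add hc0]
    ring_nf
  have h2p : 2 - p ≠ 0 := by linarith
  rw [hpow, show p - 3 + 1 = -(2 - p) by ring]
  field_simp

lemma mul_setLIntegral_rpow_le (hp : 1 < p) (c : ℝ≥0) :
    (c : ℝ≥0∞) * ∫⁻ t in {t | t.toNNReal < 2 * c}, ENNReal.ofReal (t ^ (p - 2))
      ∂volume.restrict (Ioi 0) ≤ ENNReal.ofReal (2 ^ (p - 1) / (p - 1)) * (c : ℝ≥0∞) ^ p := by
  rcases eq_or_ne c 0 with rfl | hc
  · simp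
  have hc0 : 0 < (c : ℝ) := NNReal.coe_pos.2 (pos_iff_ne_zero.2 hc)
  have hset : {t : ℝ | t.toNNReal < 2 * c} ∩ Ioi 0 = Ioo 0 (2 * (c : ℝ)) := by
    ext t
    rw [mem_inter_iff, mem_ofPred, and_comm, mem_Ioo, mem_Ioi]
    refine and_congr_right fun ht ↦ ?_
    rw [Real.toNNReal_lt_iff_lt_coe ht.le]
    simp
  rw [Measure.restrict_restrict (measurableSet_lt (by fun_prop) measurable_const), hset,
    setLIntegral_Ioo_rpow (by linarith) (by positivity), ← ENNReal.ofReal_coe_nnreal,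
    ENNReal.ofReal_rpow_of_pos hc0, ← ENNReal.ofReal_mul (by positivity),
    ← ENNReal.ofReal_mul (div_nonneg (by positivity) (sub_nonneg.2 hp.le))]
  refine ENNReal.ofReal_le_ofReal (le_of_eq ?_)
  have hpow : (c : ℝ) ^ p = c * (c : ℝ) ^ (p - 1) := by
    rw [← Real.rpow_one_add' hc0.le (by linarith), add_sub_cancel]
  rw [hpow, show p - 2 + 1 = p - 1 by ring, Real.mul_rpow zero_le_two hc0.le]
  ring

variable {α β : Type*} [MeasurableSpace α] [MeasurableSpace β]

lemma setLIntegral_section_eq {ν : Measure β} {S : Set (α × β)} (hS : MeasurableSet S)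
    (F : β → ℝ≥0∞) (t : α) :
    ∫⁻ x in {x | (t, x) ∈ S}, F x ∂ν = ∫⁻ x, S.indicator (fun z ↦ F z.2) (t, x) ∂ν := by
  have hS_t : MeasurableSet {x | (t, x) ∈ S} := measurable_prodMk_left hS
  rw [← lintegral_indicator hS_t]
  rfl

lemma measurable_setLIntegral_section {ν : Measure β} [SFinite ν] {S : Set (α × β)}
    (hS : MeasurableSet S) {F : β → ℝ≥0∞} (hF : Measurable F) :
    Measurable fun t ↦ ∫⁻ x in {x | (t, x) ∈ S}, F x ∂ν := by
  simp_rw [setLIntegral_section_eq hS F]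
  exact ((hF.comp measurable_snd).indicator hS).lintegral_prod_right'

lemma lintegral_mul_setLIntegral_swap {μ : Measure α} {ν : Measure β} [SFinite μ] [SFinite ν]
    {S : Set (α × β)} (hS : MeasurableSet S) {w : α → ℝ≥0∞} (hw : Measurable w) {F : β → ℝ≥0∞}
    (hF : Measurable F) :
    ∫⁻ t, w t * ∫⁻ x in {x | (t, x) ∈ S}, F x ∂ν ∂μ =
      ∫⁻ x, F x * ∫⁻ t in {t | (t, x) ∈ S}, w t ∂μ ∂ν := by
  have hG : Measurable (S.indicator fun z : α × β ↦ w z.1 * F z.2) :=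
    Measurable.indicator (by fun_prop) hS
  have hleft (t : α) : w t * ∫⁻ x in {x | (t, x) ∈ S}, F x ∂ν =
      ∫⁻ x, S.indicator (fun z ↦ w z.1 * F z.2) (t, x) ∂ν := by
    have hS_t : MeasurableSet {x | (t, x) ∈ S} := measurable_prodMk_left hS
    rw [← lintegral_const_mul _ hF, ← lintegral_indicator hS_t]
    rfl
  have hright (x : β) : F x * ∫⁻ t in {t | (t, x) ∈ S}, w t ∂μ =
      ∫⁻ t, S.indicator (fun z ↦ w z.1 * F z.2) (t, x) ∂μ := by
    have hS_x : MeasurableSet {t | (t, x) ∈ S} := measurable_prodMk_right hS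
    simp_rw [mul_comm (w _)]
    rw [← lintegral_const_mul _ hw, ← lintegral_indicator hS_x]
    rfl
  simp_rw [hleft, hright]
  exact lintegral_lintegral_swap hG.aemeasurable

lemma lintegral_rpow_mul_setLIntegral_le_sq_le {μ : Measure α} [SFinite μ] (hp : p < 2)
    {f : α → ℝ≥0} (hf : Measurable f) :
    ∫⁻ t in Ioi 0, ENNReal.ofReal (t ^ (p - 3)) *
        ∫⁻ x in {x | f x ≤ t.toNNReal}, (f x : ℝ≥0∞) ^ 2 ∂μ ≤
      ENNReal.ofReal (1 / (2 - p)) * ∫⁻ x, (f x : ℝ≥0∞) ^ p ∂μ := by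
  have hS : MeasurableSet {z : ℝ × α | f z.2 ≤ z.1.toNNReal} :=
    measurableSet_le (by fun_prop) (by fun_prop)
  refine (lintegral_mul_setLIntegral_swap hS (w := fun t ↦ ENNReal.ofReal (t ^ (p - 3)))
    (by fun_prop) (by fun_prop)).trans_le ?_
  rw [← lintegral_const_mul _ (by fun_prop)]
  exact lintegral_mono fun x ↦ sq_mul_setLIntegral_rpow_le hp (f x)

lemma lintegral_rpow_mul_setLIntegral_lt_two_mul_le {μ : Measure α} [SFinite μ] (hp : 1 < p)
    {f : α → ℝ≥0} (hf : Measurable f) :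
    ∫⁻ t in Ioi 0, ENNReal.ofReal (t ^ (p - 2)) *
        ∫⁻ x in {x | t.toNNReal < 2 * f x}, f x ∂μ ≤
      ENNReal.ofReal (2 ^ (p - 1) / (p - 1)) * ∫⁻ x, (f x : ℝ≥0∞) ^ p ∂μ := by
  have hS : MeasurableSet {z : ℝ × α | z.1.toNNReal < 2 * f z.2} :=
    measurableSet_lt (by fun_prop) (by fun_prop)
  refine (lintegral_mul_setLIntegral_swap hS (w := fun t ↦ ENNReal.ofReal (t ^ (p - 2)))
    (by fun_prop) (by fun_prop)).trans_le ?_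
  rw [← lintegral_const_mul _ (by fun_prop)]
  exact lintegral_mono fun x ↦ mul_setLIntegral_rpow_le hp (f x)

/-- The constant obtained by integrating a truncated weak-type estimate with constants `A` (for
the small values) and `D` (for the large values) against `p * t ^ (p - 1)`. -/
noncomputable def marcinkiewiczConst (p : ℝ) (A D : ℝ≥0∞) : ℝ≥0∞ :=
  ENNReal.ofReal (2 ^ p * p) *
    (A * ENNReal.ofReal (1 / (2 - p)) + D * ENNReal.ofReal (2 ^ (p - 1) / (p - 1)))

lemma lintegral_rpow_eq_lintegral_meas_two_mul_lt {ν : Measure β} {u : β → ℝ≥0}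
    (hu : Measurable u) (hp : 0 < p) :
    ∫⁻ y, (u y : ℝ≥0∞) ^ p ∂ν = ENNReal.ofReal (2 ^ p * p) *
      ∫⁻ t in Ioi 0, ENNReal.ofReal (t ^ (p - 1)) * ν {y | 2 * t.toNNReal < u y} := by
  have hhalf : ∀ y, (u y : ℝ≥0∞) ^ p =
      ENNReal.ofReal (2 ^ p) * ENNReal.ofReal (((u y : ℝ) / 2) ^ p) := fun y ↦ by
    rw [← ENNReal.ofReal_mul (by positivity), ← Real.mul_rpow zero_le_two (by positivity),
      mul_div_cancel₀ _ two_ne_zero, ← ENNReal.ofReal_coe_nnreal,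
      ENNReal.ofReal_rpow_of_nonneg (u y).coe_nonneg hp.le]
  simp_rw [hhalf]
  rw [lintegral_const_mul _ (by fun_prop), lintegral_rpow_eq_lintegral_meas_lt_mul _
    (Eventually.of_forall fun y ↦ by positivity) (by fun_prop) hp, ← mul_assoc,
    ← ENNReal.ofReal_mul (by positivity)]
  congr 1
  refine setLIntegral_congr_fun measurableSet_Ioi fun t ht ↦ ?_
  simp only [mul_comm (ν _)]
  congr 3
  ext y
  rw [lt_div_iff₀' two_pos, ← NNReal.coe_lt_coe, NNReal.coe_mul,
    Real.coe_toNNReal _ (le_of_lt ht), NNReal.coe_ofNat]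

lemma ofReal_rpow_mul_inv_pow {t a : ℝ} (ht : 0 < t) (n : ℕ) :
    ENNReal.ofReal (t ^ a) * (ENNReal.ofReal t ^ n)⁻¹ = ENNReal.ofReal (t ^ (a - n)) := by
  rw [← ENNReal.ofReal_pow ht.le, ← ENNReal.ofReal_inv_of_pos (by positivity),
    ← ENNReal.ofReal_mul (by positivity), Real.rpow_sub ht, Real.rpow_natCast, div_eq_mul_inv]

theorem lintegral_rpow_le_of_weakType_truncated {μ : Measure α} {ν : Measure β} [SFinite μ]
    (hp : 1 < p) (hp2 : p < 2) {f : α → ℝ≥0} (hf : Measurable f) {u : β → ℝ≥0}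
    (hu : Measurable u) {A D : ℝ≥0∞}
    (hweak : ∀ t : ℝ≥0, t ≠ 0 → ν {y | 2 * t < u y} ≤
      A * (((t : ℝ≥0∞) ^ 2)⁻¹ * ∫⁻ x in {x | f x ≤ t}, (f x : ℝ≥0∞) ^ 2 ∂μ) +
        D * ((t : ℝ≥0∞)⁻¹ * ∫⁻ x in {x | t < 2 * f x}, f x ∂μ)) :
    ∫⁻ y, (u y : ℝ≥0∞) ^ p ∂ν ≤ marcinkiewiczConst p A D * ∫⁻ x, (f x : ℝ≥0∞) ^ p ∂μ := by
  rw [lintegral_rpow_eq_lintegral_meas_two_mul_lt hu (by linarith), marcinkiewiczConst, mul_assoc]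
  gcongr
  have hsmall : MeasurableSet {z : ℝ × α | f z.2 ≤ z.1.toNNReal} :=
    measurableSet_le (by fun_prop) (by fun_prop)
  have hsmall_meas : Measurable fun t : ℝ ↦ ENNReal.ofReal (t ^ (p - 3)) *
      ∫⁻ x in {x | f x ≤ t.toNNReal}, (f x : ℝ≥0∞) ^ 2 ∂μ :=
    Measurable.mul (by fun_prop) (measurable_setLIntegral_section hsmall (by fun_prop))
  have hlarge : MeasurableSet {z : ℝ × α | z.1.toNNReal < 2 * f z.2} :=
    measurableSet_lt (by fun_prop) (by fun_prop)
  have hlarge_meas : Measurable fun t : ℝ ↦ ENNReal.ofReal (t ^ (p - 2)) *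
      ∫⁻ x in {x | t.toNNReal < 2 * f x}, (f x : ℝ≥0∞) ∂μ :=
    Measurable.mul (by fun_prop) (measurable_setLIntegral_section hlarge (by fun_prop))
  have hlevel (t : ℝ) (ht : 0 < t) : ENNReal.ofReal (t ^ (p - 1)) * ν {y | 2 * t.toNNReal < u y} ≤
      A * (ENNReal.ofReal (t ^ (p - 3)) *
          ∫⁻ x in {x | f x ≤ t.toNNReal}, (f x : ℝ≥0∞) ^ 2 ∂μ) +
        D * (ENNReal.ofReal (t ^ (p - 2)) * ∫⁻ x in {x | t.toNNReal < 2 * f x}, f x ∂μ) := by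
    have hsq := ofReal_rpow_mul_inv_pow (a := p - 1) ht 2
    have hone := ofReal_rpow_mul_inv_pow (a := p - 1) ht 1
    rw [pow_one] at hone
    rw [show p - 3 = p - 1 - (2 : ℕ) by push_cast; ring, ← hsq,
      show p - 2 = p - 1 - (1 : ℕ) by push_cast; ring, ← hone]
    refine (mul_le_mul_right (hweak t.toNNReal (Real.toNNReal_pos.2 ht).ne') _).trans_eq ?_
    simp only [ENNReal.ofNNReal_toNNReal]
    ring
  refine (setLIntegral_mono' measurableSet_Ioi hlevel).trans ?_
  rw [lintegral_add_left (hsmall_meas.const_mul A), lintegral_const_mul _ hsmall_meas,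
    lintegral_const_mul _ hlarge_meas, add_mul, mul_assoc, mul_assoc]
  gcongr
  exacts [lintegral_rpow_mul_setLIntegral_le_sq_le hp2 hf,
    lintegral_rpow_mul_setLIntegral_lt_two_mul_le hp hf]

lemma marcinkiewiczConst_ne_top {A D : ℝ≥0∞} (hA : A ≠ ∞) (hD : D ≠ ∞) :
    marcinkiewiczConst p A D ≠ ∞ := by
  unfold marcinkiewiczConst
  finiteness

end Marcinkiewicz

section StrongType

theorem HasConvStrongType.of_hormanderCondition {K : ℝ → ℂ} {M : ℝ} {A B : ℝ≥0∞}
    (hA : HasConvStrongType K 2 A) (hK : Measurable K) (hbdd : ∀ x, ‖K x‖ ≤ M)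
    (hH : HormanderCondition K B) {p : ℝ} (hp : 1 < p) (hp2 : p < 2) :
    HasConvStrongType K p (marcinkiewiczConst p A (8 * (A + 1 + B))) := by
  intro f hfm hf _
  refine lintegral_rpow_le_of_weakType_truncated hp hp2 hfm.nnnorm
    (measurable_convolution_mul hK hfm).nnnorm fun t ht ↦ ?_
  have hweak := hA.meas_two_mul_lt_convolution_le hK hbdd hH hfm hf
    (ENNReal.coe_ne_zero.2 ht) ENNReal.coe_ne_top
  simp only [enorm_eq_nnnorm] at hweak
  exact_mod_cast hweak

end StrongType

section Plancherel

variable (K : 𝓢(ℝ, ℂ)) {A : ℝ≥0}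

lemma eLpNorm_two_fourier_schwartz (φ : 𝓢(ℝ, ℂ)) :
    eLpNorm (𝓕 φ : 𝓢(ℝ, ℂ)) 2 = eLpNorm φ 2 := by
  have h := congrArg ENNReal.ofReal φ.norm_fourier_toL2_eq
  rwa [ofReal_norm, ofReal_norm, SchwartzMap.toLp, SchwartzMap.toLp, Lp.enorm_toLp,
    Lp.enorm_toLp] at h

lemma eLpNorm_two_convolution_schwartz_le (hA : ∀ ξ, ‖𝓕 K ξ‖ₑ ≤ A) (φ : 𝓢(ℝ, ℂ)) :
    eLpNorm (φ ⋆ₘ K) 2 ≤ A * eLpNorm φ 2 := by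
  have hconv : (φ ⋆ₘ K : ℝ → ℂ) = SchwartzMap.convolution (ContinuousLinearMap.mul ℂ ℂ) φ K :=
    funext fun x ↦ (SchwartzMap.convolution_apply _ φ K x).symm
  rw [hconv, ← eLpNorm_two_fourier_schwartz, ← eLpNorm_two_fourier_schwartz φ]
  refine eLpNorm_le_nnreal_smul_eLpNorm_of_ae_le_mul' (Eventually.of_forall fun ξ ↦ ?_) 2
  rw [SchwartzMap.fourier_convolution, SchwartzMap.pairing_apply_apply,
    ContinuousLinearMap.mul_apply', enorm_mul, mul_comm]
  gcongr
  exact hA ξ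

lemma convolution_mul_eq_inner {u : ℝ → ℂ} (hu : MemLp u 2) (x : ℝ) :
    (u ⋆ₘ K) x = inner ℂ (((K.memLp 2).comp_measurePreserving
      (Measure.measurePreserving_sub_left volume x)).star.toLp _) (hu.toLp u) := by
  rw [L2.inner_def, convolution_mul]
  refine integral_congr_ae ?_
  filter_upwards [MemLp.coeFn_toLp ((K.memLp 2).comp_measurePreserving
    (Measure.measurePreserving_sub_left volume x)).star, hu.coeFn_toLp] with y hKy huy
  rw [hKy, huy]
  simp

lemma tendsto_convolution_mul {φ : ℕ → ℝ → ℂ} (hφ : ∀ n, MemLp (φ n) 2) {f : ℝ → ℂ}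
    (hf : MemLp f 2) (hlim : Tendsto (fun n ↦ (hφ n).toLp (φ n)) atTop (𝓝 (hf.toLp f))) (x : ℝ) :
    Tendsto (fun n ↦ (φ n ⋆ₘ K) x) atTop (𝓝 ((f ⋆ₘ K) x)) := by
  rw [convolution_mul_eq_inner K hf]
  simp_rw [fun n ↦ convolution_mul_eq_inner K (hφ n) x]
  exact tendsto_const_nhds.inner hlim

lemma exists_schwartz_tendsto_toLp_two {f : ℝ → ℂ} (hf : MemLp f 2) :
    ∃ φ : ℕ → 𝓢(ℝ, ℂ),
      Tendsto (fun n ↦ ((φ n).memLp 2 volume).toLp (φ n)) atTop (𝓝 (hf.toLp f)) := by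
  obtain ⟨s, hs, hlim⟩ := mem_closure_iff_seq_limit.1
    (SchwartzMap.denseRange_toLpCLM (E := ℝ) (F := ℂ) (p := 2) (by simp) (μ := volume) (hf.toLp f))
  choose φ hφ using hs
  exact ⟨φ, hlim.congr fun n ↦ (hφ n).symm⟩

lemma eLpNorm_two_convolution_le (hA : ∀ ξ, ‖𝓕 K ξ‖ₑ ≤ A) {f : ℝ → ℂ} (hf : MemLp f 2) :
    eLpNorm (f ⋆ₘ K) 2 ≤ A * eLpNorm f 2 := by
  obtain ⟨φ, hφ⟩ := exists_schwartz_tendsto_toLp_two hf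
  have hnorm : Tendsto (fun n ↦ eLpNorm (φ n) 2) atTop (𝓝 (eLpNorm f 2)) := by
    simpa only [Function.comp_def, Lp.enorm_toLp] using (continuous_enorm.tendsto _).comp hφ
  rw [← (ENNReal.Tendsto.const_mul hnorm (Or.inr ENNReal.coe_ne_top)).liminf_eq]
  refine (Lp.eLpNorm_lim_le_liminf_eLpNorm (fun n ↦ (measurable_convolution_mul
    K.continuous.measurable (φ n).continuous.measurable).aestronglyMeasurable) _
    (Eventually.of_forall <| tendsto_convolution_mul K _ hf hφ)).trans ?_
  exact liminf_le_liminf <| Eventually.of_forall fun n ↦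
    eLpNorm_two_convolution_schwartz_le K hA (φ n)

theorem hasConvStrongType_two_of_enorm_fourier_le (hA : ∀ ξ, ‖𝓕 K ξ‖ₑ ≤ A) :
    HasConvStrongType K 2 ((A : ℝ≥0∞) ^ 2) := by
  intro f hfm _ hf2
  have hsq (u : ℝ → ℂ) : eLpNorm u 2 ^ 2 = ∫⁻ x, ‖u x‖ₑ ^ (2 : ℝ) := by
    simpa using eLpNorm_nnreal_pow_eq_lintegral (f := u) (μ := volume) (two_ne_zero (α := ℝ≥0))
  have hf : MemLp f 2 := by
    refine ⟨hfm.aestronglyMeasurable, lt_top_iff_ne_top.2 fun h ↦ hf2 ?_⟩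
    rw [← hsq, h, ENNReal.top_pow two_ne_zero]
  rw [← hsq, ← hsq, ← mul_pow]
  gcongr
  exact eLpNorm_two_convolution_le K hA hf

end Plancherel

section Duality

variable {p q : ℝ} {𝕜 : Type*} [RCLike 𝕜]

/-- The extremiser in Hölder's inequality: pairing `z` with `lpDual p z` gives `‖z‖ ^ p`. -/
noncomputable def lpDual (p : ℝ) (z : 𝕜) : 𝕜 := ((‖z‖ ^ (p - 2) : ℝ) : 𝕜) * starRingEnd 𝕜 z

lemma norm_lpDual (hp : 1 < p) (z : 𝕜) : ‖lpDual p z‖ = ‖z‖ ^ (p - 1) := by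
  rw [lpDual, norm_mul, RCLike.norm_conj, RCLike.norm_ofReal, abs_of_nonneg (by positivity),
    show p - 1 = p - 2 + 1 by ring, Real.rpow_add_one' (norm_nonneg z) (by linarith)]

lemma lpDual_mul_self (hp : 1 < p) (z : 𝕜) : lpDual p z * z = ((‖z‖ ^ p : ℝ) : 𝕜) := by
  have hpow : ‖z‖ ^ p = ‖z‖ ^ (p - 2) * ‖z‖ ^ 2 := by
    rw [← Real.rpow_natCast, ← Real.rpow_add' (norm_nonneg z) (by push_cast; linarith)]
    push_cast
    ring_nf
  rw [lpDual, mul_assoc, RCLike.conj_mul, hpow]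
  push_cast
  ring

lemma measurable_lpDual : Measurable (lpDual p : 𝕜 → 𝕜) := by
  unfold lpDual
  exact (RCLike.measurable_ofReal.comp (by fun_prop)).mul RCLike.continuous_conj.measurable

lemma enorm_lpDual_rpow (hpq : p.HolderConjugate q) (z : 𝕜) : ‖lpDual p z‖ₑ ^ q = ‖z‖ₑ ^ p := by
  rw [← ofReal_norm, ← ofReal_norm, norm_lpDual hpq.lt,
    ENNReal.ofReal_rpow_of_nonneg (by positivity) hpq.symm.nonneg, ← Real.rpow_mul (norm_nonneg _),
    hpq.sub_one_mul_conj, ENNReal.ofReal_rpow_of_nonneg (norm_nonneg _) hpq.nonneg]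

lemma le_rpow_of_le_mul_rpow_conjExponent (hpq : p.HolderConjugate q) {X N : ℝ≥0∞} (hX : X ≠ ∞)
    (h : X ≤ N * X ^ (1 / q)) : X ≤ N ^ p := by
  rcases eq_or_ne X 0 with rfl | hX0
  · exact zero_le
  have hsplit : X = X ^ (1 / p) * X ^ (1 / q) := by
    rw [← ENNReal.rpow_add _ _ hX0 hX, one_div, one_div, hpq.inv_add_inv_eq_one, ENNReal.rpow_one]
  have hroot : X ^ (1 / p) ≤ N := by
    refine (ENNReal.mul_le_mul_iff_left (c := X ^ (1 / q)) ?_ ?_).1 (hsplit ▸ h)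
    · simp [hX0, hX]
    · finiteness
  simpa [← ENNReal.rpow_mul, hpq.ne_zero] using ENNReal.rpow_le_rpow hroot hpq.nonneg

variable {α : Type*} [MeasurableSpace α] {μ : Measure α} {u : α → 𝕜}

lemma setLIntegral_rpow_le_of_pairing_le (hpq : p.HolderConjugate q) (hu : Measurable u) {M : ℝ}
    (hM : ∀ x, ‖u x‖ ≤ M) {N : ℝ≥0∞}
    (hpair : ∀ g : α → 𝕜, Measurable g → Integrable g μ → ∫⁻ x, ‖g x‖ₑ ^ q ∂μ ≠ ∞ →
      ‖∫ x, g x * u x ∂μ‖ₑ ≤ N * (∫⁻ x, ‖g x‖ₑ ^ q ∂μ) ^ (1 / q))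
    {I : Set α} (hI : MeasurableSet I) (hμI : μ I ≠ ∞) :
    ∫⁻ x in I, ‖u x‖ₑ ^ p ∂μ ≤ N ^ p := by
  set g : α → 𝕜 := I.indicator fun x ↦ lpDual p (u x) with hg
  have hgm : Measurable g := (measurable_lpDual.comp hu).indicator hI
  have hgi : Integrable g μ := by
    rw [hg, integrable_indicator_iff hI]
    refine Measure.integrableOn_of_bounded (M := M ^ (p - 1)) hμI
      (measurable_lpDual.comp hu).aestronglyMeasurable (Eventually.of_forall fun x ↦ ?_)
    rw [norm_lpDual hpq.lt]
    exact Real.rpow_le_rpow (norm_nonneg _) (hM x) hpq.sub_one_pos.le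
  have hui : IntegrableOn (fun x ↦ ‖u x‖ ^ p) I μ := by
    refine Measure.integrableOn_of_bounded (M := M ^ p) hμI
      (hu.norm.pow_const p).aestronglyMeasurable (Eventually.of_forall fun x ↦ ?_)
    rw [Real.norm_of_nonneg (by positivity)]
    exact Real.rpow_le_rpow (norm_nonneg _) (hM x) hpq.nonneg
  have henorm : ∀ x, ENNReal.ofReal (‖u x‖ ^ p) = ‖u x‖ₑ ^ p := fun x ↦ by
    rw [← ENNReal.ofReal_rpow_of_nonneg (norm_nonneg _) hpq.nonneg, ofReal_norm]
  have hself : ‖∫ x, g x * u x ∂μ‖ₑ = ∫⁻ x in I, ‖u x‖ₑ ^ p ∂μ := by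
    have hgu : (fun x ↦ g x * u x) = I.indicator fun x ↦ ((‖u x‖ ^ p : ℝ) : 𝕜) := by
      simp_rw [← lpDual_mul_self hpq.lt, hg]
      exact funext fun x ↦ (indicator_mul_left I _ u).symm
    rw [hgu, integral_indicator hI, integral_ofReal, ← ofReal_norm, RCLike.norm_ofReal,
      abs_of_nonneg (by positivity), ofReal_integral_eq_lintegral_ofReal hui
        (Eventually.of_forall fun x ↦ by positivity)]
    simp_rw [henorm]
  have hgq : ∫⁻ x, ‖g x‖ₑ ^ q ∂μ = ∫⁻ x in I, ‖u x‖ₑ ^ p ∂μ := by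
    rw [← lintegral_indicator hI]
    refine lintegral_congr fun x ↦ ?_
    by_cases hx : x ∈ I
    · simp only [hg, indicator_of_mem hx, enorm_lpDual_rpow hpq]
    · simp [hg, hx, hpq.symm.pos]
  have hfin : ∫⁻ x in I, ‖u x‖ₑ ^ p ∂μ ≠ ∞ := by
    simp_rw [← henorm]
    exact hui.lintegral_lt_top.ne
  refine le_rpow_of_le_mul_rpow_conjExponent hpq hfin ?_
  simpa only [hself, hgq] using hpair g hgm hgi (hgq.trans_ne hfin)

theorem lintegral_rpow_le_of_pairing_le [SigmaFinite μ] (hpq : p.HolderConjugate q)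
    (hu : Measurable u) {M : ℝ} (hM : ∀ x, ‖u x‖ ≤ M) {N : ℝ≥0∞}
    (hpair : ∀ g : α → 𝕜, Measurable g → Integrable g μ → ∫⁻ x, ‖g x‖ₑ ^ q ∂μ ≠ ∞ →
      ‖∫ x, g x * u x ∂μ‖ₑ ≤ N * (∫⁻ x, ‖g x‖ₑ ^ q ∂μ) ^ (1 / q)) :
    ∫⁻ x, ‖u x‖ₑ ^ p ∂μ ≤ N ^ p := by
  rw [← setLIntegral_univ, ← iUnion_spanningSets μ,
    setLIntegral_iUnion_of_directed _ (monotone_spanningSets μ).directed_le]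
  exact iSup_le fun n ↦ setLIntegral_rpow_le_of_pairing_le hpq hu hM hpair
    (measurableSet_spanningSets μ n) (measure_spanningSets_lt_top μ n).ne

end Duality

section KernelReflection

variable {K : ℝ → ℂ} {M p q : ℝ}

lemma norm_convolution_mul_le (hbdd : ∀ x, ‖K x‖ ≤ M) {f : ℝ → ℂ} (hf : Integrable f) (x : ℝ) :
    ‖(f ⋆ₘ K) x‖ ≤ (∫ y, ‖f y‖) * M := by
  rw [convolution_mul, ← integral_mul_const]
  refine norm_integral_le_of_norm_le (hf.norm.mul_const _) (Eventually.of_forall fun y ↦ ?_)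
  rw [norm_mul]
  gcongr
  exact hbdd _

lemma integral_mul_convolution (hK : Measurable K) (hbdd : ∀ x, ‖K x‖ ≤ M) {f g : ℝ → ℂ}
    (hf : Integrable f) (hg : Integrable g) :
    ∫ x, g x * (f ⋆ₘ K) x = ∫ y, (g ⋆ₘ fun x ↦ K (-x)) y * f y := by
  have hint : Integrable (Function.uncurry fun x y ↦ g x * f y * K (x - y)) (volume.prod volume) :=
    (hg.mul_prod hf).mul_bdd (Measurable.aestronglyMeasurable (by fun_prop))
      (Eventually.of_forall fun z ↦ hbdd _)
  simp only [convolution_mul, ← integral_const_mul, ← integral_mul_const, neg_sub]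
  simp only [← mul_assoc]
  refine (integral_integral_swap hint).trans ?_
  simp only [mul_right_comm]

lemma convolution_mul_comp_neg (f : ℝ → ℂ) (x : ℝ) :
    (f ⋆ₘ fun y ↦ K (-y)) x = ((fun y ↦ f (-y)) ⋆ₘ K) (-x) := by
  rw [convolution_mul, convolution_mul, ← integral_neg_eq_self]
  simp only [sub_neg_eq_add, neg_add_rev]
  refine integral_congr_ae (Eventually.of_forall fun y ↦ ?_)
  ring_nf

theorem HasConvStrongType.comp_neg {C : ℝ≥0∞} (hC : HasConvStrongType K p C) :
    HasConvStrongType (fun x ↦ K (-x)) p C := by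
  intro f hfm hf hfp
  have hneg (F : ℝ → ℝ≥0∞) : ∫⁻ x, F (-x) = ∫⁻ x, F x := lintegral_neg_eq_self F
  simp_rw [convolution_mul_comp_neg]
  rw [hneg fun x ↦ ‖((fun y ↦ f (-y)) ⋆ₘ K) x‖ₑ ^ p, ← hneg fun x ↦ ‖f x‖ₑ ^ p]
  exact hC _ (hfm.comp measurable_neg) hf.comp_neg ((hneg fun x ↦ ‖f x‖ₑ ^ p).trans_ne hfp)

theorem HasConvStrongType.dual {C : ℝ≥0∞} (hC : HasConvStrongType K q C)
    (hpq : p.HolderConjugate q) (hK : Measurable K) (hbdd : ∀ x, ‖K x‖ ≤ M) :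
    HasConvStrongType K p (C ^ (p - 1)) := by
  intro f hfm hf _
  set F := ∫⁻ x, ‖f x‖ₑ ^ p
  have hexp : 1 / q * p = p - 1 := by rw [one_div_mul_eq_div, hpq.div_conj_eq_sub_one]
  calc ∫⁻ x, ‖(f ⋆ₘ K) x‖ₑ ^ p ≤ (C ^ (1 / q) * F ^ (1 / p)) ^ p := by
        refine lintegral_rpow_le_of_pairing_le hpq (measurable_convolution_mul hK hfm)
          (norm_convolution_mul_le hbdd hf) fun g hgm hg hgq ↦ ?_
        rw [integral_mul_convolution hK hbdd hf hg]
        calc ‖∫ y, (g ⋆ₘ fun x ↦ K (-x)) y * f y‖ₑ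
            ≤ ∫⁻ y, ‖(g ⋆ₘ fun x ↦ K (-x)) y‖ₑ * ‖f y‖ₑ := by
              simp_rw [← enorm_mul]
              exact enorm_integral_le_lintegral_enorm _
          _ ≤ (∫⁻ y, ‖(g ⋆ₘ fun x ↦ K (-x)) y‖ₑ ^ q) ^ (1 / q) * F ^ (1 / p) :=
              ENNReal.lintegral_mul_le_Lp_mul_Lq _ hpq.symm (measurable_convolution_mul
                (hK.comp measurable_neg) hgm).enorm.aemeasurable hfm.enorm.aemeasurable
          _ ≤ (C * ∫⁻ y, ‖g y‖ₑ ^ q) ^ (1 / q) * F ^ (1 / p) := by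
              gcongr
              · exact one_div_nonneg.2 hpq.symm.nonneg
              · exact hC.comp_neg g hgm hg hgq
          _ = C ^ (1 / q) * F ^ (1 / p) * (∫⁻ y, ‖g y‖ₑ ^ q) ^ (1 / q) := by
              rw [ENNReal.mul_rpow_of_nonneg _ _ (one_div_nonneg.2 hpq.symm.nonneg)]
              ring
    _ = C ^ (p - 1) * F := by
        rw [ENNReal.mul_rpow_of_nonneg _ _ hpq.nonneg, ← ENNReal.rpow_mul, ← ENNReal.rpow_mul,
          hexp, one_div_mul_cancel hpq.ne_zero, ENNReal.rpow_one]

end KernelReflection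

section Moments

variable {E : Type*} [NormedAddCommGroup E] {φ : ℝ → E}

/-- The `L¹` norm of the derivative of `φ`. -/
noncomputable def derivMass [NormedSpace ℝ E] (φ : ℝ → E) : ℝ≥0∞ := ∫⁻ x, ‖deriv φ x‖ₑ

/-- The first absolute moment of `φ`. -/
noncomputable def firstMoment (φ : ℝ → E) : ℝ≥0∞ := ∫⁻ x, ‖x‖ₑ * ‖φ x‖ₑ

lemma lintegral_comp_mul_left (F : ℝ → ℝ≥0∞) {c : ℝ} (hc : c ≠ 0) :
    ∫⁻ x, F (c * x) = ‖c⁻¹‖ₑ * ∫⁻ x, F x := by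
  have hmap := lintegral_map_equiv F (MeasurableEquiv.mulLeft₀ c hc) (μ := volume)
  rw [MeasurableEquiv.coe_mulLeft₀, Real.map_volume_mul_left hc, lintegral_smul_measure,
    smul_eq_mul, ← Real.enorm_eq_ofReal_abs] at hmap
  exact hmap.symm

lemma enorm_sub_translate_le [NormedSpace ℝ E] [CompleteSpace E] (hφ : ContDiff ℝ 1 φ)
    (x y : ℝ) :
    ‖φ (x - y) - φ x‖ₑ ≤ ∫⁻ t in Ioc (0 : ℝ) 1, ‖y‖ₑ * ‖deriv φ (x - t * y)‖ₑ := by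
  have hderiv : ∀ t ∈ uIcc (0 : ℝ) 1,
      HasDerivAt (fun t ↦ φ (x - t * y)) (-y • deriv φ (x - t * y)) t := fun t _ ↦ by
    simpa [Function.comp_def] using
      (hφ.differentiable one_ne_zero _).hasDerivAt.scomp t
        (((hasDerivAt_id t).mul_const y).const_sub x)
  have hcont : Continuous fun t ↦ -y • deriv φ (x - t * y) := by
    have := hφ.continuous_deriv le_rfl
    fun_prop
  have hftc := intervalIntegral.integral_eq_sub_of_hasDerivAt hderiv
    (hcont.intervalIntegrable 0 1)
  rw [intervalIntegral.integral_of_le zero_le_one, one_mul, zero_mul, sub_zero] at hftc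
  rw [← hftc]
  exact (enorm_integral_le_lintegral_enorm _).trans_eq (by simp_rw [enorm_smul, enorm_neg])

lemma lintegral_enorm_sub_translate_le [NormedSpace ℝ E] [CompleteSpace E]
    (hφ : ContDiff ℝ 1 φ) (y : ℝ) :
    ∫⁻ x, ‖φ (x - y) - φ x‖ₑ ≤ ‖y‖ₑ * derivMass φ := by
  have hmeas : Measurable fun x ↦ ‖deriv φ x‖ₑ := (hφ.continuous_deriv le_rfl).enorm.measurable
  calc ∫⁻ x, ‖φ (x - y) - φ x‖ₑ
      ≤ ∫⁻ x, ∫⁻ t in Ioc (0 : ℝ) 1, ‖y‖ₑ * ‖deriv φ (x - t * y)‖ₑ :=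
        lintegral_mono fun x ↦ enorm_sub_translate_le hφ x y
    _ = ∫⁻ t in Ioc (0 : ℝ) 1, ∫⁻ x, ‖y‖ₑ * ‖deriv φ (x - t * y)‖ₑ :=
        lintegral_lintegral_swap ((hmeas.comp (f := fun z : ℝ × ℝ ↦ z.1 - z.2 * y)
          (by fun_prop)).const_mul _).aemeasurable
    _ = ∫⁻ _ in Ioc (0 : ℝ) 1, ‖y‖ₑ * derivMass φ := by
        refine lintegral_congr fun t ↦ ?_
        rw [lintegral_const_mul' _ _ enorm_ne_top,
          lintegral_sub_right_eq_self (fun x ↦ ‖deriv φ x‖ₑ), derivMass]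
    _ = ‖y‖ₑ * derivMass φ := by simp

lemma lintegral_enorm_sub_translate_far_le (hφ : AEStronglyMeasurable φ) (y : ℝ) :
    ‖y‖ₑ * ∫⁻ x in {x | 2 * |y| < |x|}, ‖φ (x - y) - φ x‖ₑ ≤ 2 * firstMoment φ := by
  have hfar : MeasurableSet {x : ℝ | 2 * |y| < |x|} :=
    measurableSet_lt measurable_const measurable_norm
  rw [← lintegral_const_mul' _ _ enorm_ne_top]
  calc ∫⁻ x in {x | 2 * |y| < |x|}, ‖y‖ₑ * ‖φ (x - y) - φ x‖ₑ
      ≤ ∫⁻ x in {x | 2 * |y| < |x|}, (‖x - y‖ₑ * ‖φ (x - y)‖ₑ + ‖x‖ₑ * ‖φ x‖ₑ) := by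
        refine setLIntegral_mono' hfar fun x (hx : 2 * |y| < |x|) ↦ ?_
        have hxy : ‖y‖ₑ ≤ ‖x - y‖ₑ := enorm_le_iff_norm_le.2 (by
          simp only [Real.norm_eq_abs]
          linarith [abs_sub_abs_le_abs_sub x y])
        have hx' : ‖y‖ₑ ≤ ‖x‖ₑ := enorm_le_iff_norm_le.2 (by
          simp only [Real.norm_eq_abs]
          linarith [abs_nonneg y])
        calc ‖y‖ₑ * ‖φ (x - y) - φ x‖ₑ ≤ ‖y‖ₑ * (‖φ (x - y)‖ₑ + ‖φ x‖ₑ) := by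
              gcongr; exact enorm_sub_le
          _ ≤ ‖x - y‖ₑ * ‖φ (x - y)‖ₑ + ‖x‖ₑ * ‖φ x‖ₑ := by rw [mul_add]; gcongr
    _ ≤ ∫⁻ x, (‖x - y‖ₑ * ‖φ (x - y)‖ₑ + ‖x‖ₑ * ‖φ x‖ₑ) := setLIntegral_le_lintegral _ _
    _ = 2 * firstMoment φ := by
        have hmoment : AEMeasurable fun x ↦ ‖x‖ₑ * ‖φ x‖ₑ :=
          measurable_enorm.aemeasurable.mul hφ.enorm
        rw [lintegral_add_right' _ hmoment,
          lintegral_sub_right_eq_self (fun x ↦ ‖x‖ₑ * ‖φ x‖ₑ), two_mul, firstMoment]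

lemma derivMass_dilate [NormedSpace ℝ E] (φ : ℝ → E) {c : ℝ} (hc : c ≠ 0) :
    derivMass (fun x ↦ c • φ (c * x)) = ‖c‖ₑ * derivMass φ := by
  have hderiv (x : ℝ) : deriv (fun x ↦ c • φ (c * x)) x = c • c • deriv φ (c * x) := by
    rw [deriv_fun_const_smul_field, deriv_comp_mul_left]
  simp_rw [derivMass, hderiv, enorm_smul]
  rw [lintegral_comp_mul_left (fun x ↦ ‖c‖ₑ * (‖c‖ₑ * ‖deriv φ x‖ₑ)) hc,
    lintegral_const_mul' _ _ enorm_ne_top, lintegral_const_mul' _ _ enorm_ne_top,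
    ← mul_assoc, ← enorm_mul, inv_mul_cancel₀ hc, enorm_one, one_mul]

lemma firstMoment_dilate [NormedSpace ℝ E] (φ : ℝ → E) {c : ℝ} (hc : c ≠ 0) :
    ‖c‖ₑ * firstMoment (fun x ↦ c • φ (c * x)) = firstMoment φ := by
  rw [firstMoment, ← lintegral_const_mul' _ _ enorm_ne_top]
  calc ∫⁻ x, ‖c‖ₑ * (‖x‖ₑ * ‖c • φ (c * x)‖ₑ)
      = ∫⁻ x, ‖c‖ₑ * (‖c * x‖ₑ * ‖φ (c * x)‖ₑ) := by
        refine lintegral_congr fun x ↦ ?_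
        rw [enorm_smul, enorm_mul]
        ring
    _ = firstMoment φ := by
        rw [lintegral_comp_mul_left (fun x ↦ ‖c‖ₑ * (‖x‖ₑ * ‖φ x‖ₑ)) hc,
          lintegral_const_mul' _ _ enorm_ne_top, ← mul_assoc, ← enorm_mul, inv_mul_cancel₀ hc,
          enorm_one, one_mul, firstMoment]

lemma enorm_mul_enorm_fourier_le_derivMass {φ : ℝ → ℂ} (hφ : Integrable φ)
    (hdiff : Differentiable ℝ φ) (hderiv : Integrable (deriv φ)) (ξ : ℝ) :
    ‖2 * Real.pi * ξ‖ₑ * ‖𝓕 φ ξ‖ₑ ≤ derivMass φ := by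
  have hfourier : ‖𝓕 (deriv φ) ξ‖ₑ ≤ derivMass φ := by
    rw [Real.fourier_eq]
    refine (enorm_integral_le_lintegral_enorm _).trans_eq (lintegral_congr fun x ↦ ?_)
    rw [← ofReal_norm, Circle.norm_smul, ofReal_norm]
  rw [congrFun (Real.fourier_deriv hφ hdiff hderiv) ξ, enorm_smul] at hfourier
  convert hfourier using 2
  simp [← ofReal_norm]

lemma enorm_fourier_le_firstMoment {φ : ℝ → ℂ} (hφ : Integrable φ) (h0 : ∫ x, φ x = 0) (ξ : ℝ) :
    ‖𝓕 φ ξ‖ₑ ≤ ‖2 * Real.pi * ξ‖ₑ * firstMoment φ := by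
  have hcancel : 𝓕 φ ξ = ∫ x, (Complex.exp (Complex.I * ↑(-2 * Real.pi * x * ξ)) - 1) * φ x := by
    have hint : Integrable fun x ↦ Complex.exp (Complex.I * ↑(-2 * Real.pi * x * ξ)) * φ x :=
      hφ.bdd_mul (c := 1) (Continuous.aestronglyMeasurable (by fun_prop))
        (Eventually.of_forall fun x ↦ (Complex.norm_exp_I_mul_ofReal _).le)
    simp_rw [sub_mul, one_mul]
    rw [integral_sub hint hφ, h0, sub_zero, Real.fourier_real_eq_integral_exp_smul]
    simp_rw [mul_comm Complex.I, smul_eq_mul]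
  rw [hcancel, firstMoment, ← lintegral_const_mul' _ _ enorm_ne_top]
  refine (enorm_integral_le_lintegral_enorm _).trans (lintegral_mono fun x ↦ ?_)
  rw [enorm_mul, ← mul_assoc]
  gcongr
  refine Real.enorm_exp_I_mul_ofReal_sub_one_le.trans_eq ?_
  rw [← enorm_mul, ← enorm_neg]
  ring_nf

end Moments

section CalderonZygmund

theorem exists_hasConvStrongType_of_fourier_of_hormanderCondition {p : ℝ} (hp : 1 < p)
    (B : ℝ≥0) : ∃ C ≠ ∞, ∀ K : 𝓢(ℝ, ℂ), (∀ ξ, ‖𝓕 K ξ‖ₑ ≤ B) → HormanderCondition K B →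
      HasConvStrongType K p C := by
  let A (q : ℝ) : ℝ≥0∞ := marcinkiewiczConst q (B ^ 2) (8 * (B ^ 2 + 1 + B))
  have hA (q : ℝ) : A q ≠ ∞ := marcinkiewiczConst_ne_top (by finiteness) (by finiteness)
  have hbdd (K : 𝓢(ℝ, ℂ)) (x : ℝ) : ‖K x‖ ≤ ‖K.toBoundedContinuousFunction‖ :=
    K.toBoundedContinuousFunction.norm_coe_le_norm x
  have hlt {q : ℝ} (hq : 1 < q) (hq2 : q < 2) (K : 𝓢(ℝ, ℂ)) (hfour : ∀ ξ, ‖𝓕 K ξ‖ₑ ≤ B)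
      (hH : HormanderCondition K B) : HasConvStrongType K q (A q) :=
    (hasConvStrongType_two_of_enorm_fourier_le K hfour).of_hormanderCondition
      K.continuous.measurable (hbdd K) hH hq hq2
  rcases lt_trichotomy p 2 with hp2 | rfl | hp2
  · exact ⟨A p, hA p, hlt hp hp2⟩
  · exact ⟨B ^ 2, by finiteness, fun K hfour _ ↦ hasConvStrongType_two_of_enorm_fourier_le K hfour⟩
  · have hpq := Real.HolderConjugate.conjExponent hp
    have hq2 : p.conjExponent < 2 := by
      rw [Real.conjExponent, div_lt_iff₀ (by linarith)]
      linarith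
    exact ⟨A p.conjExponent ^ (p - 1), ENNReal.rpow_ne_top_of_nonneg (by linarith) (hA _),
      fun K hfour hH ↦ (hlt hpq.symm.lt hq2 K hfour hH).dual hpq K.continuous.measurable (hbdd K)⟩

end CalderonZygmund

section DyadicSum

-- The summand is at most `6 (F (2t) - F t)` for `F t = t / (1 + t)`, so the dyadic sum telescopes.
lemma sum_range_min_dyadic_le {t : ℝ} (ht : 0 < t) (N : ℕ) :
    ∑ k ∈ Finset.range N, min (2 ^ k * t) (1 / (2 ^ k * t)) ≤ 6 := by
  have hstep (u : ℝ) (hu : 0 < u) :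
      min u (1 / u) ≤ 6 * (2 * u / (1 + 2 * u)) - 6 * (u / (1 + u)) := by
    have hdiff : 6 * (2 * u / (1 + 2 * u)) - 6 * (u / (1 + u)) =
        6 * u / ((1 + 2 * u) * (1 + u)) := by
      field_simp
      ring
    rw [hdiff]
    rcases le_total u 1 with hu1 | hu1
    · have hprod : (1 + 2 * u) * (1 + u) ≤ 6 := by nlinarith
      refine (min_le_left _ _).trans ((le_div_iff₀ (by positivity)).2 ?_)
      nlinarith
    · refine (min_le_right _ _).trans ((div_le_div_iff₀ hu (by positivity)).2 ?_)
      nlinarith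
  calc ∑ k ∈ Finset.range N, min (2 ^ k * t) (1 / (2 ^ k * t))
      ≤ ∑ k ∈ Finset.range N, (6 * (2 ^ (k + 1) * t / (1 + 2 ^ (k + 1) * t)) -
          6 * (2 ^ k * t / (1 + 2 ^ k * t))) := by
        refine Finset.sum_le_sum fun k _ ↦ (hstep _ (by positivity)).trans_eq ?_
        ring_nf
    _ = 6 * (2 ^ N * t / (1 + 2 ^ N * t)) - 6 * (t / (1 + t)) := by
        rw [Finset.sum_range_sub (fun k ↦ 6 * (2 ^ k * t / (1 + 2 ^ k * t))), pow_zero, one_mul]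
    _ ≤ 6 := by
        have hle : 2 ^ N * t / (1 + 2 ^ N * t) ≤ 1 := by
          rw [div_le_one (by positivity)]
          linarith
        have hnonneg : 0 ≤ t / (1 + t) := by positivity
        linarith

lemma sum_le_of_dyadic_bounds {w M : ℝ≥0∞} {b : ℕ → ℝ≥0∞} (hlow : ∀ k, w * b k ≤ 2 ^ k * M)
    (hhigh : ∀ k, 2 ^ k * b k ≤ w * M) (hw : w ≠ ∞) (s : Finset ℕ) :
    ∑ k ∈ s, b k ≤ 6 * M := by
  rcases eq_or_ne w 0 with rfl | hw0
  · have hb (k : ℕ) : b k = 0 := by simpa using hhigh k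
    simp [hb]
  lift w to ℝ≥0 using hw
  have hwpos : (0 : ℝ) < w := by exact_mod_cast pos_of_ne_zero (by exact_mod_cast hw0)
  have hterm (k : ℕ) :
      b k ≤ ENNReal.ofReal (min (2 ^ k * (w : ℝ)⁻¹) (1 / (2 ^ k * (w : ℝ)⁻¹))) * M := by
    rw [ENNReal.ofReal_mono.map_min, min_mul]
    refine le_min ((ENNReal.mul_le_iff_le_inv hw0 ENNReal.coe_ne_top).1 (hlow k)
      |>.trans_eq ?_) ((ENNReal.mul_le_iff_le_inv (by simp) (by simp)).1 (hhigh k)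
      |>.trans_eq ?_)
    · rw [ENNReal.ofReal_mul (by positivity), ENNReal.ofReal_inv_of_pos hwpos,
        ENNReal.ofReal_coe_nnreal, ENNReal.ofReal_pow zero_le_two, ENNReal.ofReal_ofNat]
      ring
    · rw [one_div, mul_inv, inv_inv, ENNReal.ofReal_mul (by positivity),
        ENNReal.ofReal_inv_of_pos (by positivity), ENNReal.ofReal_coe_nnreal,
        ENNReal.ofReal_pow zero_le_two, ENNReal.ofReal_ofNat, mul_assoc]
  obtain ⟨N, hN⟩ := s.exists_nat_subset_range
  calc ∑ k ∈ s, b k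
      ≤ ∑ k ∈ Finset.range N,
          ENNReal.ofReal (min (2 ^ k * (w : ℝ)⁻¹) (1 / (2 ^ k * (w : ℝ)⁻¹))) * M :=
        (Finset.sum_le_sum_of_subset hN).trans (Finset.sum_le_sum fun k _ ↦ hterm k)
    _ ≤ 6 * M := by
        rw [← Finset.sum_mul, ← ENNReal.ofReal_sum_of_nonneg fun k _ ↦ by positivity]
        gcongr
        exact (ENNReal.ofReal_le_ofReal (sum_range_min_dyadic_le (inv_pos.2 hwpos) N)).trans_eq
          (by simp)

end DyadicSum

section SignedSum

/-- The sum of `a k` over `k ∈ s` with the signs of the terms in `S` reversed; as `S` runs over the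
subsets of `s`, the signs run over all of `{-1, 1} ^ s`. -/
def signedSum {ι G : Type*} [DecidableEq ι] [AddCommGroup G] (a : ι → G) (s S : Finset ι) : G :=
  ∑ k ∈ s, if k ∈ S then -a k else a k

variable {ι G : Type*} [DecidableEq ι]

lemma map_signedSum {H F : Type*} [AddCommGroup G] [AddCommGroup H] [FunLike F G H]
    [AddMonoidHomClass F G H] (f : F) (a : ι → G) (s S : Finset ι) :
    f (signedSum a s S) = signedSum (fun k ↦ f (a k)) s S := by
  simp only [signedSum, map_sum, apply_ite f, map_neg]

lemma enorm_signedSum_le [NormedAddCommGroup G] (a : ι → G) (s S : Finset ι) :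
    ‖signedSum a s S‖ₑ ≤ ∑ k ∈ s, ‖a k‖ₑ :=
  (enorm_sum_le _ _).trans_eq <| Finset.sum_congr rfl fun k _ ↦ by
    split_ifs <;> simp only [enorm_neg]

lemma sum_powerset_insert_signedSum [AddCommGroup G] {M : Type*} [AddCommMonoid M]
    {a : ι → G} {s : Finset ι} {i : ι} (hi : i ∉ s) (F : G → M) :
    ∑ S ∈ (insert i s).powerset, F (signedSum a (insert i s) S) =
      ∑ S ∈ s.powerset, (F (signedSum a s S + a i) + F (signedSum a s S - a i)) := by
  rw [Finset.sum_powerset_insert hi, ← Finset.sum_add_distrib]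
  refine Finset.sum_congr rfl fun S hS ↦ ?_
  have hiS : i ∉ S := fun h ↦ hi (Finset.mem_powerset.1 hS h)
  have hflip : signedSum a s (insert i S) = signedSum a s S :=
    Finset.sum_congr rfl fun k hk ↦ by
      simp only [Finset.mem_insert, or_iff_right (ne_of_mem_of_not_mem hk hi)]
  congr 2
  · rw [signedSum, Finset.sum_insert hi, if_neg hiS, add_comm, signedSum]
  · rw [← hflip, signedSum, Finset.sum_insert hi, if_pos (Finset.mem_insert_self i S), signedSum]
    abel

end SignedSum

section DyadicKernel

variable (ψ : 𝓢(ℝ, ℂ))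

/-- The `L¹`-normalised dyadic dilate `ψ_k = 2 ^ k ψ(2 ^ k ·)`. -/
noncomputable def dyadicDilate (k : ℕ) : 𝓢(ℝ, ℂ) :=
  (2 ^ k : ℝ) • SchwartzMap.compCLMOfContinuousLinearEquiv ℂ
    (ContinuousLinearEquiv.unitsEquivAut ℝ (Units.mk0 (2 ^ k) (by positivity))) ψ

lemma coe_dyadicDilate (k : ℕ) :
    ⇑(dyadicDilate ψ k) = fun x ↦ (2 ^ k : ℝ) • ψ (2 ^ k * x) := by
  ext x
  simp [dyadicDilate, mul_comm]

lemma enorm_two_pow (k : ℕ) : ‖(2 ^ k : ℝ)‖ₑ = 2 ^ k := by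
  simp [Real.enorm_eq_ofReal]

lemma derivMass_dyadicDilate (k : ℕ) :
    derivMass (dyadicDilate ψ k) = 2 ^ k * derivMass ψ := by
  rw [coe_dyadicDilate, derivMass_dilate _ (by positivity), enorm_two_pow]

lemma two_pow_mul_firstMoment_dyadicDilate (k : ℕ) :
    2 ^ k * firstMoment (dyadicDilate ψ k) = firstMoment ψ := by
  rw [coe_dyadicDilate, ← firstMoment_dilate ψ (c := 2 ^ k) (by positivity), enorm_two_pow]

lemma integral_dyadicDilate (k : ℕ) : ∫ x, dyadicDilate ψ k x = ∫ x, ψ x := by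
  rw [coe_dyadicDilate, integral_smul, Measure.integral_comp_mul_left,
    abs_of_pos (by positivity), smul_inv_smul₀ (by positivity)]

lemma integrable_deriv_schwartz : Integrable (deriv ψ) :=
  (SchwartzMap.derivCLM ℂ ℂ ψ).integrable

lemma derivMass_schwartz_ne_top : derivMass ψ ≠ ∞ :=
  (integrable_deriv_schwartz ψ).hasFiniteIntegral.ne

lemma firstMoment_schwartz_ne_top : firstMoment ψ ≠ ∞ := by
  have h := (ψ.integrable_pow_mul volume 1).hasFiniteIntegral.ne
  simpa [firstMoment, enorm_mul] using h

/-- The multiplier and Hörmander constant of the signed sums of the dyadic dilates of `ψ`. -/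
noncomputable def dyadicKernelConst : ℝ≥0∞ := 6 * (derivMass ψ + 2 * firstMoment ψ)

lemma dyadicKernelConst_ne_top : dyadicKernelConst ψ ≠ ∞ := by
  have h₁ := derivMass_schwartz_ne_top ψ
  have h₂ := firstMoment_schwartz_ne_top ψ
  unfold dyadicKernelConst
  finiteness

lemma enorm_fourier_signedSum_dyadicDilate_le (h0 : ∫ x, ψ x = 0) (s S : Finset ℕ) (ξ : ℝ) :
    ‖𝓕 (signedSum (dyadicDilate ψ) s S) ξ‖ₑ ≤ dyadicKernelConst ψ := by
  have heval : 𝓕 (signedSum (dyadicDilate ψ) s S) ξ =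
      signedSum (fun k ↦ 𝓕 (dyadicDilate ψ k) ξ) s S :=
    map_signedSum (AddMonoidHom.mk' (fun φ : 𝓢(ℝ, ℂ) ↦ 𝓕 φ ξ)
      fun φ φ' ↦ by simp only [FourierTransform.fourier_add, add_apply]) _ s S
  rw [heval]
  refine (enorm_signedSum_le _ s S).trans
    (sum_le_of_dyadic_bounds (w := ‖2 * Real.pi * ξ‖ₑ) (fun k ↦ ?_) (fun k ↦ ?_) enorm_ne_top s)
  · have hderiv := enorm_mul_enorm_fourier_le_derivMass (dyadicDilate ψ k).integrable
      (dyadicDilate ψ k).differentiable (integrable_deriv_schwartz _) ξ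
    rw [derivMass_dyadicDilate] at hderiv
    refine hderiv.trans ?_
    gcongr
    exact le_self_add
  · have hmoment := enorm_fourier_le_firstMoment (dyadicDilate ψ k).integrable
      ((integral_dyadicDilate ψ k).trans h0) ξ
    calc 2 ^ k * ‖𝓕 (dyadicDilate ψ k) ξ‖ₑ
        ≤ 2 ^ k * (‖2 * Real.pi * ξ‖ₑ * firstMoment (dyadicDilate ψ k)) := by
          gcongr
          exact hmoment
      _ = ‖2 * Real.pi * ξ‖ₑ * firstMoment ψ := by
          rw [mul_left_comm, two_pow_mul_firstMoment_dyadicDilate]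
      _ ≤ ‖2 * Real.pi * ξ‖ₑ * (derivMass ψ + 2 * firstMoment ψ) := by
          gcongr
          exact (le_mul_of_one_le_left' one_le_two).trans le_add_self

lemma lintegral_enorm_sub_translate_far_dyadicDilate_le (k : ℕ) (y : ℝ) :
    2 ^ k * (‖y‖ₑ * ∫⁻ x in {x | 2 * |y| < |x|},
      ‖dyadicDilate ψ k (x - y) - dyadicDilate ψ k x‖ₑ) ≤ 2 * firstMoment ψ := by
  rw [← two_pow_mul_firstMoment_dyadicDilate ψ k, mul_left_comm 2]
  exact mul_le_mul_right (lintegral_enorm_sub_translate_far_le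
    (dyadicDilate ψ k).continuous.aestronglyMeasurable y) _

lemma hormanderCondition_signedSum_dyadicDilate (s S : Finset ℕ) :
    HormanderCondition (signedSum (dyadicDilate ψ) s S : 𝓢(ℝ, ℂ)) (dyadicKernelConst ψ) := by
  intro y
  rcases eq_or_ne y 0 with rfl | hy
  · simp
  have hy0 : ‖y‖ₑ ≠ 0 := enorm_ne_zero.2 hy
  let b (k : ℕ) : ℝ≥0∞ :=
    ∫⁻ x in {x | 2 * |y| < |x|}, ‖dyadicDilate ψ k (x - y) - dyadicDilate ψ k x‖ₑ
  have hlow (k : ℕ) : ‖y‖ₑ⁻¹ * b k ≤ 2 ^ k * (derivMass ψ + 2 * firstMoment ψ) := by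
    rw [ENNReal.inv_mul_le_iff hy0 enorm_ne_top]
    refine (setLIntegral_le_lintegral _ _).trans
      ((lintegral_enorm_sub_translate_le ((dyadicDilate ψ k).smooth 1) y).trans ?_)
    rw [derivMass_dyadicDilate]
    gcongr
    exact le_self_add
  have hhigh (k : ℕ) : 2 ^ k * b k ≤ ‖y‖ₑ⁻¹ * (derivMass ψ + 2 * firstMoment ψ) := by
    rw [← ENNReal.mul_le_iff_le_inv hy0 enorm_ne_top, mul_left_comm]
    exact (lintegral_enorm_sub_translate_far_dyadicDilate_le ψ k y).trans le_add_self
  have heval (x : ℝ) : (signedSum (dyadicDilate ψ) s S : 𝓢(ℝ, ℂ)) (x - y) -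
      (signedSum (dyadicDilate ψ) s S : 𝓢(ℝ, ℂ)) x =
      signedSum (fun k ↦ dyadicDilate ψ k (x - y) - dyadicDilate ψ k x) s S :=
    map_signedSum (AddMonoidHom.mk' (fun φ : 𝓢(ℝ, ℂ) ↦ φ (x - y) - φ x)
      fun φ φ' ↦ add_sub_add_comm _ _ _ _) _ s S
  simp_rw [heval]
  calc ∫⁻ x in {x | 2 * |y| < |x|},
        ‖signedSum (fun k ↦ dyadicDilate ψ k (x - y) - dyadicDilate ψ k x) s S‖ₑ
      ≤ ∫⁻ x in {x | 2 * |y| < |x|},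
          ∑ k ∈ s, ‖dyadicDilate ψ k (x - y) - dyadicDilate ψ k x‖ₑ :=
        lintegral_mono fun x ↦ enorm_signedSum_le _ s S
    _ = ∑ k ∈ s, b k := lintegral_finsetSum _ fun k _ ↦ by
        have := (dyadicDilate ψ k).continuous
        fun_prop
    _ ≤ dyadicKernelConst ψ :=
        sum_le_of_dyadic_bounds hlow hhigh (ENNReal.inv_ne_top.2 hy0) s

lemma exists_hasConvStrongType_signedSum_dyadicDilate (h0 : ∫ x, ψ x = 0) {p : ℝ} (hp : 1 < p) :
    ∃ C ≠ ∞, ∀ s S, HasConvStrongType (signedSum (dyadicDilate ψ) s S : 𝓢(ℝ, ℂ)) p C := by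
  have hcoe := ENNReal.coe_toNNReal (dyadicKernelConst_ne_top ψ)
  obtain ⟨C, hC, hstrong⟩ :=
    exists_hasConvStrongType_of_fourier_of_hormanderCondition hp (dyadicKernelConst ψ).toNNReal
  exact ⟨C, hC, fun s S ↦ hstrong _
    (hcoe.symm ▸ enorm_fourier_signedSum_dyadicDilate_le ψ h0 s S)
    (hcoe.symm ▸ hormanderCondition_signedSum_dyadicDilate ψ s S)⟩

end DyadicKernel

section Khintchine

variable {ι E : Type*} [DecidableEq ι] [NormedAddCommGroup E] [InnerProductSpace ℝ E]
  {a : ι → E} {s : Finset ι} {p : ℝ}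

lemma norm_add_pow_four_add_norm_sub_pow_four_le (z w : E) :
    ‖z + w‖ ^ 4 + ‖z - w‖ ^ 4 ≤ 2 * ‖z‖ ^ 4 + 12 * ‖w‖ ^ 2 * ‖z‖ ^ 2 + 2 * ‖w‖ ^ 4 := by
  have hinner : inner ℝ z w ^ 2 ≤ (‖z‖ * ‖w‖) ^ 2 :=
    sq_le_sq.2 ((abs_real_inner_le_norm z w).trans (le_abs_self _))
  calc ‖z + w‖ ^ 4 + ‖z - w‖ ^ 4 = (‖z + w‖ ^ 2) ^ 2 + (‖z - w‖ ^ 2) ^ 2 := by ring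
    _ = 2 * (‖z‖ ^ 2 + ‖w‖ ^ 2) ^ 2 + 8 * inner ℝ z w ^ 2 := by
        rw [norm_add_sq_real, norm_sub_sq_real]
        ring
    _ ≤ 2 * (‖z‖ ^ 2 + ‖w‖ ^ 2) ^ 2 + 8 * (‖z‖ * ‖w‖) ^ 2 := by gcongr
    _ = 2 * ‖z‖ ^ 4 + 12 * ‖w‖ ^ 2 * ‖z‖ ^ 2 + 2 * ‖w‖ ^ 4 := by ring

variable (a s)

lemma sum_norm_signedSum_sq :
    ∑ S ∈ s.powerset, ‖signedSum a s S‖ ^ 2 = 2 ^ s.card * ∑ k ∈ s, ‖a k‖ ^ 2 := by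
  induction s using Finset.induction_on with
  | empty => simp [signedSum]
  | insert i s hi ih =>
    have hparallelogram (z : E) :
        ‖z + a i‖ ^ 2 + ‖z - a i‖ ^ 2 = 2 * ‖z‖ ^ 2 + 2 * ‖a i‖ ^ 2 := by
      rw [norm_add_sq_real, norm_sub_sq_real]
      ring
    rw [sum_powerset_insert_signedSum hi (‖·‖ ^ 2)]
    simp_rw [hparallelogram]
    rw [Finset.sum_add_distrib, ← Finset.mul_sum, ih, Finset.sum_insert hi,
      Finset.card_insert_of_notMem hi, Finset.sum_const, Finset.card_powerset, nsmul_eq_mul]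
    push_cast
    ring

lemma sum_norm_signedSum_pow_four_le :
    ∑ S ∈ s.powerset, ‖signedSum a s S‖ ^ 4 ≤
      2 ^ s.card * (3 * (∑ k ∈ s, ‖a k‖ ^ 2) ^ 2) := by
  induction s using Finset.induction_on with
  | empty => simp [signedSum]
  | insert i s hi ih =>
    set Q := ∑ k ∈ s, ‖a k‖ ^ 2 with hQ
    rw [sum_powerset_insert_signedSum hi (‖·‖ ^ 4)]
    calc ∑ S ∈ s.powerset, (‖signedSum a s S + a i‖ ^ 4 + ‖signedSum a s S - a i‖ ^ 4)
        ≤ ∑ S ∈ s.powerset, (2 * ‖signedSum a s S‖ ^ 4 +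
            12 * ‖a i‖ ^ 2 * ‖signedSum a s S‖ ^ 2 + 2 * ‖a i‖ ^ 4) :=
          Finset.sum_le_sum fun S _ ↦ norm_add_pow_four_add_norm_sub_pow_four_le _ _
      _ = 2 * ∑ S ∈ s.powerset, ‖signedSum a s S‖ ^ 4 + 12 * ‖a i‖ ^ 2 * (2 ^ s.card * Q) +
            2 ^ s.card * (2 * ‖a i‖ ^ 4) := by
          rw [Finset.sum_add_distrib, Finset.sum_add_distrib, ← Finset.mul_sum, ← Finset.mul_sum,
            sum_norm_signedSum_sq, Finset.sum_const, Finset.card_powerset, nsmul_eq_mul]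
          push_cast
          rfl
      _ ≤ 2 * (2 ^ s.card * (3 * Q ^ 2)) + 12 * ‖a i‖ ^ 2 * (2 ^ s.card * Q) +
            2 ^ s.card * (6 * ‖a i‖ ^ 4) := by gcongr; norm_num
      _ = 2 ^ (insert i s).card * (3 * (∑ k ∈ insert i s, ‖a k‖ ^ 2) ^ 2) := by
          rw [Finset.sum_insert hi, Finset.card_insert_of_notMem hi, ← hQ]
          ring

lemma khintchine_of_two_le (hp : 2 ≤ p) :
    2 ^ s.card * (∑ k ∈ s, ‖a k‖ ^ 2) ^ (p / 2) ≤ ∑ S ∈ s.powerset, ‖signedSum a s S‖ ^ p := by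
  have hjensen := Real.rpow_arith_mean_le_arith_mean_rpow s.powerset
    (fun _ ↦ ((2 : ℝ) ^ s.card)⁻¹) (fun S ↦ ‖signedSum a s S‖ ^ 2) (fun _ _ ↦ by positivity)
    (by simp) (fun _ _ ↦ by positivity) (p := p / 2) (by linarith)
  have hpow (z : E) : (‖z‖ ^ 2) ^ (p / 2) = ‖z‖ ^ p := by
    rw [← Real.rpow_natCast_mul (norm_nonneg z)]
    congr 1
    push_cast
    ring
  simp_rw [hpow] at hjensen
  rwa [← Finset.mul_sum, ← Finset.mul_sum, sum_norm_signedSum_sq,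
    inv_mul_cancel_left₀ (by positivity), ← div_eq_inv_mul, le_div_iff₀' (by positivity)] at hjensen

lemma sq_le_rpow_mul_add_pow_four_div {t R : ℝ} (ht : 0 ≤ t) (hR : 0 < R) (hp2 : p ≤ 2) :
    t ^ 2 ≤ R ^ (1 - p / 2) * t ^ p + t ^ 4 / R := by
  have hfour : 0 ≤ t ^ 4 / R := by positivity
  have hlow : 0 ≤ R ^ (1 - p / 2) * t ^ p := by positivity
  rcases le_total (t ^ 2) R with hle | hle
  · have hsplit : t ^ 2 = (t ^ 2) ^ (1 - p / 2) * t ^ p := by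
      rw [← Real.rpow_natCast_mul ht, ← Real.rpow_add' ht (by push_cast; linarith),
        ← Real.rpow_natCast]
      congr 1
      push_cast
      ring
    have hmono : (t ^ 2) ^ (1 - p / 2) * t ^ p ≤ R ^ (1 - p / 2) * t ^ p := by
      gcongr
      linarith
    linarith
  · have : t ^ 2 ≤ t ^ 4 / R := by
      rw [le_div_iff₀ hR]
      nlinarith [sq_nonneg t]
    linarith

-- Comparing second and fourth moments: the terms with `‖signedSum‖² > 6 Q` carry at most half of
-- the second moment.
lemma khintchine_of_le_two (hp : 0 < p) (hp2 : p ≤ 2) :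
    2 ^ s.card * (∑ k ∈ s, ‖a k‖ ^ 2) ^ (p / 2) ≤
      12 * ∑ S ∈ s.powerset, ‖signedSum a s S‖ ^ p := by
  set Q := ∑ k ∈ s, ‖a k‖ ^ 2
  set P := ∑ S ∈ s.powerset, ‖signedSum a s S‖ ^ p
  have hQ_nonneg : 0 ≤ Q := by positivity
  rcases hQ_nonneg.eq_or_lt with hQ0 | hQ0
  · rw [← hQ0, Real.zero_rpow (by linarith), mul_zero]
    positivity
  have hmoments : 2 ^ s.card * Q ≤ (6 * Q) ^ (1 - p / 2) * P + 2 ^ s.card * Q / 2 :=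
    calc 2 ^ s.card * Q = ∑ S ∈ s.powerset, ‖signedSum a s S‖ ^ 2 :=
          (sum_norm_signedSum_sq a s).symm
      _ ≤ ∑ S ∈ s.powerset, ((6 * Q) ^ (1 - p / 2) * ‖signedSum a s S‖ ^ p +
            ‖signedSum a s S‖ ^ 4 / (6 * Q)) := Finset.sum_le_sum fun S _ ↦
          sq_le_rpow_mul_add_pow_four_div (norm_nonneg _) (by positivity) hp2
      _ = (6 * Q) ^ (1 - p / 2) * P + (∑ S ∈ s.powerset, ‖signedSum a s S‖ ^ 4) / (6 * Q) := by
          rw [Finset.sum_add_distrib, ← Finset.mul_sum, ← Finset.sum_div]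
      _ ≤ (6 * Q) ^ (1 - p / 2) * P + 2 ^ s.card * Q / 2 := by
          refine add_le_add_right ((div_le_iff₀ (by positivity)).2 ?_) _
          linarith [sum_norm_signedSum_pow_four_le a s]
  have hsix : (6 * Q) ^ (1 - p / 2) ≤ 6 * Q ^ (1 - p / 2) := by
    rw [Real.mul_rpow (by norm_num) hQ_nonneg]
    gcongr
    exact Real.rpow_le_self_of_one_le (by norm_num) (by linarith)
  have hQ_split : Q = Q ^ (1 - p / 2) * Q ^ (p / 2) := by
    rw [← Real.rpow_add hQ0, sub_add_cancel, Real.rpow_one]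
  refine le_of_mul_le_mul_left ?_ (Real.rpow_pos_of_pos hQ0 (1 - p / 2))
  calc Q ^ (1 - p / 2) * (2 ^ s.card * Q ^ (p / 2)) = 2 ^ s.card * Q := by
        rw [mul_left_comm, ← hQ_split]
    _ ≤ 2 * ((6 * Q) ^ (1 - p / 2) * P) := by linarith
    _ ≤ 2 * (6 * Q ^ (1 - p / 2) * P) := by gcongr
    _ = Q ^ (1 - p / 2) * (12 * P) := by ring

theorem khintchine (hp : 0 < p) :
    2 ^ s.card * (∑ k ∈ s, ‖a k‖ₑ ^ 2) ^ (p / 2) ≤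
      12 * ∑ S ∈ s.powerset, ‖signedSum a s S‖ₑ ^ p := by
  have hreal : 2 ^ s.card * (∑ k ∈ s, ‖a k‖ ^ 2) ^ (p / 2) ≤
      12 * ∑ S ∈ s.powerset, ‖signedSum a s S‖ ^ p := by
    rcases le_total 2 p with hp2 | hp2
    · refine (khintchine_of_two_le a s hp2).trans (le_mul_of_one_le_left ?_ (by norm_num))
      positivity
    · exact khintchine_of_le_two a s hp hp2
  have hofReal := ENNReal.ofReal_le_ofReal hreal
  rw [ENNReal.ofReal_mul (by positivity), ENNReal.ofReal_mul (by positivity),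
    ← ENNReal.ofReal_rpow_of_nonneg (by positivity) (by positivity),
    ENNReal.ofReal_sum_of_nonneg fun _ _ ↦ by positivity,
    ENNReal.ofReal_sum_of_nonneg fun _ _ ↦ by positivity] at hofReal
  simpa only [ENNReal.ofReal_pow zero_le_two, ENNReal.ofReal_ofNat,
    ENNReal.ofReal_pow (norm_nonneg _), ← ENNReal.ofReal_rpow_of_nonneg (norm_nonneg _) hp.le,
    ofReal_norm] using hofReal

end Khintchine

section SquareFunction

variable {α E : Type*} [MeasurableSpace α] {μ : Measure α} [NormedAddCommGroup E]
  [InnerProductSpace ℝ E] {u : ℕ → α → E} {p : ℝ} {M : ℝ≥0∞}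

lemma lintegral_sum_sq_rpow_le_of_signedSum (hu : ∀ k, AEStronglyMeasurable (u k) μ) (hp : 0 < p)
    (s : Finset ℕ) (hM : ∀ S, ∫⁻ x, ‖signedSum (fun k ↦ u k x) s S‖ₑ ^ p ∂μ ≤ M) :
    ∫⁻ x, (∑ k ∈ s, ‖u k x‖ₑ ^ 2) ^ (p / 2) ∂μ ≤ 12 * M := by
  have hmeas (S : Finset ℕ) :
      AEStronglyMeasurable (fun x ↦ signedSum (fun k ↦ u k x) s S) μ :=
    Finset.aestronglyMeasurable_fun_sum s fun k _ ↦ by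
      split_ifs
      exacts [(hu k).neg, hu k]
  have hpow_ne_top : (2 : ℝ≥0∞) ^ s.card ≠ ∞ := by finiteness
  refine (ENNReal.mul_le_mul_iff_right (by positivity) hpow_ne_top).1 ?_
  calc 2 ^ s.card * ∫⁻ x, (∑ k ∈ s, ‖u k x‖ₑ ^ 2) ^ (p / 2) ∂μ
      = ∫⁻ x, 2 ^ s.card * (∑ k ∈ s, ‖u k x‖ₑ ^ 2) ^ (p / 2) ∂μ :=
        (lintegral_const_mul' _ _ hpow_ne_top).symm
    _ ≤ ∫⁻ x, 12 * ∑ S ∈ s.powerset, ‖signedSum (fun k ↦ u k x) s S‖ₑ ^ p ∂μ :=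
        lintegral_mono fun x ↦ khintchine _ s hp
    _ = 12 * ∑ S ∈ s.powerset, ∫⁻ x, ‖signedSum (fun k ↦ u k x) s S‖ₑ ^ p ∂μ := by
        rw [lintegral_const_mul' _ _ (by finiteness),
          lintegral_finsetSum' _ fun S _ ↦ (hmeas S).enorm.pow_const p]
    _ ≤ 12 * ∑ _S ∈ s.powerset, M := by
        gcongr
        exact hM _
    _ = 2 ^ s.card * (12 * M) := by
        rw [Finset.sum_const, Finset.card_powerset, nsmul_eq_mul]
        push_cast
        ring

theorem lintegral_tsum_sq_rpow_le_of_signedSum (hu : ∀ k, AEStronglyMeasurable (u k) μ)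
    (hp : 0 < p) (hM : ∀ s S, ∫⁻ x, ‖signedSum (fun k ↦ u k x) s S‖ₑ ^ p ∂μ ≤ M) :
    ∫⁻ x, (∑' k, ‖u k x‖ₑ ^ 2) ^ (p / 2) ∂μ ≤ 12 * M := by
  have hsup (x : α) : (∑' k, ‖u k x‖ₑ ^ 2) ^ (p / 2) =
      ⨆ N, (∑ k ∈ Finset.range N, ‖u k x‖ₑ ^ 2) ^ (p / 2) := by
    rw [ENNReal.tsum_eq_iSup_nat]
    exact (ENNReal.orderIsoRpow (p / 2) (by positivity)).map_iSup _
  simp_rw [hsup]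
  rw [lintegral_iSup']
  · exact iSup_le fun N ↦ lintegral_sum_sq_rpow_le_of_signedSum hu hp _ (hM _)
  · exact fun N ↦ (Finset.aemeasurable_fun_sum _ fun k _ ↦ (hu k).enorm.pow_const 2).pow_const _
  · refine Eventually.of_forall fun x N N' hN ↦ ?_
    have := Finset.range_mono hN
    dsimp only
    gcongr

end SquareFunction

section LittlewoodPaley

variable {p : ℝ} (ψ : 𝓢(ℝ, ℂ)) (f : ℝ → ℂ)

/-- The square `∑ₖ |f ∗ ψₖ|²` of the Littlewood–Paley square function, over the dyadic dilates
`ψₖ` of `ψ` with `k ≥ 0`. -/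
noncomputable def dyadicSquareSum (x : ℝ) : ℝ≥0∞ :=
  ∑' k, ‖(f ⋆ₘ dyadicDilate ψ k) x‖ₑ ^ 2

variable {f}

lemma measurable_convolution_schwartz (hf : Measurable f) : Measurable (f ⋆ₘ ψ) :=
  measurable_convolution_mul ψ.continuous.measurable hf

lemma integrable_mul_translate_schwartz (hf : Integrable f) (x : ℝ) :
    Integrable fun y ↦ f y * ψ (x - y) :=
  integrable_mul_translate_kernel ψ.continuous.measurable
    ψ.toBoundedContinuousFunction.norm_coe_le_norm hf x

lemma convolution_signedSum_schwartz (hf : Integrable f) (φ : ℕ → 𝓢(ℝ, ℂ)) (s S : Finset ℕ)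
    (x : ℝ) : (f ⋆ₘ (signedSum φ s S : 𝓢(ℝ, ℂ))) x = signedSum (fun k ↦ (f ⋆ₘ φ k) x) s S :=
  map_signedSum (AddMonoidHom.mk' (fun χ : 𝓢(ℝ, ℂ) ↦ (f ⋆ₘ χ) x) fun χ χ' ↦ by
    simp only [convolution_mul, add_apply, mul_add]
    exact integral_add (integrable_mul_translate_schwartz χ hf x)
      (integrable_mul_translate_schwartz χ' hf x)) φ s S

theorem exists_lintegral_dyadicSquareSum_rpow_le (h0 : ∫ x, ψ x = 0) (hp : 1 < p) :
    ∃ C ≠ ∞, ∀ f : ℝ → ℂ, Measurable f → Integrable f → ∫⁻ x, ‖f x‖ₑ ^ p ≠ ∞ →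
      ∫⁻ x, dyadicSquareSum ψ f x ^ (p / 2) ≤ C * ∫⁻ x, ‖f x‖ₑ ^ p := by
  obtain ⟨C, hC, hstrong⟩ := exists_hasConvStrongType_signedSum_dyadicDilate ψ h0 hp
  refine ⟨12 * C, by finiteness, fun f hfm hf hfp ↦ ?_⟩
  rw [mul_assoc]
  refine lintegral_tsum_sq_rpow_le_of_signedSum
    (fun k ↦ (measurable_convolution_schwartz _ hfm).aestronglyMeasurable) (by linarith)
    fun s S ↦ ?_
  simp_rw [← convolution_signedSum_schwartz hf]
  exact hstrong s S f hfm hf hfp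

end LittlewoodPaley

section Stepanov

variable {p : ℝ} {A : ℝ≥0∞}

lemma setLIntegral_Ioc_three_le {g : ℝ → ℝ≥0∞} (hg : ∀ x, ∫⁻ s in Ioc x (x + 1), g s ≤ A)
    (x : ℝ) : ∫⁻ s in Ioc (x - 1) (x + 2), g s ≤ 3 * A := by
  have hcover : Ioc (x - 1) (x + 2) =
      Ioc (x - 1) (x - 1 + 1) ∪ (Ioc x (x + 1) ∪ Ioc (x + 1) (x + 1 + 1)) := by
    rw [Ioc_union_Ioc_eq_Ioc, sub_add_cancel, Ioc_union_Ioc_eq_Ioc] <;> ring_nf <;> linarith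
  calc ∫⁻ s in Ioc (x - 1) (x + 2), g s ≤ A + (A + A) := by
        rw [hcover]
        exact (lintegral_union_le _ _ _).trans
          (add_le_add (hg _) ((lintegral_union_le _ _ _).trans (add_le_add (hg _) (hg _))))
    _ = 3 * A := by ring

lemma setLIntegral_Ioc_enorm_le_of_rpow {f : ℝ → ℂ} (hf : Measurable f) (hp : 1 < p) {x : ℝ}
    (hA : ∫⁻ s in Ioc x (x + 1), ‖f s‖ₑ ^ p ≤ A) :
    ∫⁻ s in Ioc x (x + 1), ‖f s‖ₑ ≤ A ^ (1 / p) := by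
  have hhölder := ENNReal.lintegral_mul_le_Lp_mul_Lq (volume.restrict (Ioc x (x + 1)))
    (Real.HolderConjugate.conjExponent hp) (f := fun s ↦ ‖f s‖ₑ) (g := fun _ ↦ 1)
    hf.enorm.aemeasurable aemeasurable_const
  simp only [Pi.mul_apply, mul_one, ENNReal.one_rpow, lintegral_const, Measure.restrict_apply_univ,
    Real.volume_Ioc, add_sub_cancel_left, ENNReal.ofReal_one] at hhölder
  exact hhölder.trans (by gcongr)

lemma tsum_ofReal_three_div_one_add_sq_ne_top :
    ∑' n : ℤ, ENNReal.ofReal (3 / (1 + (n : ℝ) ^ 2)) ≠ ∞ := by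
  have hsum : Summable fun n : ℤ ↦ 3 * (1 / (n : ℝ) ^ 2) :=
    (Real.summable_one_div_int_pow.2 one_lt_two).mul_left 3
  refine (hsum.of_norm_bounded_eventually (f := fun n : ℤ ↦ 3 / (1 + (n : ℝ) ^ 2)) ?_
    ).tsum_ofReal_ne_top
  filter_upwards [eventually_cofinite_ne 0] with n hn
  rw [Real.norm_of_nonneg (by positivity), mul_one_div]
  gcongr
  linarith

lemma exists_lintegral_inv_one_add_sq_mul_le :
    ∃ W ≠ ∞, ∀ (g : ℝ → ℝ≥0∞) (a : ℝ≥0∞), (∀ x, ∫⁻ s in Ioc x (x + 1), g s ≤ a) →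
      ∀ s, ∫⁻ y, ENNReal.ofReal (1 + (s - y) ^ 2)⁻¹ * g y ≤ W * a := by
  refine ⟨_, tsum_ofReal_three_div_one_add_sq_ne_top, fun g a hg s ↦ ?_⟩
  rw [← setLIntegral_univ, ← iUnion_Ioc_add_intCast s, ← ENNReal.tsum_mul_right]
  refine (lintegral_iUnion_le _ _).trans (ENNReal.tsum_le_tsum fun n ↦ ?_)
  calc ∫⁻ y in Ioc (s + n) (s + n + 1), ENNReal.ofReal (1 + (s - y) ^ 2)⁻¹ * g y
      ≤ ∫⁻ y in Ioc (s + n) (s + n + 1), ENNReal.ofReal (3 / (1 + (n : ℝ) ^ 2)) * g y := by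
        refine setLIntegral_mono' measurableSet_Ioc fun y hy ↦ ?_
        gcongr ENNReal.ofReal ?_ * _
        rw [inv_eq_one_div, div_le_div_iff₀ (by positivity) (by positivity)]
        nlinarith [sq_nonneg (2 * (n + 1) + 3 * (y - s - n) - 2 : ℝ),
          mul_nonneg (sub_nonneg.2 hy.1.le) (sub_nonneg.2 hy.2)]
    _ = ENNReal.ofReal (3 / (1 + (n : ℝ) ^ 2)) * ∫⁻ y in Ioc (s + n) (s + n + 1), g y :=
        lintegral_const_mul' _ _ ENNReal.ofReal_ne_top
    _ ≤ ENNReal.ofReal (3 / (1 + (n : ℝ) ^ 2)) * a := by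
        gcongr
        exact hg _

lemma exists_norm_dyadicDilate_le (ψ : 𝓢(ℝ, ℂ)) :
    ∃ D, 0 ≤ D ∧ ∀ k t, 1 ≤ |t| → ‖dyadicDilate ψ k t‖ ≤ 2⁻¹ ^ k * (D * (1 + t ^ 2)⁻¹) := by
  obtain ⟨D, hD, hdecay⟩ := ψ.decay 2 0
  refine ⟨2 * D, by positivity, fun k t ht ↦ ?_⟩
  have hscaled : (2 ^ k * t) ^ 2 * ‖ψ (2 ^ k * t)‖ ≤ D := by
    simpa only [Real.norm_eq_abs, sq_abs, norm_iteratedFDeriv_zero] using hdecay (2 ^ k * t)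
  have ht2 : 1 ≤ t ^ 2 := by rwa [← sq_abs, one_le_sq_iff₀ (abs_nonneg t)]
  rw [coe_dyadicDilate, norm_smul, Real.norm_of_nonneg (by positivity), ← mul_assoc,
    ← div_eq_mul_inv, le_div_iff₀ (by positivity), inv_pow, ← div_eq_inv_mul,
    le_div_iff₀' (by positivity)]
  calc 2 ^ k * (2 ^ k * ‖ψ (2 ^ k * t)‖ * (1 + t ^ 2))
      ≤ 2 ^ k * (2 ^ k * ‖ψ (2 ^ k * t)‖ * (2 * t ^ 2)) := by gcongr; linarith
    _ = 2 * ((2 ^ k * t) ^ 2 * ‖ψ (2 ^ k * t)‖) := by ring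
    _ ≤ 2 * D := by gcongr

lemma one_le_abs_sub_of_notMem_Ioc {x s y : ℝ} (hs : s ∈ Ioc x (x + 1))
    (hy : y ∉ Ioc (x - 1) (x + 2)) : 1 ≤ |s - y| := by
  rw [mem_Ioc, not_and_or, not_lt, not_le] at hy
  rw [le_abs]
  rcases hy with hy | hy
  · exact Or.inl (by linarith [hs.1])
  · exact Or.inr (by linarith [hs.2])

lemma exists_lintegral_far_le (ψ : 𝓢(ℝ, ℂ)) :
    ∃ D ≠ ∞, ∀ (f : ℝ → ℂ) (a : ℝ≥0∞), (∀ x, ∫⁻ s in Ioc x (x + 1), ‖f s‖ₑ ≤ a) →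
      ∀ x, ∀ s ∈ Ioc x (x + 1), ∀ k,
        ∫⁻ y in (Ioc (x - 1) (x + 2))ᶜ, ‖f y * dyadicDilate ψ k (s - y)‖ₑ ≤
          2⁻¹ ^ k * (D * a) := by
  obtain ⟨D, hD, hdecay⟩ := exists_norm_dyadicDilate_le ψ
  obtain ⟨W, hW, hweight⟩ := exists_lintegral_inv_one_add_sq_mul_le
  refine ⟨ENNReal.ofReal D * W, by finiteness, fun f a hf x s hs k ↦ ?_⟩
  have hkernel {y : ℝ} (hy : y ∈ (Ioc (x - 1) (x + 2))ᶜ) : ‖dyadicDilate ψ k (s - y)‖ₑ ≤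
      2⁻¹ ^ k * (ENNReal.ofReal D * ENNReal.ofReal (1 + (s - y) ^ 2)⁻¹) := by
    have hle := ENNReal.ofReal_le_ofReal (hdecay k _ (one_le_abs_sub_of_notMem_Ioc hs hy))
    rwa [ENNReal.ofReal_mul (by positivity), ENNReal.ofReal_mul hD, ofReal_norm,
      ENNReal.ofReal_pow (by norm_num), ENNReal.ofReal_inv_of_pos two_pos,
      ENNReal.ofReal_ofNat] at hle
  calc ∫⁻ y in (Ioc (x - 1) (x + 2))ᶜ, ‖f y * dyadicDilate ψ k (s - y)‖ₑ
      ≤ ∫⁻ y in (Ioc (x - 1) (x + 2))ᶜ, 2⁻¹ ^ k * ENNReal.ofReal D *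
          (ENNReal.ofReal (1 + (s - y) ^ 2)⁻¹ * ‖f y‖ₑ) := by
        refine setLIntegral_mono' measurableSet_Ioc.compl fun y hy ↦ ?_
        rw [enorm_mul, mul_comm, ← mul_assoc, mul_assoc (2⁻¹ ^ k)]
        gcongr
        exact hkernel hy
    _ ≤ 2⁻¹ ^ k * ENNReal.ofReal D * ∫⁻ y, ENNReal.ofReal (1 + (s - y) ^ 2)⁻¹ * ‖f y‖ₑ := by
        rw [lintegral_const_mul' _ _ (by finiteness)]
        gcongr
        exact Measure.restrict_le_self
    _ ≤ 2⁻¹ ^ k * ENNReal.ofReal D * (W * a) := by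
        gcongr
        exact hweight _ _ hf s
    _ = 2⁻¹ ^ k * (ENNReal.ofReal D * W * a) := by ring

lemma enorm_convolution_mul_le_indicator_add {f K : ℝ → ℂ} {J : Set ℝ} (hJ : MeasurableSet J)
    (s : ℝ) :
    ‖(f ⋆ₘ K) s‖ₑ ≤ ‖(J.indicator f ⋆ₘ K) s‖ₑ + ∫⁻ y in Jᶜ, ‖f y * K (s - y)‖ₑ := by
  have hnear : (J.indicator f ⋆ₘ K) s = ∫ y in J, f y * K (s - y) := by
    rw [convolution_mul, ← integral_indicator hJ]
    simp_rw [indicator_mul_left]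
  rw [hnear, convolution_mul]
  by_cases hint : Integrable fun y ↦ f y * K (s - y)
  · rw [← integral_add_compl hJ hint]
    exact (enorm_add_le _ _).trans (by gcongr; exact enorm_integral_le_lintegral_enorm _)
  · rw [integral_undef hint, enorm_zero]
    exact zero_le

lemma tsum_sq_le_of_le_add_geometric {u v : ℕ → ℝ≥0∞} {b : ℝ≥0∞}
    (huv : ∀ k, u k ≤ v k + 2⁻¹ ^ k * b) : ∑' k, u k ^ 2 ≤ 4 * (∑' k, v k ^ 2 + b ^ 2) := by
  have hterm (k : ℕ) : u k ^ 2 ≤ 2 * (v k ^ 2 + 2⁻¹ ^ k * b ^ 2) := by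
    have hsq := ENNReal.rpow_add_le_mul_rpow_add_rpow (v k) (2⁻¹ ^ k * b) one_le_two
    norm_num only [ENNReal.rpow_one, ENNReal.rpow_two] at hsq
    refine (pow_le_pow_left' (huv k) 2).trans (hsq.trans ?_)
    rw [mul_pow]
    gcongr 2 * (v k ^ 2 + ?_ * b ^ 2)
    exact pow_le_of_le_one zero_le (pow_le_one' (by simp) k) two_ne_zero
  calc ∑' k, u k ^ 2 ≤ ∑' k, 2 * (v k ^ 2 + 2⁻¹ ^ k * b ^ 2) := ENNReal.tsum_le_tsum hterm
    _ = 2 * (∑' k, v k ^ 2 + 2 * b ^ 2) := by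
        rw [ENNReal.tsum_mul_left, ENNReal.tsum_add, ENNReal.tsum_mul_right,
          ENNReal.tsum_geometric, ENNReal.one_sub_inv_two, inv_inv]
    _ ≤ 2 * (2 * ∑' k, v k ^ 2 + 2 * b ^ 2) := by
        gcongr
        exact le_mul_of_one_le_left zero_le one_le_two
    _ = 4 * (∑' k, v k ^ 2 + b ^ 2) := by ring

lemma ennreal_add_rpow_le {r : ℝ} (hr : 0 ≤ r) (a b : ℝ≥0∞) :
    (a + b) ^ r ≤ 2 ^ r * (a ^ r + b ^ r) := by
  wlog hab : a ≤ b generalizing a b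
  · rw [add_comm a, add_comm (a ^ r)]
    exact this b a (le_of_not_ge hab)
  calc (a + b) ^ r ≤ (2 * b) ^ r := by
        rw [two_mul]
        gcongr
    _ = 2 ^ r * b ^ r := ENNReal.mul_rpow_of_nonneg _ _ hr
    _ ≤ 2 ^ r * (a ^ r + b ^ r) := by
        gcongr
        exact le_add_self

lemma exists_dyadicSquareSum_rpow_le (ψ : 𝓢(ℝ, ℂ)) (hp : 0 < p) :
    ∃ C ≠ ∞, ∀ (f : ℝ → ℂ) (a : ℝ≥0∞), (∀ x, ∫⁻ s in Ioc x (x + 1), ‖f s‖ₑ ≤ a) →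
      ∀ x, ∀ s ∈ Ioc x (x + 1), dyadicSquareSum ψ f s ^ (p / 2) ≤
        C * (dyadicSquareSum ψ ((Ioc (x - 1) (x + 2)).indicator f) s ^ (p / 2) + a ^ p) := by
  obtain ⟨D, hD, hfar⟩ := exists_lintegral_far_le ψ
  have hp2 : 0 ≤ p / 2 := by positivity
  refine ⟨4 ^ (p / 2) * 2 ^ (p / 2) * (1 + D ^ p), by finiteness, fun f a hf x s hs ↦ ?_⟩
  set near := dyadicSquareSum ψ ((Ioc (x - 1) (x + 2)).indicator f) s
  have hsquare : dyadicSquareSum ψ f s ≤ 4 * (near + (D * a) ^ 2) :=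
    tsum_sq_le_of_le_add_geometric fun k ↦
      (enorm_convolution_mul_le_indicator_add measurableSet_Ioc s).trans <| by
        gcongr
        exact hfar f a hf x s hs k
  calc dyadicSquareSum ψ f s ^ (p / 2) ≤ (4 * (near + (D * a) ^ 2)) ^ (p / 2) := by gcongr
    _ ≤ 4 ^ (p / 2) * (2 ^ (p / 2) * (near ^ (p / 2) + ((D * a) ^ 2) ^ (p / 2))) := by
        rw [ENNReal.mul_rpow_of_nonneg _ _ hp2]
        gcongr
        exact ennreal_add_rpow_le hp2 _ _
    _ = 4 ^ (p / 2) * 2 ^ (p / 2) * (near ^ (p / 2) + D ^ p * a ^ p) := by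
        rw [← ENNReal.rpow_natCast_mul, Nat.cast_ofNat, mul_div_cancel₀ p two_ne_zero,
          ENNReal.mul_rpow_of_nonneg _ _ hp.le, mul_assoc]
    _ ≤ 4 ^ (p / 2) * 2 ^ (p / 2) * ((1 + D ^ p) * near ^ (p / 2) + (1 + D ^ p) * a ^ p) := by
        gcongr
        · exact le_mul_of_one_le_left zero_le le_self_add
        · exact le_add_self
    _ = 4 ^ (p / 2) * 2 ^ (p / 2) * (1 + D ^ p) * (near ^ (p / 2) + a ^ p) := by ring

lemma lintegral_enorm_rpow_indicator {f : ℝ → ℂ} {J : Set ℝ} (hJ : MeasurableSet J)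
    (hp : 0 < p) : ∫⁻ s, ‖J.indicator f s‖ₑ ^ p = ∫⁻ s in J, ‖f s‖ₑ ^ p := by
  rw [← lintegral_indicator hJ]
  congr with s
  by_cases hs : s ∈ J <;> simp [hs, hp]

theorem exists_setLIntegral_dyadicSquareSum_rpow_le (ψ : 𝓢(ℝ, ℂ)) (h0 : ∫ x, ψ x = 0)
    (hp : 1 < p) :
    ∃ C ≠ ∞, ∀ f : ℝ → ℂ, Measurable f → ∀ A ≠ ∞,
      (∀ x, ∫⁻ s in Ioc x (x + 1), ‖f s‖ₑ ^ p ≤ A) →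
        ∀ x, ∫⁻ s in Ioc x (x + 1), dyadicSquareSum ψ f s ^ (p / 2) ≤ C * A := by
  have hp0 : 0 < p := by linarith
  obtain ⟨C, hC, hglobal⟩ := exists_lintegral_dyadicSquareSum_rpow_le ψ h0 hp
  obtain ⟨D, hD, hlocal⟩ := exists_dyadicSquareSum_rpow_le ψ hp0
  refine ⟨D * (C * 3 + 1), by finiteness, fun f hf A hA hfA x ↦ ?_⟩
  set J := Ioc (x - 1) (x + 2)
  have hJ : MeasurableSet J := measurableSet_Ioc
  have hf1 (x) := setLIntegral_Ioc_enorm_le_of_rpow hf hp (hfA x)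
  have hnear_int : Integrable (J.indicator f) := by
    refine (integrable_indicator_iff hJ).2 ⟨hf.aestronglyMeasurable, ?_⟩
    exact (setLIntegral_Ioc_three_le hf1 x).trans_lt (by finiteness)
  have hnear_rpow : ∫⁻ s, ‖J.indicator f s‖ₑ ^ p ≤ 3 * A :=
    (lintegral_enorm_rpow_indicator hJ hp0).trans_le (setLIntegral_Ioc_three_le hfA x)
  calc ∫⁻ s in Ioc x (x + 1), dyadicSquareSum ψ f s ^ (p / 2)
      ≤ ∫⁻ s in Ioc x (x + 1), D * (dyadicSquareSum ψ (J.indicator f) s ^ (p / 2) + A) :=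
        setLIntegral_mono' measurableSet_Ioc fun s hs ↦ by
          simpa only [one_div, ENNReal.rpow_inv_rpow hp0.ne'] using
            hlocal f (A ^ (1 / p)) hf1 x s hs
    _ = D * ((∫⁻ s in Ioc x (x + 1), dyadicSquareSum ψ (J.indicator f) s ^ (p / 2)) + A) := by
        rw [lintegral_const_mul' _ _ hD, lintegral_add_right _ measurable_const, setLIntegral_const,
          Real.volume_Ioc, add_sub_cancel_left, ENNReal.ofReal_one, mul_one]
    _ ≤ D * ((∫⁻ s, dyadicSquareSum ψ (J.indicator f) s ^ (p / 2)) + A) := by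
        gcongr
        exact Measure.restrict_le_self
    _ ≤ D * (C * (3 * A) + A) := by
        gcongr D * (?_ + A)
        exact (hglobal _ (hf.indicator hJ) hnear_int
          (ne_top_of_le_ne_top (by finiteness) hnear_rpow)).trans (by gcongr)
    _ = D * (C * 3 + 1) * A := by ring

lemma tsum_enorm_integral_dilate_sq_le (ψ : 𝓢(ℝ, ℂ)) (f : ℝ → ℂ) (s : ℝ) :
    ∑' k : ℕ, ‖∫ y, f (s - y) * ((2 ^ (k + 1) : ℝ) : ℂ) * ψ (2 ^ (k + 1) * y)‖ₑ ^ 2 ≤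
      dyadicSquareSum ψ f s := by
  have hconv (k : ℕ) : ∫ y, f (s - y) * ((2 ^ k : ℝ) : ℂ) * ψ (2 ^ k * y) =
      (f ⋆ₘ dyadicDilate ψ k) s := by
    simp_rw [convolution_mul_swap, coe_dyadicDilate, Complex.real_smul, mul_assoc]
  simp_rw [hconv]
  exact ENNReal.tsum_comp_le_tsum_of_injective (add_left_injective 1)
    fun k ↦ ‖(f ⋆ₘ dyadicDilate ψ k) s‖ₑ ^ 2

end Stepanov

/-- Littlewood–Paley theorem for Stepanov norms: if `ψ` is Schwartz with `ψ̂(0) = 0` and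
`ψ_k = 2^k ψ(2^k ·)`, then for `p ∈ (1, ∞)` there is `C = C(p, ψ) > 0` such that
`‖(Σ_{k≥1} |f ∗ ψ_k|²)^{1/2}‖_{S^p} ≤ C ‖f‖_{S^p}` for all measurable `f` with finite
Stepanov norm. -/
theorem stmt_11 (p : ℝ) (hp : 1 < p) (ψ : SchwartzMap ℝ ℂ)
    (hψ0 : (∫ t : ℝ, ψ t) = 0) :
    ∃ C : ℝ, 0 < C ∧ ∀ f : ℝ → ℂ, Measurable f → stepanov p f < ⊤ →
      (⨆ x : ℝ, ∫⁻ s in Set.Ioc x (x + 1),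
          (∑' k : ℕ,
            ((‖∫ y : ℝ, f (s - y) * (((2 : ℝ) ^ (k + 1) : ℝ) : ℂ)
                * ψ ((2 : ℝ) ^ (k + 1) * y)‖₊ : ENNReal)) ^ 2) ^ (p / 2)) ^ (1 / p)
        ≤ ENNReal.ofReal C * stepanov p f := by
  have hp0 : 0 < p := by linarith
  obtain ⟨C, hC, hlocal⟩ := exists_setLIntegral_dyadicSquareSum_rpow_le ψ hψ0 hp
  refine ⟨(C ^ (1 / p)).toReal + 1, by positivity, fun f hf hfin ↦ ?_⟩
  unfold stepanov at hfin ⊢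
  simp only [← enorm_eq_nnnorm] at hfin ⊢
  set A := ⨆ x : ℝ, ∫⁻ s in Ioc x (x + 1), ‖f s‖ₑ ^ p
  have hA : A ≠ ∞ := fun hA ↦ by simp [hA, hp0] at hfin
  have hbound (x : ℝ) := hlocal f hf A hA (le_iSup _) x
  calc _ ≤ (C * A) ^ (1 / p) := by
        refine ENNReal.rpow_le_rpow (iSup_le fun x ↦ le_trans ?_ (hbound x)) (by positivity)
        gcongr with s
        exact tsum_enorm_integral_dilate_sq_le ψ f s
    _ = C ^ (1 / p) * A ^ (1 / p) := ENNReal.mul_rpow_of_nonneg _ _ (by positivity)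
    _ ≤ ENNReal.ofReal ((C ^ (1 / p)).toReal + 1) * A ^ (1 / p) := by
        gcongr
        rw [ENNReal.ofReal_add ENNReal.toReal_nonneg zero_le_one,
          ENNReal.ofReal_toReal (by finiteness)]
        exact le_self_add
end

section
/- Let p ∈ (1, ∞) and let φ : ℝ → ℂ be a Schwartz function. For k ∈ ℕ (k ≥ 1) set φ_k := 2^k φ(2^k ·). Then there exists a constant C = C(p, φ) > 0 such that for every measurable function f : ℝ → ℂ with ‖f‖_{S^p} < ∞, ‖sup_{k ≥ 1} |f ∗ φ_k|‖_{S^p} ≤ C ‖f‖_{S^p}, where (f ∗ φ_k)(x) := ∫_ℝ f(x − y) φ_k(y) dy. -/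
open MeasureTheory

/-!
The layer cake formula writes a radially decreasing kernel of mass `W` as a superposition of
indicators of balls of total mass `W`, so convolving `|f|` with any dilate of it gives at most `W`
times the Hardy-Littlewood maximal function of `f`. This reduces the theorem to the boundedness of
the maximal function `M` on Stepanov spaces. For `s ∈ (x, x + 1]`, the balls containing `s` that
leave `(x - 1, x + 2]` have radius at least `1 / 2`, and by Hölder's inequality the average of `|f|`
over such a ball is at most twice the Stepanov norm; the other balls only see the restriction of `f`
to `(x - 1, x + 2]`, to which the boundedness of `M` on `L^p` applies.
-/

open Filter Metric Module Set TopologicalSpace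
open scoped ENNReal NNReal Topology

section LayerCake

variable {α : Type*} [MeasurableSpace α] {μ : Measure α} {F g h : α → ℝ≥0∞} {p : ℝ}

theorem setLIntegral_Ioi_ofReal_rpow_eq_top (q : ℝ) :
    ∫⁻ l in Ioi (0 : ℝ), ENNReal.ofReal (l ^ q) = ∞ := by
  by_contra hfin
  refine not_integrableOn_Ioi_rpow q ((lintegral_ofReal_ne_top_iff_integrable ?_ ?_).1 hfin)
  · exact (by fun_prop : Measurable fun l : ℝ ↦ l ^ q).aestronglyMeasurable
  · filter_upwards [ae_restrict_mem measurableSet_Ioi] with l hl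
    exact Real.rpow_nonneg (le_of_lt hl) q

theorem lintegral_ennreal_rpow_eq_lintegral_meas_lt_mul (hF : Measurable F) (hp : 0 < p) :
    ∫⁻ x, F x ^ p ∂μ = ENNReal.ofReal p *
      ∫⁻ l in Ioi (0 : ℝ), μ {x | ENNReal.ofReal l < F x} * ENNReal.ofReal (l ^ (p - 1)) := by
  by_cases htop : μ {x | F x = ∞} = 0
  · have hfin : ∀ᵐ x ∂μ, F x ≠ ∞ := measure_eq_zero_iff_ae_notMem.1 htop
    have hlevel : ∀ l ∈ Ioi (0 : ℝ), μ {x | l < (F x).toReal} = μ {x | ENNReal.ofReal l < F x} := by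
      refine fun l hl ↦ measure_congr ?_
      filter_upwards [hfin] with x hx
      exact propext (ENNReal.ofReal_lt_iff_lt_toReal (le_of_lt hl) hx).symm
    calc ∫⁻ x, F x ^ p ∂μ = ∫⁻ x, ENNReal.ofReal ((F x).toReal ^ p) ∂μ := by
          refine lintegral_congr_ae ?_
          filter_upwards [hfin] with x hx
          rw [← ENNReal.ofReal_rpow_of_nonneg ENNReal.toReal_nonneg hp.le, ENNReal.ofReal_toReal hx]
      _ = _ := lintegral_rpow_eq_lintegral_meas_lt_mul μ
          (.of_forall fun x ↦ ENNReal.toReal_nonneg) hF.ennreal_toReal.aemeasurable hp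
      _ = _ := by
          congr 1
          exact setLIntegral_congr_fun measurableSet_Ioi fun l hl ↦ by rw [hlevel l hl]
  · have hright : ∞ ≤ ∫⁻ l in Ioi (0 : ℝ),
        μ {x | ENNReal.ofReal l < F x} * ENNReal.ofReal (l ^ (p - 1)) := calc
      ∞ = ∫⁻ l in Ioi (0 : ℝ), μ {x | F x = ∞} * ENNReal.ofReal (l ^ (p - 1)) := by
        rw [lintegral_const_mul _ (by fun_prop), setLIntegral_Ioi_ofReal_rpow_eq_top,
          ENNReal.mul_top htop]
      _ ≤ _ := by
        gcongr with l x
        exact fun hx ↦ hx ▸ ENNReal.ofReal_lt_top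
    have hleft : ∫⁻ x, F x ^ p ∂μ = ∞ := by
      refine lintegral_eq_top_of_measure_eq_top_ne_zero (hF.pow_const p).aemeasurable ?_
      simpa only [ENNReal.rpow_eq_top_iff_of_pos hp] using htop
    rw [hleft, top_le_iff.1 hright, ENNReal.mul_top (by simpa using hp)]

theorem lintegral_rpow_sub_one_mul_eq_lintegral_setLIntegral (hg : Measurable g)
    (hh : Measurable h) (hp : 1 < p) :
    ∫⁻ x, g x ^ (p - 1) * h x ∂μ = ENNReal.ofReal (p - 1) * ∫⁻ l in Ioi (0 : ℝ),
      (∫⁻ x in {x | ENNReal.ofReal l < g x}, h x ∂μ) * ENNReal.ofReal (l ^ (p - 2)) := by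
  have hcake := lintegral_ennreal_rpow_eq_lintegral_meas_lt_mul (μ := μ.withDensity h) hg
    (sub_pos.2 hp)
  rw [lintegral_withDensity_eq_lintegral_mul _ hh (hg.pow_const _), sub_sub, one_add_one_eq_two]
    at hcake
  simpa only [Pi.mul_apply, mul_comm (h _),
    withDensity_apply h (measurableSet_lt measurable_const hg)] using hcake

theorem lintegral_mul_eq_lintegral_setLIntegral_lt (hg : Measurable g) (hh : Measurable h) :
    ∫⁻ x, g x * h x ∂μ =
      ∫⁻ l in Ioi (0 : ℝ), ∫⁻ x in {x | ENNReal.ofReal l < g x}, h x ∂μ := by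
  have hcake := lintegral_rpow_sub_one_mul_eq_lintegral_setLIntegral (μ := μ) hg hh one_lt_two
  simpa only [show (2 : ℝ) - 1 = 1 by norm_num, sub_self, ENNReal.rpow_one, Real.rpow_zero,
    ENNReal.ofReal_one, mul_one, one_mul] using hcake

/-- The mechanism common to Doob's and to the Hardy-Littlewood maximal inequality. -/
theorem lintegral_rpow_le_of_mul_meas_lt_le {A : ℝ≥0∞} (hp : 1 < p) (hF : Measurable F)
    (hg : Measurable g) (hh : Measurable h)
    (hFg : ∀ l : ℝ, 0 < l → ENNReal.ofReal l * μ {x | ENNReal.ofReal l < F x} ≤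
      A * ∫⁻ x in {x | ENNReal.ofReal l < g x}, h x ∂μ) :
    ∫⁻ x, F x ^ p ∂μ ≤ ENNReal.ofReal (p / (p - 1)) * A * ∫⁻ x, g x ^ (p - 1) * h x ∂μ := by
  have hp₁ : 0 < p - 1 := sub_pos.2 hp
  have hlevel : ∀ l ∈ Ioi (0 : ℝ),
      μ {x | ENNReal.ofReal l < F x} * ENNReal.ofReal (l ^ (p - 1)) ≤
        A * ((∫⁻ x in {x | ENNReal.ofReal l < g x}, h x ∂μ) * ENNReal.ofReal (l ^ (p - 2))) := by
    intro l (hl : 0 < l)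
    have hpow : l ^ (p - 1) = l * l ^ (p - 2) := by
      rw [← Real.rpow_one_add' hl.le (by linarith)]
      ring_nf
    rw [hpow, ENNReal.ofReal_mul hl.le, ← mul_assoc, ← mul_assoc, mul_comm (μ _)]
    exact mul_le_mul_left (hFg l hl) _
  have hmeas : Measurable fun l : ℝ ↦
      (∫⁻ x in {x | ENNReal.ofReal l < g x}, h x ∂μ) * ENNReal.ofReal (l ^ (p - 2)) := by
    refine Measurable.mul (Antitone.measurable fun a b hab ↦ ?_) (by fun_prop)
    exact lintegral_mono_set fun x hx ↦ (ENNReal.ofReal_le_ofReal hab).trans_lt hx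
  calc ∫⁻ x, F x ^ p ∂μ
      ≤ ENNReal.ofReal p * ∫⁻ l in Ioi (0 : ℝ), A *
          ((∫⁻ x in {x | ENNReal.ofReal l < g x}, h x ∂μ) * ENNReal.ofReal (l ^ (p - 2))) := by
        rw [lintegral_ennreal_rpow_eq_lintegral_meas_lt_mul hF (by linarith)]
        exact mul_le_mul_right (setLIntegral_mono' measurableSet_Ioi hlevel) _
    _ = ENNReal.ofReal (p / (p - 1)) * A * ∫⁻ x, g x ^ (p - 1) * h x ∂μ := by
        rw [lintegral_const_mul _ hmeas,
          lintegral_rpow_sub_one_mul_eq_lintegral_setLIntegral hg hh hp, mul_assoc,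
          mul_left_comm A (ENNReal.ofReal _), ← mul_assoc (ENNReal.ofReal _) (ENNReal.ofReal _),
          ← ENNReal.ofReal_mul (by positivity), div_mul_cancel₀ p hp₁.ne']

end LayerCake

section MaximalFunction

variable {X : Type*} [PseudoMetricSpace X] [MeasurableSpace X] {μ : Measure X} {A : ℝ≥0∞}
  {g h : X → ℝ≥0∞} {p : ℝ}

/-- `μ` is a doubling measure, with the dilation factor and the mix of closed and open balls that
the Vitali covering lemma asks for. -/
def IsDoublingWith (μ : Measure X) (A : ℝ≥0∞) : Prop :=
  ∀ c r, 0 < r → μ (closedBall c (4 * r)) ≤ A * μ (ball c r)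

theorem isDoublingWith_addHaar {E : Type*} [NormedAddCommGroup E] [NormedSpace ℝ E]
    [MeasurableSpace E] [BorelSpace E] [FiniteDimensional ℝ E] (μ : Measure E)
    [μ.IsAddHaarMeasure] : IsDoublingWith μ (4 ^ finrank ℝ E) := by
  intro c r hr
  rw [Measure.addHaar_closedBall μ c (by positivity), Measure.addHaar_ball_of_pos μ c hr, mul_pow,
    ENNReal.ofReal_mul (by positivity), ENNReal.ofReal_pow zero_le_four, ENNReal.ofReal_ofNat,
    mul_assoc]

/-- The uncentred Hardy-Littlewood maximal function of `g` with respect to `μ`. -/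
noncomputable def maximalFunction (μ : Measure X) (g : X → ℝ≥0∞) (x : X) : ℝ≥0∞ :=
  ⨆ (c : X) (r : ℝ) (_ : x ∈ ball c r), ⨍⁻ y in ball c r, g y ∂μ

theorem setLAverage_ball_le_maximalFunction {x c : X} {r : ℝ} (hx : x ∈ ball c r) :
    ⨍⁻ y in ball c r, g y ∂μ ≤ maximalFunction μ g x :=
  le_iSup₂_of_le c r (le_iSup_of_le hx le_rfl)

theorem setOf_lt_maximalFunction_eq_biUnion (t : ℝ≥0∞) :
    {x | t < maximalFunction μ g x} =
      ⋃ b ∈ {b : X × ℝ | t < ⨍⁻ y in ball b.1 b.2, g y ∂μ}, ball b.1 b.2 := by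
  ext x
  simp only [maximalFunction, lt_iSup_iff, mem_ofPred_eq, mem_iUnion, Prod.exists, exists_prop,
    and_comm]

theorem measurable_maximalFunction [OpensMeasurableSpace X] :
    Measurable (maximalFunction μ g) := by
  refine measurable_of_Ioi fun t ↦ IsOpen.measurableSet ?_
  change IsOpen {x | t < maximalFunction μ g x}
  rw [setOf_lt_maximalFunction_eq_biUnion]
  exact isOpen_biUnion fun _ _ ↦ isOpen_ball

theorem maximalFunction_le_add_of_le_add {c : ℝ≥0∞} (hgh : ∀ y, g y ≤ h y + c) (x : X) :
    maximalFunction μ g x ≤ maximalFunction μ h x + c := by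
  refine iSup_le fun z ↦ iSup₂_le fun r hx ↦ ?_
  calc ⨍⁻ y in ball z r, g y ∂μ ≤ ⨍⁻ y in ball z r, (h y + c) ∂μ := lintegral_mono hgh
    _ = (∫⁻ y in ball z r, h y ∂μ) / μ (ball z r) + c * (μ (ball z r) / μ (ball z r)) := by
      rw [setLAverage_eq, lintegral_add_right _ measurable_const, setLIntegral_const,
        ENNReal.add_div, mul_div_assoc]
    _ ≤ maximalFunction μ h x + c := by
      rw [← setLAverage_eq]
      gcongr
      · exact setLAverage_ball_le_maximalFunction hx
      · exact mul_le_of_le_one_right' ENNReal.div_self_le_one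

theorem mul_measure_biUnion_ball_le [SeparableSpace X] [OpensMeasurableSpace X]
    (hμ : IsDoublingWith μ A) {t : ℝ≥0∞} {B : Set (X × ℝ)} {R : ℝ} (hpos : ∀ b ∈ B, 0 < b.2)
    (hR : ∀ b ∈ B, b.2 ≤ R)
    (hB : ∀ b ∈ B, t * μ (ball b.1 b.2) ≤ ∫⁻ y in ball b.1 b.2, g y ∂μ) :
    t * μ (⋃ b ∈ B, ball b.1 b.2) ≤ A * ∫⁻ y, g y ∂μ := by
  obtain ⟨u, huB, hdisj, hcover⟩ :=
    Vitali.exists_disjoint_subfamily_covering_enlargement_closedBall B Prod.fst Prod.snd R hR 4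
      (by norm_num)
  have hdisj_ball : u.PairwiseDisjoint fun b ↦ ball b.1 b.2 :=
    hdisj.mono fun b ↦ ball_subset_closedBall
  have hcount : u.Countable := hdisj_ball.countable_of_isOpen (fun _ _ ↦ isOpen_ball)
    fun b hb ↦ nonempty_ball.2 (hpos b (huB hb))
  have hsub : ⋃ b ∈ B, ball b.1 b.2 ⊆ ⋃ b ∈ u, closedBall b.1 (4 * b.2) := by
    refine iUnion₂_subset fun a ha ↦ ?_
    obtain ⟨b, hb, hab⟩ := hcover a ha
    exact (ball_subset_closedBall.trans hab).trans
      (subset_biUnion_of_mem (u := fun b : X × ℝ ↦ closedBall b.1 (4 * b.2)) hb)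
  calc t * μ (⋃ b ∈ B, ball b.1 b.2)
      ≤ t * ∑' b : u, μ (closedBall b.1.1 (4 * b.1.2)) := by
        gcongr
        exact (measure_mono hsub).trans (measure_biUnion_le μ hcount _)
    _ ≤ t * ∑' b : u, A * μ (ball b.1.1 b.1.2) := by
        gcongr with b
        exact hμ _ _ (hpos b (huB b.2))
    _ = A * ∑' b : u, t * μ (ball b.1.1 b.1.2) := by
        rw [ENNReal.tsum_mul_left, ENNReal.tsum_mul_left, mul_left_comm]
    _ ≤ A * ∑' b : u, ∫⁻ y in ball b.1.1 b.1.2, g y ∂μ := by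
        gcongr with b
        exact hB b (huB b.2)
    _ = A * ∫⁻ y in ⋃ b ∈ u, ball b.1 b.2, g y ∂μ := by
        rw [lintegral_biUnion hcount (fun _ _ ↦ measurableSet_ball) hdisj_ball]
    _ ≤ A * ∫⁻ y, g y ∂μ := by
        gcongr
        exact Measure.restrict_le_self

theorem mul_measure_lt_maximalFunction_le [SeparableSpace X] [OpensMeasurableSpace X]
    (hμ : IsDoublingWith μ A) (g : X → ℝ≥0∞) (t : ℝ≥0∞) :
    t * μ {x | t < maximalFunction μ g x} ≤ A * ∫⁻ y, g y ∂μ := by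
  let B (n : ℕ) : Set (X × ℝ) := {b | 0 < b.2 ∧ b.2 ≤ n ∧ t < ⨍⁻ y in ball b.1 b.2, g y ∂μ}
  have hB : ∀ n, t * μ (⋃ b ∈ B n, ball b.1 b.2) ≤ A * ∫⁻ y, g y ∂μ := fun n ↦
    mul_measure_biUnion_ball_le hμ (fun b hb ↦ hb.1) (fun b hb ↦ hb.2.1) fun b hb ↦
      ENNReal.mul_le_of_le_div (setLAverage_eq μ g _ ▸ hb.2.2.le)
  have hmono : Monotone fun n ↦ ⋃ b ∈ B n, ball b.1 b.2 := fun m n hmn ↦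
    biUnion_subset_biUnion_left fun b hb ↦ ⟨hb.1, hb.2.1.trans (mod_cast hmn), hb.2.2⟩
  have hsub : {x | t < maximalFunction μ g x} ⊆ ⋃ n, ⋃ b ∈ B n, ball b.1 b.2 := by
    rw [setOf_lt_maximalFunction_eq_biUnion]
    refine iUnion₂_subset fun b hb x hx ↦ mem_iUnion.2 ?_
    obtain ⟨n, hn⟩ := exists_nat_ge b.2
    exact ⟨n, mem_biUnion (show b ∈ B n from ⟨pos_of_mem_ball hx, hn, hb⟩) hx⟩
  calc t * μ {x | t < maximalFunction μ g x} ≤ t * ⨆ n, μ (⋃ b ∈ B n, ball b.1 b.2) := by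
        rw [← hmono.measure_iUnion]
        gcongr
    _ ≤ A * ∫⁻ y, g y ∂μ := by
        rw [ENNReal.mul_iSup]
        exact iSup_le hB

/-- Removing from `g` the part below `t / 2` lowers the maximal function by at most `t / 2`. -/
theorem mul_measure_lt_maximalFunction_le_setLIntegral [SeparableSpace X] [OpensMeasurableSpace X]
    (hμ : IsDoublingWith μ A) (hg : Measurable g) (t : ℝ≥0∞) :
    t * μ {x | t < maximalFunction μ g x} ≤ 2 * A * ∫⁻ x in {x | t < 2 * g x}, g x ∂μ := by
  let G := {x | t < 2 * g x}.indicator g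
  have hgG : ∀ x, g x ≤ G x + t / 2 := by
    intro x
    by_cases hx : t < 2 * g x
    · exact (indicator_of_mem (s := {x | t < 2 * g x}) hx g).ge.trans le_self_add
    · rw [not_lt, mul_comm] at hx
      exact ((ENNReal.le_div_iff_mul_le (by simp) (by simp)).2 hx).trans le_add_self
  have hsub : {x | t < maximalFunction μ g x} ⊆ {x | t / 2 < maximalFunction μ G x} := by
    intro x (hx : t < _)
    refine lt_of_add_lt_add_right (a := t / 2) ?_
    rw [ENNReal.add_halves]
    exact hx.trans_le (maximalFunction_le_add_of_le_add hgG x)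
  calc t * μ {x | t < maximalFunction μ g x}
      ≤ 2 * (t / 2 * μ {x | t / 2 < maximalFunction μ G x}) := by
        rw [← mul_assoc, ENNReal.mul_div_cancel two_ne_zero ENNReal.ofNat_ne_top]
        gcongr
    _ ≤ 2 * (A * ∫⁻ x, G x ∂μ) :=
        mul_le_mul_right (mul_measure_lt_maximalFunction_le hμ G _) _
    _ = 2 * A * ∫⁻ x in {x | t < 2 * g x}, g x ∂μ := by
        rw [lintegral_indicator (measurableSet_lt measurable_const (hg.const_mul 2)), mul_assoc]

theorem lintegral_maximalFunction_rpow_le [SeparableSpace X] [OpensMeasurableSpace X]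
    (hμ : IsDoublingWith μ A) (hp : 1 < p) (hg : Measurable g) :
    ∫⁻ x, maximalFunction μ g x ^ p ∂μ ≤
      ENNReal.ofReal (p / (p - 1)) * 2 ^ p * A * ∫⁻ x, g x ^ p ∂μ := by
  have hpow : ∀ a : ℝ≥0∞, (2 * a) ^ (p - 1) * a = 2 ^ (p - 1) * a ^ p := by
    intro a
    rw [ENNReal.mul_rpow_of_nonneg _ _ (by linarith), mul_assoc]
    nth_rw 2 [← ENNReal.rpow_one a]
    rw [← ENNReal.rpow_add_of_nonneg _ _ (by linarith) zero_le_one, sub_add_cancel]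
  calc ∫⁻ x, maximalFunction μ g x ^ p ∂μ
      ≤ ENNReal.ofReal (p / (p - 1)) * (2 * A) * ∫⁻ x, (2 * g x) ^ (p - 1) * g x ∂μ :=
        lintegral_rpow_le_of_mul_meas_lt_le hp measurable_maximalFunction (hg.const_mul 2) hg
          fun l _ ↦ mul_measure_lt_maximalFunction_le_setLIntegral hμ hg _
    _ = ENNReal.ofReal (p / (p - 1)) * A * (2 * 2 ^ (p - 1)) * ∫⁻ x, g x ^ p ∂μ := by
        simp only [hpow]
        rw [lintegral_const_mul _ (hg.pow_const p)]
        ring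
    _ = ENNReal.ofReal (p / (p - 1)) * 2 ^ p * A * ∫⁻ x, g x ^ p ∂μ := by
        nth_rw 1 [← ENNReal.rpow_one 2]
        rw [← ENNReal.rpow_add _ _ two_ne_zero ENNReal.ofNat_ne_top, add_sub_cancel]
        ring

end MaximalFunction

section RadialKernel

theorem isLowerSet_eq_univ_or_Iio_or_Iic {α : Type*} [ConditionallyCompleteLinearOrderBot α]
    {s : Set α} (hs : IsLowerSet s) : s = univ ∨ (∃ a, s = Iio a) ∨ ∃ a, s = Iic a := by
  by_cases hbdd : BddAbove s
  · by_cases hmem : sSup s ∈ s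
    · exact .inr <| .inr ⟨sSup s, Subset.antisymm (fun _ ↦ le_csSup hbdd) fun _ hx ↦ hs hx hmem⟩
    · refine .inr <| .inl ⟨sSup s, Subset.antisymm (fun x hx ↦ ?_) fun x hx ↦ ?_⟩
      · exact (le_csSup hbdd hx).lt_of_ne fun h ↦ hmem (h ▸ hx)
      · obtain ⟨y, hy, hxy⟩ := (lt_csSup_iff' hbdd).1 hx
        exact hs hxy.le hy
  · refine .inl <| eq_univ_of_forall fun x ↦ ?_
    obtain ⟨y, hy, hxy⟩ := not_bddAbove_iff.1 hbdd x
    exact hs hxy.le hy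

section Metric

variable {X : Type*} [PseudoMetricSpace X] [ProperSpace X] [MeasurableSpace X]
  {μ : Measure X} [IsFiniteMeasureOnCompacts μ]

theorem setLIntegral_ball_le_maximalFunction_mul (g : X → ℝ≥0∞) (x : X) (r : ℝ) :
    ∫⁻ y in ball x r, g y ∂μ ≤ maximalFunction μ g x * μ (ball x r) := by
  rcases le_or_gt r 0 with hr | hr
  · simp [ball_eq_empty.2 hr]
  · rw [← measure_mul_setLAverage g measure_ball_lt_top.ne, mul_comm]
    exact mul_le_mul_left (setLAverage_ball_le_maximalFunction (mem_ball_self hr)) _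

theorem lintegral_le_maximalFunction_mul (g : X → ℝ≥0∞) (x : X) :
    ∫⁻ y, g y ∂μ ≤ maximalFunction μ g x * μ univ := by
  have hmono : Monotone fun n : ℕ ↦ ball x (n : ℝ) := fun m n hmn ↦
    ball_subset_ball (mod_cast hmn)
  rw [← setLIntegral_univ, ← iUnion_ball_nat x, setLIntegral_iUnion_of_directed g hmono.directed_le]
  exact iSup_le fun n ↦ (setLIntegral_ball_le_maximalFunction_mul g x n).trans
    (mul_le_mul_right (measure_mono (subset_iUnion _ n)) _)

variable [OpensMeasurableSpace X]

theorem setLIntegral_closedBall_le_maximalFunction_mul (g : X → ℝ≥0∞) (x : X) (r : ℝ) :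
    ∫⁻ y in closedBall x r, g y ∂μ ≤ maximalFunction μ g x * μ (closedBall x r) := by
  by_cases hzero : μ (closedBall x r) = 0
  · simp [setLIntegral_measure_zero _ _ hzero]
  have htendsto : Tendsto (fun r ↦ maximalFunction μ g x * μ (ball x r)) (𝓝[>] r)
      (𝓝 (maximalFunction μ g x * μ (closedBall x r))) := by
    rw [closedBall_eq_bInter_ball] at hzero ⊢
    refine ENNReal.Tendsto.const_mul (tendsto_measure_biInter_gt ?_ ?_ ?_) (.inl hzero)
    · exact fun _ _ ↦ measurableSet_ball.nullMeasurableSet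
    · exact fun _ _ _ ↦ ball_subset_ball
    · exact ⟨r + 1, by simp, measure_ball_lt_top.ne⟩
  refine ge_of_tendsto htendsto ?_
  filter_upwards [self_mem_nhdsWithin] with ρ hρ
  exact (lintegral_mono_set (closedBall_subset_ball hρ)).trans
    (setLIntegral_ball_le_maximalFunction_mul g x ρ)

theorem setLIntegral_nndist_mem_le_maximalFunction_mul (g : X → ℝ≥0∞) (x : X) {s : Set ℝ≥0}
    (hs : IsLowerSet s) :
    ∫⁻ y in {y | nndist y x ∈ s}, g y ∂μ ≤ maximalFunction μ g x * μ {y | nndist y x ∈ s} := by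
  rcases isLowerSet_eq_univ_or_Iio_or_Iic hs with rfl | ⟨r, rfl⟩ | ⟨r, rfl⟩
  · simpa using lintegral_le_maximalFunction_mul g x
  · exact setLIntegral_ball_le_maximalFunction_mul g x r
  · exact setLIntegral_closedBall_le_maximalFunction_mul g x r

/-- By the layer cake formula the radially decreasing kernel `w` is a superposition of indicators
of balls centred at `x`, each of which averages `g` to at most the maximal function. -/
theorem lintegral_mul_nndist_le_maximalFunction_mul {g : X → ℝ≥0∞} (hg : Measurable g)
    {w : ℝ≥0 → ℝ≥0∞} (hw : Antitone w) (x : X) :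
    ∫⁻ y, w (nndist y x) * g y ∂μ ≤ maximalFunction μ g x * ∫⁻ y, w (nndist y x) ∂μ := by
  have hwm : Measurable fun y ↦ w (nndist y x) := hw.measurable.comp (by fun_prop)
  calc ∫⁻ y, w (nndist y x) * g y ∂μ
      = ∫⁻ l in Ioi (0 : ℝ), ∫⁻ y in {y | ENNReal.ofReal l < w (nndist y x)}, g y ∂μ :=
        lintegral_mul_eq_lintegral_setLIntegral_lt hwm hg
    _ ≤ ∫⁻ l in Ioi (0 : ℝ),
          maximalFunction μ g x * μ {y | ENNReal.ofReal l < w (nndist y x)} := by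
        gcongr with l
        exact setLIntegral_nndist_mem_le_maximalFunction_mul g x
          (s := {r | ENNReal.ofReal l < w r}) fun a b hba ha ↦ ha.trans_le (hw hba)
    _ = maximalFunction μ g x * ∫⁻ y, w (nndist y x) ∂μ := by
        have hlevel : Measurable fun l : ℝ ↦ μ {y | ENNReal.ofReal l < w (nndist y x)} :=
          Antitone.measurable fun a b hab ↦
            measure_mono fun y hy ↦ (ENNReal.ofReal_le_ofReal hab).trans_lt hy
        rw [lintegral_const_mul _ hlevel]
        congr 1
        simpa using (lintegral_mul_eq_lintegral_setLIntegral_lt (μ := μ) hwm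
          (measurable_const (a := (1 : ℝ≥0∞)))).symm

end Metric

section AddHaar

variable {E : Type*} [NormedAddCommGroup E] [NormedSpace ℝ E] [MeasurableSpace E] [BorelSpace E]
  [FiniteDimensional ℝ E] {μ : Measure E} [μ.IsAddHaarMeasure]

theorem lintegral_ofReal_pow_mul_comp_smul {h : E → ℝ≥0∞} (hh : Measurable h) {t : ℝ} (ht : 0 < t) :
    ∫⁻ y, ENNReal.ofReal (t ^ finrank ℝ E) * h (t • y) ∂μ = ∫⁻ y, h y ∂μ := by
  have hht : Measurable fun y ↦ h (t • y) := hh.comp (measurable_const_smul t)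
  rw [lintegral_const_mul _ hht, ← lintegral_map hh (measurable_const_smul t),
    Measure.map_addHaar_smul μ ht.ne', lintegral_smul_measure, smul_eq_mul, ← mul_assoc,
    ← ENNReal.ofReal_mul (by positivity), abs_of_pos (by positivity),
    mul_inv_cancel₀ (by positivity), ENNReal.ofReal_one, one_mul]

theorem lintegral_sub_mul_dilation_le_maximalFunction_mul {g : E → ℝ≥0∞} (hg : Measurable g)
    {w : ℝ≥0 → ℝ≥0∞} (hw : Antitone w) {t : ℝ} (ht : 0 < t) (x : E) :
    ∫⁻ y, ENNReal.ofReal (t ^ finrank ℝ E) * w ‖t • y‖₊ * g (x - y) ∂μ ≤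
      maximalFunction μ g x * ∫⁻ y, w ‖y‖₊ ∂μ := by
  have : ProperSpace E := FiniteDimensional.proper_real E
  let W (r : ℝ≥0) : ℝ≥0∞ := ENNReal.ofReal (t ^ finrank ℝ E) * w (‖t‖₊ * r)
  have hW : Antitone W := fun a b hab ↦ mul_le_mul_right (hw (mul_le_mul_right hab _)) _
  have hWnorm : ∀ y : E, W (nndist (x - y) x) = ENNReal.ofReal (t ^ finrank ℝ E) * w ‖t • y‖₊ := by
    intro y
    rw [nndist_eq_nnnorm, sub_sub_cancel_left, nnnorm_neg, nnnorm_smul]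
  have hmass : ∫⁻ y, W (nndist y x) ∂μ = ∫⁻ y, w ‖y‖₊ ∂μ := by
    rw [← lintegral_sub_left_eq_self _ x]
    simp only [hWnorm]
    exact lintegral_ofReal_pow_mul_comp_smul (hw.measurable.comp measurable_nnnorm) ht
  calc ∫⁻ y, ENNReal.ofReal (t ^ finrank ℝ E) * w ‖t • y‖₊ * g (x - y) ∂μ
      = ∫⁻ y, W (nndist y x) * g y ∂μ := by
        simp only [← hWnorm]
        exact lintegral_sub_left_eq_self (fun y ↦ W (nndist y x) * g y) x
    _ ≤ maximalFunction μ g x * ∫⁻ y, w ‖y‖₊ ∂μ :=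
        hmass ▸ lintegral_mul_nndist_le_maximalFunction_mul hg hW x

variable (μ) in
theorem exists_antitone_majorant_schwartzMap {F : Type*} [NormedAddCommGroup F] [NormedSpace ℝ F]
    (φ : SchwartzMap E F) :
    ∃ w : ℝ≥0 → ℝ≥0∞, Antitone w ∧ ∫⁻ y, w ‖y‖₊ ∂μ ≠ ∞ ∧ ∀ y, ‖φ y‖ₑ ≤ w ‖y‖₊ := by
  let k := finrank ℝ E + 1
  let D : ℝ := 2 ^ k * (Finset.Iic (k, 0)).sup (fun m ↦ SchwartzMap.seminorm ℝ m.1 m.2) φ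
  have hD : 0 ≤ D := by positivity
  refine ⟨fun r ↦ ENNReal.ofReal (D * (1 + r : ℝ) ^ (-(k : ℝ))), fun a b hab ↦ ?_, ?_, fun y ↦ ?_⟩
  · refine ENNReal.ofReal_le_ofReal (mul_le_mul_of_nonneg_left ?_ hD)
    exact Real.rpow_le_rpow_of_nonpos (by positivity) (by simpa using hab) (by simp)
  · exact ((integrable_one_add_norm (by simp [k])).const_mul D).lintegral_lt_top.ne
  · rw [← ofReal_norm]
    refine ENNReal.ofReal_le_ofReal ?_
    rw [Real.rpow_neg (by positivity), Real.rpow_natCast, ← div_eq_mul_inv,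
      le_div_iff₀' (by positivity)]
    simpa using SchwartzMap.one_add_le_sup_seminorm_apply (𝕜 := ℝ) (m := (k, 0)) le_rfl le_rfl φ y

end AddHaar

end RadialKernel

section Stepanov

variable {p : ℝ} {g h : ℝ → ℝ≥0∞}

/-- The Stepanov norm of a nonnegative function: `stepanov p f` is `stepanovENorm p |f|`. It is
used for maximal functions, which may be infinite. -/
noncomputable def stepanovENorm (p : ℝ) (g : ℝ → ℝ≥0∞) : ℝ≥0∞ :=
  (⨆ x : ℝ, ∫⁻ s in Ioc x (x + 1), g s ^ p) ^ (1 / p)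

theorem stepanovENorm_mono (hp : 0 < p) (hgh : g ≤ h) :
    stepanovENorm p g ≤ stepanovENorm p h := by
  unfold stepanovENorm
  gcongr with x s
  exact hgh s

theorem stepanovENorm_const_mul (hp : 0 < p) (c : ℝ≥0∞) (hg : Measurable g) :
    stepanovENorm p (fun s ↦ c * g s) = c * stepanovENorm p g := by
  simp only [stepanovENorm, ENNReal.mul_rpow_of_nonneg _ _ hp.le,
    lintegral_const_mul _ (hg.pow_const p), ← ENNReal.mul_iSup]
  rw [ENNReal.mul_rpow_of_nonneg _ _ (by positivity), one_div, ENNReal.rpow_rpow_inv hp.ne']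

theorem stepanovENorm_le_iff (hp : 0 < p) {c : ℝ≥0∞} :
    stepanovENorm p g ≤ c ↔ ∀ x : ℝ, ∫⁻ s in Ioc x (x + 1), g s ^ p ≤ c ^ p := by
  rw [stepanovENorm, one_div, ENNReal.rpow_inv_le_iff hp, iSup_le_iff]

theorem setLIntegral_Ioc_rpow_le_stepanovENorm_rpow (hp : 0 < p) (g : ℝ → ℝ≥0∞) (x : ℝ) :
    ∫⁻ s in Ioc x (x + 1), g s ^ p ≤ stepanovENorm p g ^ p :=
  (stepanovENorm_le_iff hp).1 le_rfl x

theorem setLIntegral_Ioc_le_stepanovENorm (hp : 1 < p) (hg : Measurable g) (x : ℝ) :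
    ∫⁻ s in Ioc x (x + 1), g s ≤ stepanovENorm p g := by
  have hp₀ : 0 < p := one_pos.trans hp
  have hHolder := ENNReal.lintegral_mul_le_Lp_mul_Lq (volume.restrict (Ioc x (x + 1)))
    (Real.HolderConjugate.conjExponent hp) hg.aemeasurable (aemeasurable_const (b := (1 : ℝ≥0∞)))
  calc ∫⁻ s in Ioc x (x + 1), g s ≤ (∫⁻ s in Ioc x (x + 1), g s ^ p) ^ p⁻¹ := by
        simpa using hHolder
    _ ≤ stepanovENorm p g := (ENNReal.rpow_inv_le_iff hp₀).2
        (setLIntegral_Ioc_rpow_le_stepanovENorm_rpow hp₀ g x)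

theorem ae_lt_top_of_stepanovENorm_lt_top (hp : 0 < p) (hg : Measurable g)
    (hfin : stepanovENorm p g < ∞) : ∀ᵐ s, g s < ∞ := by
  have hlocal : ∀ n : ℤ, ∀ᵐ s ∂volume.restrict (Ioc (n : ℝ) (n + 1)), g s < ∞ := by
    intro n
    have hint := (setLIntegral_Ioc_rpow_le_stepanovENorm_rpow hp g n).trans_lt
      (ENNReal.rpow_lt_top_of_nonneg hp.le hfin.ne)
    filter_upwards [ae_lt_top (hg.pow_const p) hint.ne] with s hs
    exact (ENNReal.rpow_lt_top_iff_of_pos hp).1 hs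
  rwa [← ae_restrict_iUnion_iff, iUnion_Ioc_intCast, Measure.restrict_univ] at hlocal

theorem setLIntegral_Ioc_add_nat_le {T : ℝ≥0∞} (hT : ∀ x : ℝ, ∫⁻ s in Ioc x (x + 1), g s ≤ T)
    (a : ℝ) (n : ℕ) : ∫⁻ s in Ioc a (a + n), g s ≤ n * T := by
  induction n with
  | zero => simp
  | succ n ih =>
    have hsplit : Ioc a (a + (n + 1 : ℕ)) = Ioc a (a + n) ∪ Ioc (a + n) (a + n + 1) := by
      rw [Ioc_union_Ioc_eq_Ioc (by simp) (by simp), Nat.cast_succ, add_assoc]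
    calc ∫⁻ s in Ioc a (a + (n + 1 : ℕ)), g s
        ≤ (∫⁻ s in Ioc a (a + n), g s) + ∫⁻ s in Ioc (a + n) (a + n + 1), g s :=
          hsplit ▸ lintegral_union_le _ _ _
      _ ≤ n * T + T := add_le_add ih (hT _)
      _ = (n + 1 : ℕ) * T := by rw [Nat.cast_succ, add_one_mul]

theorem setLAverage_ball_le_two_mul {T : ℝ≥0∞} (hT : ∀ x : ℝ, ∫⁻ s in Ioc x (x + 1), g s ≤ T)
    {r : ℝ} (hr : 1 / 2 ≤ r) (c : ℝ) : ⨍⁻ s in ball c r, g s ∂volume ≤ 2 * T := by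
  have hceil : (⌈2 * r⌉₊ : ℝ) ≤ 2 * (2 * r) := by
    linarith [Nat.ceil_lt_add_one (a := 2 * r) (by linarith)]
  have hsub : ball c r ⊆ Ioc (c - r) (c - r + ⌈2 * r⌉₊) := by
    rw [Real.ball_eq_Ioo]
    exact Ioo_subset_Ioc_self.trans (Ioc_subset_Ioc_right (by linarith [Nat.le_ceil (2 * r)]))
  rw [setLAverage_eq]
  refine ENNReal.div_le_of_le_mul' ?_
  calc ∫⁻ s in ball c r, g s ≤ ⌈2 * r⌉₊ * T :=
        (lintegral_mono_set hsub).trans (setLIntegral_Ioc_add_nat_le hT _ _)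
    _ ≤ 2 * ENNReal.ofReal (2 * r) * T := by
        gcongr
        rw [← ENNReal.ofReal_natCast, ← ENNReal.ofReal_ofNat 2, ← ENNReal.ofReal_mul zero_le_two]
        exact ENNReal.ofReal_le_ofReal hceil
    _ = volume (ball c r) * (2 * T) := by
        rw [Real.volume_ball]
        ring

theorem maximalFunction_le_maximalFunction_indicator_add {T : ℝ≥0∞}
    (hT : ∀ x : ℝ, ∫⁻ s in Ioc x (x + 1), g s ≤ T) {x s : ℝ} (hs : s ∈ Ioc x (x + 1)) :
    maximalFunction volume g s ≤
      maximalFunction volume ((Ioc (x - 1) (x + 2)).indicator g) s + 2 * T := by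
  refine iSup_le fun c ↦ iSup₂_le fun r hsr ↦ ?_
  rcases lt_or_ge r (1 / 2) with hr | hr
  · have hsub : ball c r ⊆ Ioc (x - 1) (x + 2) := by
      rw [Real.ball_eq_Ioo] at hsr ⊢
      exact fun y hy ↦ ⟨by linarith [hs.1, hsr.2, hy.1], by linarith [hs.2, hsr.1, hy.2]⟩
    calc ⨍⁻ y in ball c r, g y ∂volume
        = ⨍⁻ y in ball c r, (Ioc (x - 1) (x + 2)).indicator g y ∂volume :=
          setLAverage_congr_fun measurableSet_ball
            fun y hy ↦ (indicator_of_mem (hsub hy) g).symm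
      _ ≤ _ := (setLAverage_ball_le_maximalFunction hsr).trans le_self_add
  · exact (setLAverage_ball_le_two_mul hT hr c).trans le_add_self

theorem lintegral_maximalFunction_indicator_rpow_le (hp : 1 < p) (hg : Measurable g) (x : ℝ) :
    ∫⁻ s, maximalFunction volume ((Ioc (x - 1) (x + 2)).indicator g) s ^ p ≤
      ENNReal.ofReal (p / (p - 1)) * 2 ^ p * 4 * (3 * stepanovENorm p g ^ p) := by
  have hp₀ : 0 < p := one_pos.trans hp
  have hdoubling : IsDoublingWith (volume : Measure ℝ) 4 := by
    simpa only [finrank_self, pow_one] using isDoublingWith_addHaar (volume : Measure ℝ)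
  have hpow : (fun s ↦ (Ioc (x - 1) (x + 2)).indicator g s ^ p) =
      (Ioc (x - 1) (x + 2)).indicator fun s ↦ g s ^ p :=
    indicator_comp_of_zero (g := (· ^ p)) (ENNReal.zero_rpow_of_pos hp₀) |>.symm
  refine (lintegral_maximalFunction_rpow_le hdoubling hp (hg.indicator measurableSet_Ioc)).trans
    (mul_le_mul_right ?_ _)
  have htile := setLIntegral_Ioc_add_nat_le
    (setLIntegral_Ioc_rpow_le_stepanovENorm_rpow hp₀ g) (x - 1) 3
  rwa [hpow, lintegral_indicator measurableSet_Ioc, show x + 2 = x - 1 + (3 : ℕ) by push_cast; ring]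

/-- The constant `12` is the doubling constant `4` of the line times the three unit intervals that
tile `(x - 1, x + 2]`. -/
theorem stepanovENorm_maximalFunction_le (hp : 1 < p) (hg : Measurable g) :
    stepanovENorm p (maximalFunction volume g) ≤
      (2 ^ (p - 1) * (ENNReal.ofReal (p / (p - 1)) * 2 ^ p * 12 + 2 ^ p)) ^ (1 / p) *
        stepanovENorm p g := by
  have hp₀ : 0 < p := one_pos.trans hp
  set N := stepanovENorm p g
  refine (stepanovENorm_le_iff hp₀).2 fun x ↦ ?_
  let near := maximalFunction volume ((Ioc (x - 1) (x + 2)).indicator g)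
  calc ∫⁻ s in Ioc x (x + 1), maximalFunction volume g s ^ p
      ≤ ∫⁻ s in Ioc x (x + 1), 2 ^ (p - 1) * (near s ^ p + (2 * N) ^ p) := by
        refine setLIntegral_mono' measurableSet_Ioc fun s hs ↦ ?_
        refine le_trans ?_ (ENNReal.rpow_add_le_mul_rpow_add_rpow _ _ hp.le)
        gcongr
        exact maximalFunction_le_maximalFunction_indicator_add
          (setLIntegral_Ioc_le_stepanovENorm hp hg) hs
    _ = 2 ^ (p - 1) * ((∫⁻ s in Ioc x (x + 1), near s ^ p) + (2 * N) ^ p) := by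
        rw [lintegral_const_mul _ ((measurable_maximalFunction.pow_const p).add_const _),
          lintegral_add_right _ measurable_const, setLIntegral_const]
        simp [near]
    _ ≤ 2 ^ (p - 1) *
          (ENNReal.ofReal (p / (p - 1)) * 2 ^ p * 4 * (3 * N ^ p) + (2 * N) ^ p) := by
        gcongr
        exact (setLIntegral_le_lintegral _ _).trans
          (lintegral_maximalFunction_indicator_rpow_le hp hg x)
    _ = ((2 ^ (p - 1) * (ENNReal.ofReal (p / (p - 1)) * 2 ^ p * 12 + 2 ^ p)) ^ (1 / p) *
          N) ^ p := by
        rw [ENNReal.mul_rpow_of_nonneg _ _ hp₀.le, ENNReal.mul_rpow_of_nonneg _ _ hp₀.le, one_div,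
          ENNReal.rpow_inv_rpow hp₀.ne']
        ring

end Stepanov

theorem lintegral_enorm_mul_dilation_le {φ f : ℝ → ℂ} {w : ℝ≥0 → ℝ≥0∞} (hw : Antitone w)
    (hφw : ∀ y, ‖φ y‖ₑ ≤ w ‖y‖₊) (hf : Measurable f) {t : ℝ} (ht : 0 < t) (s : ℝ) :
    ∫⁻ y, ‖f (s - y) * (t : ℂ) * φ (t * y)‖ₑ ≤
      (∫⁻ y : ℝ, w ‖y‖₊) * maximalFunction volume (fun s ↦ ‖f s‖ₑ) s := by
  have hdilation := lintegral_sub_mul_dilation_le_maximalFunction_mul (μ := volume) hf.enorm hw ht s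
  simp only [finrank_self, pow_one, smul_eq_mul] at hdilation
  rw [mul_comm]
  refine le_trans (lintegral_mono fun y ↦ ?_) hdilation
  calc ‖f (s - y) * (t : ℂ) * φ (t * y)‖ₑ
      = ENNReal.ofReal t * ‖φ (t * y)‖ₑ * ‖f (s - y)‖ₑ := by
        rw [enorm_mul, enorm_mul, ← ofReal_norm (t : ℂ), Complex.norm_of_nonneg ht.le]
        ring
    _ ≤ ENNReal.ofReal t * w ‖t * y‖₊ * ‖f (s - y)‖ₑ := by
        gcongr
        exact hφw _

theorem stmt_12_general (p : ℝ) (hp : 1 < p) {φ : ℝ → ℂ} (hφ : Measurable φ) {w : ℝ≥0 → ℝ≥0∞}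
    (hw : Antitone w) (hw_int : ∫⁻ y : ℝ, w ‖y‖₊ ≠ ∞) (hφw : ∀ y, ‖φ y‖ₑ ≤ w ‖y‖₊) {ι : Type*}
    {τ : ι → ℝ} (hτ : ∀ i, 0 < τ i) :
    ∃ C : ℝ, 0 < C ∧ ∀ f : ℝ → ℂ, Measurable f → stepanov p f < ⊤ →
      (∀ᵐ s, ∀ i, Integrable fun y : ℝ ↦ f (s - y) * (τ i : ℂ) * φ (τ i * y)) ∧
      (⨆ x : ℝ, ∫⁻ s in Ioc x (x + 1),
          (⨆ i, (‖∫ y : ℝ, f (s - y) * (τ i : ℂ) * φ (τ i * y)‖₊ : ℝ≥0∞)) ^ p) ^ (1 / p) ≤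
        ENNReal.ofReal C * stepanov p f := by
  have hp₀ : 0 < p := one_pos.trans hp
  let W := ∫⁻ y : ℝ, w ‖y‖₊
  let K := (2 ^ (p - 1) * (ENNReal.ofReal (p / (p - 1)) * 2 ^ p * 12 + 2 ^ p)) ^ (1 / p)
  have hK : K ≠ ∞ := by finiteness
  refine ⟨(W * K).toReal + 1, by positivity, fun f hf hfin ↦ ?_⟩
  let M := maximalFunction volume fun s ↦ ‖f s‖ₑ
  have hM : stepanovENorm p M ≤ K * stepanov p f := stepanovENorm_maximalFunction_le hp hf.enorm
  have hbound := fun s i ↦ lintegral_enorm_mul_dilation_le hw hφw hf (hτ i) s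
  constructor
  · filter_upwards [ae_lt_top_of_stepanovENorm_lt_top hp₀ measurable_maximalFunction
      (hM.trans_lt (ENNReal.mul_lt_top hK.lt_top hfin))] with s hs i
    exact ⟨by fun_prop, (hbound s i).trans_lt (ENNReal.mul_lt_top hw_int.lt_top hs)⟩
  · calc _ ≤ stepanovENorm p fun s ↦ W * M s :=
          stepanovENorm_mono hp₀ fun s ↦ iSup_le fun i ↦
            (enorm_integral_le_lintegral_enorm _).trans (hbound s i)
      _ = W * stepanovENorm p M := stepanovENorm_const_mul hp₀ W measurable_maximalFunction
      _ ≤ W * K * stepanov p f := by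
          rw [mul_assoc]
          exact mul_le_mul_right hM W
      _ ≤ _ := by
          gcongr
          exact (ENNReal.le_ofReal_iff_toReal_le (by finiteness) (by positivity)).2 (by linarith)

/-- Boundedness of the smoothed maximal operator on Stepanov spaces: if `φ` is Schwartz and
`φ_k = 2^k φ(2^k ·)`, then for `p ∈ (1, ∞)` there is `C = C(p, φ) > 0` such that
`‖sup_{k≥1} |f ∗ φ_k|‖_{S^p} ≤ C ‖f‖_{S^p}` for all measurable `f` with finite Stepanov
norm. -/
theorem stmt_12 (p : ℝ) (hp : 1 < p) (φ : SchwartzMap ℝ ℂ) :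
    ∃ C : ℝ, 0 < C ∧ ∀ f : ℝ → ℂ, Measurable f → stepanov p f < ⊤ →
      (⨆ x : ℝ, ∫⁻ s in Set.Ioc x (x + 1),
          (⨆ k : ℕ,
            (‖∫ y : ℝ, f (s - y) * (((2 : ℝ) ^ (k + 1) : ℝ) : ℂ)
                * φ ((2 : ℝ) ^ (k + 1) * y)‖₊ : ENNReal)) ^ p) ^ (1 / p)
        ≤ ENNReal.ofReal C * stepanov p f := by
  obtain ⟨w, hw, hw_int, hφw⟩ := exists_antitone_majorant_schwartzMap volume φ
  obtain ⟨C, hC, hbound⟩ := stmt_12_general p hp φ.continuous.measurable hw hw_int hφw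
    (τ := fun k : ℕ ↦ (2 : ℝ) ^ (k + 1)) fun k ↦ by positivity
  exact ⟨C, hC, fun f hf hfin ↦ (hbound f hf hfin).2⟩
end
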